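/- arXiv:1607.04370 — 2 statements merged into one kernel-verified Lean document; each statement's English description precedes it below -/
import Mathlib

section
/- Assume the Strong Reflection Principle (SRP). Then 2^{ℵ₀} = 2^{ℵ₁} = ℵ₂. -/
universe u

/-- The first uncountable ordinal, `ω₁`. -/
noncomputable def omega1 : Ordinal.{u} := (Cardinal.aleph 1).ord

/-- `C` is club (closed unbounded) in `[A]^{<ω₁}`, the collection of countable subsets of `A`:
every member of `C` is a countable subset of `A`, every countable subset of `A` is included in a
member of `C` (cofinality), and `C` is closed under unions of countable increasing chains. -/
def ClubOn {X : Type u} (A : Set X) (C : Set (Set X)) : Prop :=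
  (∀ c ∈ C, c ⊆ A ∧ c.Countable) ∧
  (∀ s : Set X, s ⊆ A → s.Countable → ∃ c ∈ C, s ⊆ c) ∧
  (∀ f : ℕ → Set X, (∀ n, f n ∈ C) → Monotone f → (⋃ n, f n) ∈ C)

/-- `S` is stationary in `[A]^{<ω₁}`: it meets every club. -/
def StationaryOn {X : Type u} (A : Set X) (S : Set (Set X)) : Prop :=
  ∀ C, ClubOn A C → (S ∩ C).Nonempty

/-- `C` is a club (closed unbounded set) of ordinals below `κ`:
`C ⊆ κ`, `C` is unbounded in `κ`, and `C` contains each of its limit points below `κ`. -/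
def OrdClub (κ : Ordinal.{u}) (C : Set Ordinal.{u}) : Prop :=
  C ⊆ Set.Iio κ ∧ (∀ o < κ, ∃ c ∈ C, o ≤ c) ∧
  (∀ o < κ, o ≠ 0 → (∀ b < o, ∃ c ∈ C, b < c ∧ c < o) → o ∈ C)

/-- `S` is a stationary set of ordinals below `κ`: it meets every club below `κ`. -/
def OrdStationary (κ : Ordinal.{u}) (S : Set Ordinal.{u}) : Prop :=
  S ⊆ Set.Iio κ ∧ ∀ C, OrdClub κ C → (S ∩ C).Nonempty

/-- The Strong Reflection Principle (SRP): suppose `λ ≥ ℵ₂` and `Z ⊆ P_{ω₁}(λ)` is such that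
for each stationary `T ⊆ ω₁` the set `{σ ∈ Z : σ ∩ ω₁ ∈ T}` is stationary in `P_{ω₁}(λ)`;
then for every `X ⊆ λ` of cardinality `ℵ₁` there is `Y ⊆ λ` with `X ⊆ Y`, `|Y| = ℵ₁`,
and `Z ∩ P_{ω₁}(Y)` containing a club of `P_{ω₁}(Y)`.  (Here `λ` is identified with the set of
ordinals below `λ.ord`, and `σ ∩ ω₁ ∈ T` means that `σ ∩ ω₁` is an ordinal `δ ∈ T`, i.e.
`σ ∩ ω₁ = Iio δ`.) -/
def SRP : Prop :=
  ∀ lam : Cardinal.{u}, Cardinal.aleph 2 ≤ lam →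
    ∀ Z : Set (Set Ordinal.{u}),
      (∀ σ ∈ Z, σ ⊆ Set.Iio lam.ord ∧ σ.Countable) →
      (∀ T : Set Ordinal.{u}, OrdStationary omega1 T →
        StationaryOn (Set.Iio lam.ord)
          {σ ∈ Z | ∃ δ ∈ T, σ ∩ Set.Iio omega1 = Set.Iio δ}) →
      ∀ X : Set Ordinal.{u}, X ⊆ Set.Iio lam.ord → Cardinal.mk X = Cardinal.aleph 1 →
        ∃ Y : Set Ordinal.{u}, X ⊆ Y ∧ Y ⊆ Set.Iio lam.ord ∧
          Cardinal.mk Y = Cardinal.aleph 1 ∧ ∃ D ⊆ Z, ClubOn Y D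

namespace SRPaux

open Set Cardinal

/-- A copy of `ω₁` as a type. -/
abbrev O1 : Type u := (Cardinal.aleph 1).ord.ToType

/-- A copy of `ω₂` as a type. -/
abbrev O2 : Type u := (Cardinal.aleph 2).ord.ToType

theorem mk_O1 : #(O1.{u}) = aleph 1 := Cardinal.mk_ord_toType _
theorem mk_O2 : #(O2.{u}) = aleph 2 := Cardinal.mk_ord_toType _

theorem countable_of_lt_aleph1 {A : Type u} (h : #A < aleph 1) : Countable A := by
  rw [← Cardinal.mk_le_aleph0_iff]
  rw [← Order.lt_succ_iff, ← aleph_zero, ← aleph_succ]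
  simpa using h

theorem lt_aleph1_of_countable {A : Type u} (h : Countable A) : #A < aleph 1 := by
  have h1 := Cardinal.mk_le_aleph0_iff.2 h
  refine h1.trans_lt ?_
  rw [← aleph_zero]
  exact aleph_lt_aleph.2 (by simp)

instance : Nonempty O1.{u} := by
  rw [← Cardinal.mk_ne_zero_iff, mk_O1]
  exact (aleph_pos 1).ne'

instance : Nonempty O2.{u} := by
  rw [← Cardinal.mk_ne_zero_iff, mk_O2]
  exact (aleph_pos 2).ne'

theorem Iio_countable (x : O1.{u}) : (Iio x).Countable := by
  have := countable_of_lt_aleph1 (mk_Iio_toType_ord_lt x)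
  exact this

theorem Iic_countable (x : O1.{u}) : (Iic x).Countable := by
  rw [← Set.Iio_insert]
  exact (Iio_countable x).insert x

theorem O1_uncountable : ¬ (univ : Set O1.{u}).Countable := by
  intro h
  have : Countable O1.{u} := countable_univ_iff.1 h
  have := lt_aleph1_of_countable this
  rw [mk_O1] at this
  exact lt_irrefl _ this

/-- countable sets are strictly bounded -/
theorem exists_bound {s : Set O1.{u}} (hs : s.Countable) : ∃ b, ∀ x ∈ s, x < b := by
  by_contra h
  push Not at h
  apply O1_uncountable
  have : (univ : Set O1.{u}) ⊆ ⋃ x ∈ s, Iic x := by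
    intro b _
    obtain ⟨x, hx, hb⟩ := h b
    simp only [mem_iUnion]
    exact ⟨x, hx, hb⟩
  exact (hs.biUnion fun x _ => Iic_countable x).mono this

/-- `ξ` is a nonzero closure point of `g`. -/
def Cl (g : O1.{u} → O1.{u}) (ξ : O1.{u}) : Prop := (∃ x, x < ξ) ∧ ∀ x < ξ, g x < ξ

/-- stationary subsets of `ω₁`. -/
def Stat (S : Set O1.{u}) : Prop := ∀ g : O1.{u} → O1.{u}, ∃ ξ ∈ S, Cl g ξ

theorem list_lift {A B : Type*} (f : A → B) (s : Set A) (l : List B) (h : ∀ b ∈ l, b ∈ f '' s) :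
    ∃ l' : List A, (∀ a ∈ l', a ∈ s) ∧ l'.map f = l := by
  induction l with
  | nil => exact ⟨[], by simp, rfl⟩
  | cons b l ih =>
    obtain ⟨a, ha, rfl⟩ := h b (by simp)
    obtain ⟨l', hl', rfl⟩ := ih (fun b hb => h b (by simp [hb]))
    exact ⟨a :: l', by simpa [ha] using hl', rfl⟩

theorem countable_lists {A : Type*} {s : Set A} (hs : s.Countable) :
    {l : List A | ∀ x ∈ l, x ∈ s}.Countable := by
  have : Countable s := hs
  refine (countable_range (fun l : List s => l.map Subtype.val)).mono fun l hl => ?_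
  obtain ⟨l', _, h⟩ := list_lift (Subtype.val : s → A) univ l
    (fun b hb => ⟨⟨b, hl b hb⟩, trivial, rfl⟩)
  exact ⟨l', h⟩

/-- closure points of functions on lists -/
theorem list_cl {I : Type*} [Countable I] (G : List O1.{u} → I → O1.{u}) :
    ∃ g : O1.{u} → O1.{u}, ∀ ξ, Cl g ξ → ∀ l, (∀ x ∈ l, x < ξ) → ∀ i, G l i < ξ := by
  have : ∀ x : O1.{u}, ∃ b, ∀ l, (∀ y ∈ l, y ≤ x) → ∀ i, G l i < b := by
    intro x
    have hc : {l : List O1.{u} | ∀ y ∈ l, y ∈ Iic x}.Countable := countable_lists (Iic_countable x)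
    have hc2 : (⋃ l ∈ {l : List O1.{u} | ∀ y ∈ l, y ∈ Iic x}, range (G l)).Countable :=
      hc.biUnion fun l _ => countable_range _
    obtain ⟨b, hb⟩ := exists_bound hc2
    refine ⟨b, fun l hl i => hb _ ?_⟩
    simp only [mem_iUnion]
    exact ⟨l, hl, i, rfl⟩
  choose g hg using this
  refine ⟨g, fun ξ hξ l hl i => ?_⟩
  have : ∃ x < ξ, ∀ y ∈ l, y ≤ x := by
    clear i
    induction l with
    | nil => obtain ⟨x, hx⟩ := hξ.1; exact ⟨x, hx, by simp⟩
    | cons a l ih =>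
      obtain ⟨x, hx, h⟩ := ih (fun x hx => hl x (by simp [hx]))
      refine ⟨max a x, max_lt (hl a (by simp)) hx, ?_⟩
      intro y hy
      rcases List.mem_cons.1 hy with rfl | hy
      · exact le_max_left _ _
      · exact (h y hy).trans (le_max_right _ _)
  obtain ⟨x, hx, h⟩ := this
  exact (hg x l h i).trans (hξ.2 x hx)

theorem countable_cl {I : Type*} [Countable I] (G : I → O1.{u} → O1.{u}) :
    ∃ g : O1.{u} → O1.{u}, ∀ ξ, Cl g ξ → ∀ i, Cl (G i) ξ := by
  obtain ⟨g, hg⟩ := list_cl (fun l i => G i (l.headD (Classical.arbitrary _)))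
  refine ⟨g, fun ξ hξ i => ⟨hξ.1, fun x hx => ?_⟩⟩
  simpa using hg ξ hξ [x] (by simpa using hx) i

theorem and_cl (g₁ g₂ : O1.{u} → O1.{u}) :
    ∃ g : O1.{u} → O1.{u}, ∀ ξ, Cl g ξ → Cl g₁ ξ ∧ Cl g₂ ξ := by
  obtain ⟨g, hg⟩ := countable_cl (fun b : Bool => if b then g₁ else g₂)
  exact ⟨g, fun ξ hξ => ⟨by simpa using hg ξ hξ true, by simpa using hg ξ hξ false⟩⟩

theorem cl_const (a ξ : O1.{u}) (h : Cl (fun _ => a) ξ) : a < ξ := by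
  obtain ⟨⟨x, hx⟩, h⟩ := h
  exact h x hx

/-- lub of a bounded set -/
theorem exists_lub {s : Set O1.{u}} (hs : BddAbove s) : ∃ m, IsLUB s m := by
  obtain ⟨m, hm, hmin⟩ := WellFounded.has_min (wellFounded_lt (α := O1.{u})) (upperBounds s) hs
  exact ⟨m, hm, fun b hb => not_lt.1 (hmin b hb)⟩

theorem cl_unbounded (g : O1.{u} → O1.{u}) : ∃ ξ, Cl g ξ := by
  have : ∀ x : O1.{u}, ∃ b, x < b ∧ ∀ y ≤ x, g y < b := by
    intro x
    obtain ⟨b, hb⟩ := exists_bound (((Iic_countable x).image g).insert x)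
    exact ⟨b, hb x (by simp), fun y hy => hb _ (by right; exact ⟨y, hy, rfl⟩)⟩
  choose f hf1 hf2 using this
  let a : ℕ → O1.{u} := fun n => f^[n] (Classical.arbitrary _)
  have ha : ∀ n, a (n+1) = f (a n) := fun n => Function.iterate_succ_apply' _ _ _
  obtain ⟨b, hb⟩ := exists_bound (countable_range a)
  obtain ⟨m, hm⟩ := exists_lub (s := range a) ⟨b, fun x hx => (hb x hx).le⟩
  have hlt : ∀ n, a n < m := fun n =>
    (hf1 (a n)).trans_le (by rw [← ha]; exact hm.1 ⟨n+1, rfl⟩)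
  refine ⟨m, ⟨a 0, hlt 0⟩, fun x hx => ?_⟩
  have : ∃ n, x < a n := by
    by_contra h
    push Not at h
    have := hm.2 (show x ∈ upperBounds (range a) by rintro _ ⟨n, rfl⟩; exact h n)
    exact absurd hx (not_lt.2 this)
  obtain ⟨n, hn⟩ := this
  have := hf2 (a n) x hn.le
  rw [← ha] at this
  exact this.trans (hlt _)

theorem cl_unbounded' (g : O1.{u} → O1.{u}) (a : O1.{u}) : ∃ ξ, a < ξ ∧ Cl g ξ := by
  obtain ⟨g', hg'⟩ := and_cl g (fun _ => a)
  obtain ⟨ξ, hξ⟩ := cl_unbounded g'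
  exact ⟨ξ, cl_const _ _ (hg' ξ hξ).2, (hg' ξ hξ).1⟩

/-- a limit of closure points is a closure point -/
theorem cl_lub (g : O1.{u} → O1.{u}) {s : Set O1.{u}} (hne : s.Nonempty) {m : O1.{u}}
    (hm : IsLUB s m) (h : ∀ x < m, ∃ y ∈ s, x < y ∧ Cl g y) (h0 : ∃ x, x < m) : Cl g m := by
  refine ⟨h0, fun x hx => ?_⟩
  obtain ⟨y, hy, hxy, hc⟩ := h x hx
  exact (hc.2 x hxy).trans_le (hm.1 hy)

/-- Ulam: `ω₁` many disjoint stationary sets -/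
theorem ulam : ∃ S : O1.{u} → Set O1.{u}, (∀ i, Stat (S i)) ∧
    ∀ i j x, x ∈ S i → x ∈ S j → i = j := by
  have he : ∀ b : O1.{u}, ∃ f : O1.{u} → ℕ, InjOn f (Iio b) := fun b =>
    (Set.countable_iff_exists_injOn.1 (Iio_countable b))
  choose e he using he
  let U : ℕ → O1.{u} → Set O1.{u} := fun n a => {b | a < b ∧ e b a = n}
  have h1 : ∀ a, ∃ n, Stat (U n a) := by
    intro a
    by_contra h
    simp only [Stat] at h
    push Not at h
    choose g hg using h
    obtain ⟨g', hg'⟩ := countable_cl g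
    obtain ⟨ξ, hξ, hc⟩ := cl_unbounded' g' a
    exact hg (e ξ a) ξ ⟨hξ, rfl⟩ (hg' ξ hc _)
  choose n hn using h1
  have h2 : ∃ k, ¬ {a | n a = k}.Countable := by
    by_contra h
    push Not at h
    apply O1_uncountable
    have : (univ : Set O1.{u}) ⊆ ⋃ k, {a | n a = k} := fun a _ => by simp
    exact (countable_iUnion h).mono this
  obtain ⟨k, hk⟩ := h2
  have h3 : #O1.{u} ≤ #{a | n a = k} := by
    rw [mk_O1]
    by_contra h
    exact hk (countable_of_lt_aleph1 (not_le.1 h))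
  obtain ⟨φ⟩ := Cardinal.le_def _ _ |>.1 h3
  refine ⟨fun i => U k (φ i), fun i => ?_, ?_⟩
  · have := hn (φ i)
    rwa [(φ i).2] at this
  · rintro i j x ⟨hx1, hx2⟩ ⟨hx3, hx4⟩
    have := he x hx1 hx3 (hx2.trans hx4.symm)
    exact φ.injective (Subtype.ext this)

/-- closed under a family of finitary operations -/
def Closed {A I : Type*} (G : List A → I → A) (s : Set A) : Prop :=
  ∀ l, (∀ x ∈ l, x ∈ s) → ∀ i, G l i ∈ s

/-- the closure of `s` -/
def cl {A I : Type*} (G : List A → I → A) (s : Set A) : Set A := ⋂₀ {t | s ⊆ t ∧ Closed G t}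

theorem subset_cl {A I : Type*} (G : List A → I → A) (s : Set A) : s ⊆ cl G s :=
  subset_sInter fun _ ht => ht.1

theorem closed_cl {A I : Type*} (G : List A → I → A) (s : Set A) : Closed G (cl G s) := by
  intro l hl i t ht
  exact ht.2 l (fun x hx => hl x hx t ht) i

theorem cl_subset {A I : Type*} {G : List A → I → A} {s t : Set A} (h : s ⊆ t) (ht : Closed G t) :
    cl G s ⊆ t := sInter_subset_of_mem ⟨h, ht⟩

theorem cl_mono {A I : Type*} {G : List A → I → A} {s t : Set A} (h : s ⊆ t) :
    cl G s ⊆ cl G t := cl_subset (h.trans (subset_cl G t)) (closed_cl G t)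

theorem list_directed {A : Type*} {K : Set (Set A)} (hne : K.Nonempty)
    (hd : DirectedOn (· ⊆ ·) K) (l : List A) (hl : ∀ x ∈ l, x ∈ ⋃₀ K) :
    ∃ k ∈ K, ∀ x ∈ l, x ∈ k := by
  induction l with
  | nil => obtain ⟨k, hk⟩ := hne; exact ⟨k, hk, by simp⟩
  | cons a l ih =>
    obtain ⟨k, hk, h⟩ := ih (fun x hx => hl x (by simp [hx]))
    obtain ⟨k', hk', ha⟩ := hl a (by simp)
    obtain ⟨m, hm, h1, h2⟩ := hd k hk k' hk'
    refine ⟨m, hm, fun x hx => ?_⟩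
    rcases List.mem_cons.1 hx with rfl | hx
    · exact h2 ha
    · exact h1 (h x hx)

theorem closed_sUnion {A I : Type*} {G : List A → I → A} {K : Set (Set A)} (hne : K.Nonempty)
    (hd : DirectedOn (· ⊆ ·) K) (hK : ∀ k ∈ K, Closed G k) : Closed G (⋃₀ K) := by
  intro l hl i
  obtain ⟨k, hk, h⟩ := list_directed hne hd l hl
  exact ⟨k, hk, hK k hk l h i⟩

theorem countable_cl_set {A I : Type*} [Countable I] (G : List A → I → A) {s : Set A}
    (hs : s.Countable) : (cl G s).Countable := by
  let step : Set A → Set A := fun t => t ∪ ⋃ l ∈ {l : List A | ∀ x ∈ l, x ∈ t}, range (G l)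
  let T : ℕ → Set A := fun n => step^[n] s
  have hT : ∀ n, T (n+1) = step (T n) := fun n => Function.iterate_succ_apply' _ _ _
  have hc : ∀ n, (T n).Countable := by
    intro n
    induction n with
    | zero => exact hs
    | succ n ih =>
      rw [hT]
      exact ih.union ((countable_lists ih).biUnion fun l _ => countable_range _)
  have hmono : Monotone T := monotone_nat_of_le_succ fun n => by
    rw [hT]; exact subset_union_left
  refine (countable_iUnion hc).mono (cl_subset (subset_iUnion T 0) ?_)
  intro l hl i
  have hd : DirectedOn (· ⊆ ·) (range T) := by
    rintro _ ⟨m, rfl⟩ _ ⟨n, rfl⟩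
    exact ⟨_, ⟨max m n, rfl⟩, hmono (le_max_left _ _), hmono (le_max_right _ _)⟩
  obtain ⟨_, ⟨n, rfl⟩, h⟩ := list_directed (range_nonempty T) hd l (by simpa [sUnion_range] using hl)
  refine mem_iUnion.2 ⟨n+1, ?_⟩
  rw [hT]
  right
  simp only [mem_iUnion]
  exact ⟨l, h, i, rfl⟩

/-- clubs contain the closed sets of some algebra -/
theorem club_fun {A : Type*} {Y : Set A} (hY : Y.Nonempty) {D : Set (Set A)} (hD : ClubOn Y D) :
    ∃ G : List A → ℕ → A, (∀ l i, G l i ∈ Y) ∧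
      ∀ s, s ⊆ Y → s.Countable → Closed G s → s ∈ D := by
  classical
  obtain ⟨y0, hy0⟩ := hY
  obtain ⟨h1, h2, h3⟩ := hD
  have hext : ∀ (c : Set A) (a : A), c ∈ D → ∃ c' ∈ D, c ⊆ c' ∧ (a ∈ Y → a ∈ c') := by
    intro c a hc
    by_cases ha : a ∈ Y
    · obtain ⟨c', hc', h⟩ := h2 (insert a c) (insert_subset ha (h1 c hc).1) ((h1 c hc).2.insert a)
      exact ⟨c', hc', (subset_insert _ _).trans h, fun _ => h (mem_insert _ _)⟩
    · exact ⟨c, hc, Subset.rfl, fun h => absurd h ha⟩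
  obtain ⟨c0, hc0, hc0'⟩ := h2 {y0} (by simpa using hy0) (countable_singleton _)
  choose! ext he1 he2 he3 using hext
  let F : List A → Set A := fun l => l.foldr (fun a c => ext c a) c0
  have hF : ∀ l, F l ∈ D := by
    intro l
    induction l with
    | nil => exact hc0
    | cons a l ih => exact he1 _ a ih
  have hFs : ∀ a l, F l ⊆ F (a :: l) := fun a l => he2 _ a (hF l)
  have hFm : ∀ a l, a ∈ Y → a ∈ F (a :: l) := fun a l => he3 _ a (hF l)
  have hFn : ∀ l, (F l).Nonempty := by
    intro l
    induction l with
    | nil => exact ⟨y0, hc0' rfl⟩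
    | cons a l ih => exact ih.mono (hFs a l)
  have hen : ∀ l, ∃ f : ℕ → A, F l = range f := fun l =>
    (h1 _ (hF l)).2.exists_eq_range (hFn l)
  choose G hG using hen
  refine ⟨G, fun l i => (h1 _ (hF l)).1 (by rw [hG]; exact ⟨i, rfl⟩), ?_⟩
  intro s hsY hsc hcl
  have hsne : s.Nonempty := ⟨G [] 0, hcl [] (by simp) 0⟩
  obtain ⟨f, rfl⟩ := hsc.exists_eq_range hsne
  let ls : ℕ → List A := fun n => Nat.rec [] (fun k l => f k :: l) n
  have hls : ∀ n, ∀ x ∈ ls n, x ∈ range f := by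
    intro n
    induction n with
    | zero => simp [ls]
    | succ n ih =>
      intro x hx
      rcases List.mem_cons.1 hx with rfl | hx
      · exact ⟨n, rfl⟩
      · exact ih x hx
  have : range f = ⋃ n, F (ls n) := by
    apply Subset.antisymm
    · rintro _ ⟨n, rfl⟩
      exact mem_iUnion.2 ⟨n+1, hFm (f n) (ls n) (hsY ⟨n, rfl⟩)⟩
    · refine iUnion_subset fun n => ?_
      rw [hG]
      rintro _ ⟨i, rfl⟩
      exact hcl _ (hls n) i
  rw [this]
  exact h3 _ (fun n => hF _) (monotone_nat_of_le_succ fun n => hFs _ _)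

/-- filtration lemma -/
theorem filtration {A : Type*} {Y : Set A} {D : Set (Set A)} (hD : ClubOn Y D)
    (π : O1.{u} → A) (hπ : range π = Y) :
    ∃ g : O1.{u} → O1.{u}, ∀ ξ, Cl g ξ → π '' Iio ξ ∈ D := by
  have hY : Y.Nonempty := by rw [← hπ]; exact range_nonempty π
  obtain ⟨G, hG1, hG2⟩ := club_fun hY hD
  have : ∀ l i, ∃ x, π x = G l i := fun l i => by
    have := hG1 l i; rw [← hπ] at this; exact this
  choose p hp using this
  obtain ⟨g, hg⟩ := list_cl (fun l i => p (l.map π) i)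
  refine ⟨g, fun ξ hξ => hG2 _ ?_ ((Iio_countable ξ).image π) ?_⟩
  · rw [← hπ]; exact image_subset_range _ _
  · intro l hl i
    obtain ⟨l', hl', rfl⟩ := list_lift π (Iio ξ) l hl
    exact ⟨_, hg ξ hξ l' hl' i, hp _ _⟩

theorem trace_cl {A : Type*} {π e : O1.{u} → A} (hπ : Function.Injective π)
    (he : Function.Injective e) (h : range e ⊆ range π) :
    ∃ g : O1.{u} → O1.{u}, ∀ ξ, Cl g ξ → ∀ i, e i ∈ π '' Iio ξ ↔ i < ξ := by
  classical
  have : ∀ i, ∃ x, π x = e i := fun i => h ⟨i, rfl⟩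
  choose p hp using this
  have : ∀ x, ∃ j, ∀ i, π x = e i → i = j := by
    intro x
    by_cases hx : ∃ i, π x = e i
    · obtain ⟨j, hj⟩ := hx
      exact ⟨j, fun i hi => he (hi.symm.trans hj)⟩
    · exact ⟨x, fun i hi => absurd ⟨i, hi⟩ hx⟩
  choose q hq using this
  obtain ⟨g, hg⟩ := and_cl p q
  refine ⟨g, fun ξ hξ i => ⟨?_, fun hi => ⟨p i, (hg ξ hξ).1.2 i hi, hp i⟩⟩⟩
  rintro ⟨x, hx, hxi⟩
  rw [hq x i hxi]
  exact (hg ξ hξ).2.2 x hx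

theorem stat_closed {A I : Type*} [Countable I] (G : List A → I → A) {e : O1.{u} → A}
    (he : Function.Injective e) {T : Set O1.{u}} (hT : Stat T) {s0 : Set A} (hs0 : s0.Countable) :
    ∃ N : Set A, N.Countable ∧ s0 ⊆ N ∧ Closed G N ∧ ∃ δ ∈ T, ∀ i, e i ∈ N ↔ i < δ := by
  let M : O1.{u} → Set A := fun x => cl G (s0 ∪ e '' Iic x)
  have hMc : ∀ x, (M x).Countable := fun x =>
    countable_cl_set G (hs0.union ((Iic_countable x).image e))
  have hmono : Monotone M := fun x y h => cl_mono
    (union_subset_union_right _ (image_mono (Iic_subset_Iic.2 h)))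
  have hb : ∀ x, ∃ b, ∀ i, e i ∈ M x → i < b := fun x =>
    exists_bound (s := {i | e i ∈ M x}) ((hMc x).preimage he)
  choose g hg using hb
  obtain ⟨δ, hδ, ⟨x0, hx0⟩, hcl⟩ := hT g
  refine ⟨⋃₀ (M '' Iio δ), ?_, ?_, ?_, δ, hδ, fun i => ⟨?_, fun hi => ?_⟩⟩
  · exact ((Iio_countable δ).image M).sUnion (by rintro _ ⟨x, _, rfl⟩; exact hMc x)
  · intro x hx
    exact ⟨M x0, ⟨x0, hx0, rfl⟩, subset_cl _ _ (Or.inl hx)⟩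
  · refine closed_sUnion ⟨_, x0, hx0, rfl⟩ ?_ ?_
    · rintro _ ⟨x, hx, rfl⟩ _ ⟨y, hy, rfl⟩
      exact ⟨_, ⟨max x y, mem_Iio.2 (max_lt hx hy), rfl⟩, hmono (le_max_left _ _), hmono (le_max_right _ _)⟩
    · rintro _ ⟨x, _, rfl⟩
      exact closed_cl _ _
  · rintro ⟨_, ⟨x, hx, rfl⟩, hi⟩
    exact (hg x i hi).trans (hcl x hx)
  · exact ⟨M i, ⟨i, hi, rfl⟩, subset_cl _ _ (Or.inr ⟨i, mem_Iic.2 le_rfl, rfl⟩)⟩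

/-- the ordinal of an element of `O1` -/
noncomputable def toO (i : O1.{u}) : Ordinal.{u} := (Ordinal.ToType.mk.symm i).1

theorem toO_lt (i : O1.{u}) : toO i < omega1 := (Ordinal.ToType.mk.symm i).2

theorem toO_lt_toO {i j : O1.{u}} : toO i < toO j ↔ i < j :=
  (Ordinal.ToType.mk.symm).lt_iff_lt (x := i) (y := j)

theorem toO_surj {o : Ordinal.{u}} (h : o < omega1) : ∃ i : O1.{u}, toO i = o := by
  refine ⟨Ordinal.ToType.mk ⟨o, h⟩, ?_⟩
  simp [toO]

theorem toO_inj {i j : O1.{u}} (h : toO i = toO j) : i = j :=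
  Ordinal.ToType.mk.symm.injective (Subtype.ext h)

theorem stat_of_ordStationary {T : Set Ordinal.{u}} (hT : OrdStationary omega1 T) :
    Stat {i : O1.{u} | toO i ∈ T} := by
  intro g
  have hC : OrdClub omega1 {o : Ordinal.{u} | ∃ i : O1.{u}, toO i = o ∧ Cl g i} := by
    refine ⟨?_, ?_, ?_⟩
    · rintro _ ⟨i, rfl, _⟩; exact toO_lt i
    · intro o ho
      obtain ⟨i, rfl⟩ := toO_surj ho
      obtain ⟨ξ, h1, h2⟩ := cl_unbounded' g i
      exact ⟨_, ⟨ξ, rfl, h2⟩, (toO_lt_toO.2 h1).le⟩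
    · intro o ho h0 hlim
      obtain ⟨i, rfl⟩ := toO_surj ho
      refine ⟨i, rfl, ?_, fun x hx => ?_⟩
      · obtain ⟨_, ⟨c, rfl, _⟩, _, hc⟩ := hlim 0 (pos_iff_ne_zero.2 h0)
        exact ⟨c, toO_lt_toO.1 hc⟩
      · obtain ⟨_, ⟨c, rfl, hcl⟩, hb, hc⟩ := hlim (toO x) (toO_lt_toO.2 hx)
        exact (hcl.2 x (toO_lt_toO.1 hb)).trans (toO_lt_toO.1 hc)
  obtain ⟨_, ho, ⟨i, rfl, hi⟩⟩ := hT.2 _ hC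
  exact ⟨i, ho, hi⟩

theorem mk_Iio_omega1 : #(Iio omega1.{u}) = aleph 1 := by
  rw [mk_Iio_ordinal, omega1, card_ord]; simp

/-- SRP for arbitrary types. -/
theorem srp_type (hSRP : SRP.{u}) {L : Type u} (hL : aleph 2 ≤ #L) {e : O1.{u} → L}
    (he : Function.Injective e) (Z : Set (Set L)) (hZc : ∀ σ ∈ Z, σ.Countable)
    (hZ : ∀ T : Set O1.{u}, Stat T → ∀ C, ClubOn (univ : Set L) C →
      ∃ σ ∈ Z, σ ∈ C ∧ ∃ δ ∈ T, ∀ i, e i ∈ σ ↔ i < δ)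
    (x : L) :
    ∃ Y : Set L, x ∈ Y ∧ range e ⊆ Y ∧ #Y = aleph 1 ∧ ∃ D ⊆ Z, ClubOn Y D := by
  set lam := #L with hlam
  have h12 : aleph 1 < aleph 2 := aleph_lt_aleph.2 (by norm_num)
  -- the bijection
  have hb : ∃ j : L → Ordinal.{u}, Function.Injective j ∧ range j = Iio lam.ord ∧
      ∀ i, j (e i) = toO i := by
    have hord : omega1.{u} ≤ lam.ord := ord_le_ord.2 (h12.le.trans hL)
    have hmem : ∀ i : O1.{u}, toO i ∈ Iio lam.ord := fun i => (toO_lt i).trans_le hord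
    let ψ : O1.{u} → lam.ord.ToType := fun i => Ordinal.ToType.mk ⟨toO i, hmem i⟩
    have hψ : Function.Injective ψ := by
      intro i i' h
      have := Ordinal.ToType.mk.injective h
      have h2 : toO i = toO i' := Subtype.mk.inj this
      exact toO_inj h2
    let f : range e ↪ lam.ord.ToType :=
      ⟨fun y => ψ ((Equiv.ofInjective e he).symm y), fun _ _ h =>
        (Equiv.ofInjective e he).symm.injective (hψ h)⟩
    have hs : #(range e) < #L := by
      rw [mk_range_eq e he, mk_O1]
      exact h12.trans_le hL
    have hne : Nonempty (L ≃ lam.ord.ToType) := by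
      rw [← Cardinal.eq, mk_ord_toType]
    obtain ⟨g, hg⟩ := extend_function_of_lt f hs hne
    refine ⟨fun y => (Ordinal.ToType.mk.symm (g y)).1, ?_, ?_, ?_⟩
    · intro a b h
      exact g.injective (Ordinal.ToType.mk.symm.injective (Subtype.ext h))
    · ext o
      constructor
      · rintro ⟨y, rfl⟩; exact (Ordinal.ToType.mk.symm (g y)).2
      · intro ho
        exact ⟨g.symm (Ordinal.ToType.mk ⟨o, ho⟩), by simp⟩
    · intro i
      have h3 : (Equiv.ofInjective e he).symm ⟨e i, i, rfl⟩ = i := by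
        rw [Equiv.symm_apply_eq]; rfl
      have h4 : g (e i) = ψ i := (hg ⟨e i, i, rfl⟩).trans (congrArg ψ h3)
      change (Ordinal.ToType.mk.symm (g (e i))).1 = toO i
      rw [h4]
      change (Ordinal.ToType.mk.symm (Ordinal.ToType.mk _)).1 = toO i
      rw [OrderIso.symm_apply_apply]
  obtain ⟨j, hj, hjr, hje⟩ := hb
  have hjlt : ∀ y, j y ∈ Iio lam.ord := fun y => by rw [← hjr]; exact ⟨y, rfl⟩
  have himg : ∀ s : Set Ordinal.{u}, s ⊆ Iio lam.ord → j '' (j ⁻¹' s) = s := fun s hs =>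
    image_preimage_eq_of_subset (by rw [hjr]; exact hs)
  have hpre : ∀ s : Set L, j ⁻¹' (j '' s) = s := fun s => preimage_image_eq s hj
  have hpc : ∀ s : Set Ordinal.{u}, s.Countable → (j ⁻¹' s).Countable := fun s hs => hs.preimage hj
  obtain ⟨Y, hXY, hYl, hYc, D, hDZ, hD⟩ := hSRP lam hL {σ | ∃ s ∈ Z, j '' s = σ}
    (by
      rintro _ ⟨s, hs, rfl⟩
      refine ⟨?_, (hZc s hs).image j⟩
      rw [← hjr]; exact image_subset_range _ _)
    (by
      intro T hT C hC
      obtain ⟨σ, hσZ, hσC, δ, hδ, hσ⟩ := hZ _ (stat_of_ordStationary hT) {σ | j '' σ ∈ C} (by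
        refine ⟨fun c hc => ⟨subset_univ _, ?_⟩, fun s _ hs => ?_, fun f hf hm => ?_⟩
        · have := hpc _ (hC.1 _ hc).2
          rwa [hpre] at this
        · obtain ⟨c, hc, hsc⟩ := hC.2.1 (j '' s) (by rw [← hjr]; exact image_subset_range _ _)
            (hs.image j)
          refine ⟨j ⁻¹' c, ?_, image_subset_iff.1 hsc⟩
          change j '' (j ⁻¹' c) ∈ C
          rwa [himg c (hC.1 c hc).1]
        · change j '' (⋃ n, f n) ∈ C
          rw [image_iUnion]
          exact hC.2.2 (fun n => j '' f n) hf (fun a b h => image_mono (hm h)))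
      refine ⟨j '' σ, ⟨⟨σ, hσZ, rfl⟩, toO δ, hδ, ?_⟩, hσC⟩
      ext o
      constructor
      · rintro ⟨⟨y, hy, rfl⟩, ho⟩
        obtain ⟨i, hi⟩ := toO_surj ho
        have : y = e i := hj (by rw [hje, hi])
        subst this
        rw [hje]
        exact toO_lt_toO.2 ((hσ i).1 hy)
      · intro ho
        obtain ⟨i, rfl⟩ := toO_surj (lt_trans (mem_Iio.1 ho) (toO_lt δ))
        exact ⟨⟨e i, (hσ i).2 (toO_lt_toO.1 ho), hje i⟩, toO_lt i⟩)
    (insert (j x) (Iio omega1))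
    (by
      refine insert_subset (hjlt x) ?_
      exact Iio_subset_Iio (ord_le_ord.2 (h12.le.trans hL)))
    (by
      apply le_antisymm
      · refine (mk_insert_le).trans ?_
        rw [mk_Iio_omega1]
        exact add_le_of_le (aleph0_le_aleph 1) le_rfl (one_le_aleph0.trans (aleph0_le_aleph 1))
      · rw [← mk_Iio_omega1]
        exact mk_le_mk_of_subset (subset_insert _ _))
  have hYj : j '' (j ⁻¹' Y) = Y := himg Y hYl
  refine ⟨j ⁻¹' Y, hXY (mem_insert _ _), ?_, ?_, {s | j '' s ∈ D}, ?_, ?_⟩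
  · rintro _ ⟨i, rfl⟩
    change j (e i) ∈ Y
    rw [hje]
    exact hXY (mem_insert_of_mem _ (toO_lt i))
  · have h1 := mk_image_eq_lift j (j ⁻¹' Y) hj
    rw [hYj, hYc] at h1
    have h2 : lift.{u+1, u} (#(j ⁻¹' Y)) = lift.{u+1, u} (aleph 1) := by
      rw [lift_id'.{u, u+1}] at h1
      rw [← h1, lift_aleph, Ordinal.lift_one]
    exact lift_injective h2
  · intro s hs
    obtain ⟨t, ht, hts⟩ := hDZ hs
    have := (image_injective.2 hj) hts
    rwa [← this]
  · refine ⟨fun c hc => ⟨image_subset_iff.1 (hD.1 _ hc).1, ?_⟩, fun s hs hsc => ?_,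
      fun f hf hm => ?_⟩
    · have := hpc _ (hD.1 _ hc).2
      rwa [hpre] at this
    · obtain ⟨c, hc, hsc⟩ := hD.2.1 (j '' s) (image_subset_iff.2 hs) (hsc.image j)
      refine ⟨j ⁻¹' c, ?_, image_subset_iff.1 hsc⟩
      change j '' (j ⁻¹' c) ∈ D
      rwa [himg c ((hD.1 c hc).1.trans hYl)]
    · change j '' (⋃ n, f n) ∈ D
      rw [image_iUnion]
      exact hD.2.2 (fun n => j '' f n) hf (fun a b h => image_mono (hm h))

abbrev L0 : Type u := O2.{u} → O2.{u}
abbrev L : Type u := L0.{u} → L0.{u}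

def c0 (a : O2.{u}) : L0.{u} := fun _ => a
def c1 (f : L0.{u}) : L.{u} := fun _ => f
def cc (a : O2.{u}) : L.{u} := c1 (c0 a)
noncomputable def d0 (f : L0.{u}) : O2.{u} := f (Classical.arbitrary _)
noncomputable def d1 (x : L.{u}) : L0.{u} := x (Classical.arbitrary _)

theorem d0c0 (a : O2.{u}) : d0 (c0 a) = a := rfl
theorem d1c1 (f : L0.{u}) : d1 (c1 f) = f := rfl

theorem aleph0_le_O2 : ℵ₀ ≤ #O2.{u} := by rw [mk_O2]; exact aleph0_le_aleph 2

theorem O2_le_L0 : #O2.{u} ≤ #L0.{u} := mk_le_of_injective (f := c0) fun a b h => by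
  have := congrArg d0 h; simpa [d0c0] using this

theorem L0_le_L : #L0.{u} ≤ #L.{u} := mk_le_of_injective (f := c1) fun a b h => by
  have := congrArg d1 h; simpa [d1c1] using this

theorem aleph0_le_L0 : ℵ₀ ≤ #L0.{u} := aleph0_le_O2.trans O2_le_L0

theorem exists_gE : Nonempty (L.{u} ≃ (O2.{u} → L.{u})) := by
  rw [← Cardinal.eq]
  change _ = #(O2.{u} → (L0.{u} → L0.{u}))
  have h1 : #(O2.{u} → (L0.{u} → L0.{u})) = (#L0.{u} ^ #L0.{u}) ^ #O2.{u} := by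
    rw [← Cardinal.power_def, ← Cardinal.power_def]
  have h2 : #L.{u} = #L0.{u} ^ #L0.{u} := (Cardinal.power_def _ _).symm
  rw [h1, h2, ← power_mul, mul_eq_left aleph0_le_L0 O2_le_L0 (aleph0_pos.trans_le aleph0_le_O2).ne']

theorem exists_evE : Nonempty (L.{u} ≃ (List L0.{u} → ℕ → L0.{u})) := by
  rw [← Cardinal.eq]
  have : Infinite L0.{u} := infinite_iff.2 aleph0_le_L0
  have h1 : #(List L0.{u} → ℕ → L0.{u}) = (#L0.{u} ^ ℵ₀) ^ #L0.{u} := by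
    simp [mk_list_eq_mk]
  have h2 : #L.{u} = #L0.{u} ^ #L0.{u} := (Cardinal.power_def _ _).symm
  rw [h1, h2, ← power_mul, mul_eq_right aleph0_le_L0 aleph0_le_L0 aleph0_ne_zero]

noncomputable def gE : L.{u} ≃ (O2.{u} → L.{u}) := Classical.choice exists_gE
noncomputable def evE : L.{u} ≃ (List L0.{u} → ℕ → L0.{u}) := Classical.choice exists_evE

/-- the head of a list -/
noncomputable def hd (l : List L.{u}) : L.{u} := l.headD (Classical.arbitrary _)

/-- the basic operations -/
noncomputable def op : ℕ → List L.{u} → L.{u}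
  | 0, l => gE.symm (fun _ => hd l)
  | 1, _ => gE.symm cc
  | 2, l => c1 (fun a => d0 (d1 (gE (hd l) a)))
  | n + 3, l => c1 (evE (hd l) (l.tail.map d1) n)

/-- the pointwise version of an operation -/
noncomputable def hat (F : List L.{u} → L.{u}) (l : List L.{u}) : L.{u} :=
  gE.symm (fun a => F (l.map (fun b => gE b a)))

/-- all operations -/
noncomputable def Op (l : List L.{u}) (p : ℕ × ℕ) : L.{u} := hat^[p.2] (op p.1) l

abbrev Good (N : Set L.{u}) : Prop := Closed Op N

/-- the extension `N[a]` -/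
noncomputable def adj (N : Set L.{u}) (a : O2.{u}) : Set L.{u} := (fun b => gE b a) '' N

theorem good_adj {N : Set L.{u}} (hN : Good N) (a : O2.{u}) : Good (adj N a) := by
  rintro l hl ⟨n, k⟩
  obtain ⟨l', hl', rfl⟩ := list_lift _ N l hl
  refine ⟨Op l' (n, k+1), hN l' hl' _, ?_⟩
  simp only [Op, Function.iterate_succ_apply', hat, Equiv.apply_symm_apply]

theorem good_op {N : Set L.{u}} (hN : Good N) (n : ℕ) (l : List L.{u}) (hl : ∀ x ∈ l, x ∈ N) :
    op n l ∈ N := hN l hl (n, 0)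

theorem subset_adj {N : Set L.{u}} (hN : Good N) (a : O2.{u}) : N ⊆ adj N a := by
  intro x hx
  refine ⟨op 0 [x], good_op hN 0 [x] (by simpa using hx), ?_⟩
  simp [op, hd]

theorem mem_adj {N : Set L.{u}} (hN : Good N) (a : O2.{u}) : cc a ∈ adj N a := by
  refine ⟨op 1 [], good_op hN 1 [] (by simp), ?_⟩
  simp [op]

theorem adj_trace {N : Set L.{u}} (hN : Good N) {a b : O2.{u}} (h : cc b ∈ adj N a) :
    ∃ f : L0.{u}, c1 f ∈ N ∧ f a = b := by
  obtain ⟨x, hx, hxa⟩ := h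
  refine ⟨_, good_op hN 2 [x] (by simpa using hx), ?_⟩
  simp only [hd, List.headD_cons]
  simp only at hxa
  rw [hxa]
  rfl

theorem good_ev {N : Set L.{u}} (hN : Good N) {c : L.{u}} (hc : c ∈ N) (l : List L0.{u})
    (hl : ∀ f ∈ l, c1 f ∈ N) (n : ℕ) : c1 (evE c l n) ∈ N := by
  have := good_op hN (n+3) (c :: l.map c1) (by
    intro x hx
    rcases List.mem_cons.1 hx with rfl | hx
    · exact hc
    · obtain ⟨f, hf, rfl⟩ := List.mem_map.1 hx
      exact hl f hf)
  have h2 : (l.map c1).map d1 = l := by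
    rw [List.map_map]; exact List.map_id l
  simpa only [op, hd, List.headD_cons, List.tail_cons, h2] using this

/-- the bad sets -/
def Bd (ι : O1.{u} → O2.{u}) (N : Set L.{u}) : Prop :=
  ∀ a : O2.{u}, cc a ∉ N → ∃ f : L0.{u}, c1 f ∈ N ∧ ∃ i, f a = ι i ∧ cc (ι i) ∉ N

theorem cc_inj : Function.Injective cc.{u} := fun a b h => by
  have := congrArg (fun x => d0 (d1 x)) h; exact this

/-- the projective stationary set -/
def ZZ (ι : O1.{u} → O2.{u}) : Set (Set L.{u}) :=
  {N | N.Countable ∧ Good N ∧ (Bd ι N ∨ ∀ N', N ⊆ N' → Good N' → N'.Countable →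
    (∀ i, cc (ι i) ∈ N' ↔ cc (ι i) ∈ N) → ¬ Bd ι N')}

theorem ZZ_proj {ι : O1.{u} → O2.{u}} (hι : Function.Injective ι) {T : Set O1.{u}} (hT : Stat T)
    {E : Set (Set L.{u})} (hE : ClubOn (univ : Set L.{u}) E) :
    ∃ N ∈ ZZ ι, N ∈ E ∧ ∃ δ ∈ T, ∀ i, cc (ι i) ∈ N ↔ i < δ := by
  obtain ⟨GE, -, hGE⟩ := club_fun univ_nonempty hE
  let H : List L.{u} → (ℕ × ℕ) ⊕ ℕ → L.{u} := fun l i => Sum.elim (Op l) (GE l) i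
  have hH1 : ∀ s, Closed H s → Good s := fun s hs l hl i => hs l hl (Sum.inl i)
  have hH2 : ∀ s, s.Countable → Closed H s → s ∈ E := fun s hc hs =>
    hGE s (subset_univ _) hc fun l hl i => hs l hl (Sum.inr i)
  -- the trace of the hull operator
  have htr : ∀ l : List L0.{u}, ∃ f : ℕ → L0.{u},
      {x | c1 x ∈ cl H {y | y ∈ l.map c1}} ⊆ range f := by
    intro l
    have hc : (cl H {y | y ∈ l.map c1}).Countable := countable_cl_set H ((List.finite_toSet _).countable)
    have hc1 : Function.Injective c1.{u} := fun a b h => congrArg d1 h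
    have hc2 : {x | c1 x ∈ cl H {y | y ∈ l.map c1}}.Countable := hc.preimage hc1
    exact Set.countable_iff_exists_subset_range.1 hc2
  choose Gc hGc using htr
  obtain ⟨c, hc⟩ := evE.surjective Gc
  obtain ⟨N, hNc, hcN, hNH, δ, hδ, hNδ⟩ := stat_closed H (e := fun i => cc (ι i))
    (cc_inj.comp hι) hT (countable_singleton c)
  have hcN : c ∈ N := hcN rfl
  by_cases hNZ : N ∈ ZZ ι
  · exact ⟨N, hNZ, hH2 N hNc hNH, δ, hδ, hNδ⟩
  have : ∃ N', N ⊆ N' ∧ Good N' ∧ N'.Countable ∧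
      (∀ i, cc (ι i) ∈ N' ↔ cc (ι i) ∈ N) ∧ Bd ι N' := by
    by_contra h
    push Not at h
    exact hNZ ⟨hNc, hH1 N hNH, Or.inr h⟩
  obtain ⟨N', hNN', hG', hc', htr', hB'⟩ := this
  let K : Set (Set L.{u}) :=
    (fun l : List L0.{u} => cl H {y | y ∈ l.map c1}) '' {l | ∀ f ∈ l, c1 f ∈ N'}
  have hKne : K.Nonempty := ⟨_, [], by simp, rfl⟩
  have hKd : DirectedOn (· ⊆ ·) K := by
    rintro _ ⟨l, hl, rfl⟩ _ ⟨l', hl', rfl⟩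
    refine ⟨_, ⟨l ++ l', ?_, rfl⟩, cl_mono ?_, cl_mono ?_⟩
    · intro f hf
      rcases List.mem_append.1 hf with hf | hf
      · exact hl f hf
      · exact hl' f hf
    · intro y hy
      simp only [List.map_append, List.mem_append, mem_setOf_eq] at hy ⊢
      exact Or.inl hy
    · intro y hy
      simp only [List.map_append, List.mem_append, mem_setOf_eq] at hy ⊢
      exact Or.inr hy
  have hMcl : Closed H (⋃₀ K) := closed_sUnion hKne hKd (by
    rintro _ ⟨l, _, rfl⟩; exact closed_cl _ _)
  have hMsub : ⋃₀ K ⊆ cl H N' := by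
    refine sUnion_subset ?_
    rintro _ ⟨l, hl, rfl⟩
    refine cl_mono ?_
    intro y hy
    obtain ⟨f, hf, rfl⟩ := List.mem_map.1 hy
    exact hl f hf
  have hMc : (⋃₀ K).Countable := (countable_cl_set H hc').mono hMsub
  have hMtr : ∀ f : L0.{u}, c1 f ∈ ⋃₀ K ↔ c1 f ∈ N' := by
    intro f
    constructor
    · rintro ⟨_, ⟨l, hl, rfl⟩, hf⟩
      obtain ⟨n, rfl⟩ := hGc l hf
      rw [← hc]
      exact good_ev hG' (hNN' hcN) l hl n
    · intro hf
      exact ⟨_, ⟨[f], by simpa using hf, rfl⟩, subset_cl _ _ (by simp)⟩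
  have hMB : Bd ι (⋃₀ K) := by
    intro a ha
    obtain ⟨f, hf, i, hi, hi'⟩ := hB' a (fun h => ha ((hMtr _).2 h))
    exact ⟨f, (hMtr f).2 hf, i, hi, fun h => hi' ((hMtr _).1 h)⟩
  refine ⟨⋃₀ K, ⟨hMc, hH1 _ hMcl, Or.inl hMB⟩, hH2 _ hMc hMcl, δ, hδ, fun i => ?_⟩
  exact ((hMtr _).trans (htr' i)).trans (hNδ i)

/-- the extension lemma via Zorn -/
theorem extend_zorn {ι : O1.{u} → O2.{u}} {N : Set L.{u}} (hNc : N.Countable) (hNG : Good N)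
    (h : ∀ N', N ⊆ N' → Good N' → N'.Countable →
      (∀ i, cc (ι i) ∈ N' ↔ cc (ι i) ∈ N) → ¬ Bd ι N') :
    ∃ U, N ⊆ U ∧ Good U ∧ (∀ i, cc (ι i) ∈ U ↔ cc (ι i) ∈ N) ∧ ¬ {a | cc a ∈ U}.Countable := by
  by_contra hcon
  push Not at hcon
  let P : Type u := {N' : Set L.{u} // N ⊆ N' ∧ Good N' ∧ N'.Countable ∧
    (∀ i, cc (ι i) ∈ N' ↔ cc (ι i) ∈ N)}
  let r : P → P → Prop := fun a b => a = b ∨ (a.1 ⊆ b.1 ∧ ∃ x, cc x ∈ b.1 ∧ cc x ∉ a.1)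
  have hrs : ∀ {a b : P}, r a b → a.1 ⊆ b.1 := by
    rintro a b (rfl | h)
    · exact Subset.rfl
    · exact h.1
  obtain ⟨m, hm⟩ := exists_maximal_of_chains_bounded (r := r) (by
    intro c hc
    rcases c.eq_empty_or_nonempty with rfl | hne
    · exact ⟨⟨N, Subset.rfl, hNG, hNc, fun _ => Iff.rfl⟩, by simp⟩
    let K : Set (Set L.{u}) := Subtype.val '' c
    have hKd : DirectedOn (· ⊆ ·) K := by
      rintro _ ⟨a, ha, rfl⟩ _ ⟨b, hb, rfl⟩
      rcases eq_or_ne a b with rfl | hab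
      · exact ⟨_, ⟨a, ha, rfl⟩, Subset.rfl, Subset.rfl⟩
      rcases hc ha hb hab with h | h
      · exact ⟨_, ⟨b, hb, rfl⟩, hrs h, Subset.rfl⟩
      · exact ⟨_, ⟨a, ha, rfl⟩, Subset.rfl, hrs h⟩
    have hUG : Good (⋃₀ K) := closed_sUnion (hne.image _) hKd (by
      rintro _ ⟨a, _, rfl⟩; exact a.2.2.1)
    have hNU : N ⊆ ⋃₀ K := by
      obtain ⟨a, ha⟩ := hne
      exact a.2.1.trans (subset_sUnion_of_mem ⟨a, ha, rfl⟩)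
    have hUt : ∀ i, cc (ι i) ∈ ⋃₀ K ↔ cc (ι i) ∈ N := by
      intro i
      refine ⟨?_, fun h => hNU h⟩
      rintro ⟨_, ⟨a, _, rfl⟩, h⟩
      exact (a.2.2.2.2 i).1 h
    have hUc := hcon _ hNU hUG hUt
    by_cases hfull : ∃ k ∈ c, ∀ x, cc x ∈ ⋃₀ K → cc x ∈ k.1
    · obtain ⟨k, hk, hkf⟩ := hfull
      refine ⟨k, fun a ha => ?_⟩
      rcases eq_or_ne a k with rfl | hak
      · exact Or.inl rfl
      rcases hc ha hk hak with h | h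
      · exact h
      · rcases h with h | ⟨_, x, hx, hx'⟩
        · exact Or.inl h.symm
        · exact absurd (hkf x ⟨a.1, ⟨a, ha, rfl⟩, hx⟩) hx'
    · push Not at hfull
      have hpick : ∀ x, cc x ∈ ⋃₀ K → ∃ k ∈ c, cc x ∈ k.1 := by
        rintro x ⟨_, ⟨k, hk, rfl⟩, hx⟩
        exact ⟨k, hk, hx⟩
      have : Nonempty P := hne.to_subtype.map Subtype.val
      choose! kk hk1 hk2 using hpick
      have hsub : ⋃₀ K ⊆ ⋃ x ∈ {x | cc x ∈ ⋃₀ K}, (kk x).1 := by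
        rintro y ⟨_, ⟨a, ha, rfl⟩, hy⟩
        obtain ⟨x, hx, hxa⟩ := hfull a ha
        simp only [mem_iUnion]
        refine ⟨x, hx, ?_⟩
        have hne : a ≠ kk x := by
          rintro rfl; exact hxa (hk2 x hx)
        rcases hc ha (hk1 x hx) hne with h | h
        · exact hrs h hy
        · exact absurd (hrs h (hk2 x hx)) hxa
      have hUcc : (⋃₀ K).Countable :=
        (hUc.biUnion fun x _ => (kk x).2.2.2.1).mono hsub
      refine ⟨⟨⋃₀ K, hNU, hUG, hUcc, hUt⟩, fun a ha => Or.inr ⟨?_, ?_⟩⟩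
      · exact subset_sUnion_of_mem ⟨a, ha, rfl⟩
      · exact hfull a ha) (by
    rintro a b c (rfl | hab) hbc
    · exact hbc
    rcases hbc with rfl | hbc
    · exact Or.inr hab
    · obtain ⟨x, hx, hx'⟩ := hab.2
      exact Or.inr ⟨hab.1.trans hbc.1, x, hbc.1 hx, hx'⟩)
  have hnB := h m.1 m.2.1 m.2.2.1 m.2.2.2.1 m.2.2.2.2
  simp only [Bd] at hnB
  push Not at hnB
  obtain ⟨a, ha, haf⟩ := hnB
  have hsub := subset_adj m.2.2.1 a
  let m' : P := ⟨adj m.1 a, m.2.1.trans hsub, good_adj m.2.2.1 a, m.2.2.2.1.image _, by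
    intro i
    rw [← m.2.2.2.2 i]
    refine ⟨fun h => ?_, fun h => hsub h⟩
    obtain ⟨f, hf, hfa⟩ := adj_trace m.2.2.1 h
    exact haf f hf i hfa⟩
  have hmem : cc a ∈ m'.1 := mem_adj m.2.2.1 a
  have := hm m' (Or.inr ⟨hsub, a, hmem, ha⟩)
  exact ha (hrs this hmem)

theorem aleph1_lt_aleph2 : aleph.{u} 1 < aleph 2 := aleph_lt_aleph.2 (by norm_num)

/-- Lemma E: a consequence of SRP akin to the strong Chang conjecture. -/
theorem chang (hSRP : SRP.{u}) {ι : O1.{u} → O2.{u}} (hι : Function.Injective ι)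
    (G : List O2.{u} → ℕ → O2.{u}) {T : Set O1.{u}} (hT : Stat T) :
    ∃ δ ∈ T, ∃ V : Set O2.{u}, ¬ V.Countable ∧ Closed G V ∧ ∀ i, ι i ∈ V ↔ i < δ := by
  classical
  obtain ⟨c, hc⟩ := evE.surjective (fun l n => c0 (G (l.map d0) n))
  have hL : aleph 2 ≤ #L.{u} := by rw [← mk_O2]; exact O2_le_L0.trans L0_le_L
  obtain ⟨Y, hcY, heY, hYc, D, hDZ, hD⟩ := srp_type hSRP hL (e := fun i => cc (ι i))
    (cc_inj.comp hι) (ZZ ι) (fun σ hσ => hσ.1) (fun T hT C hC => ZZ_proj hι hT hC) c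
  have hπ : Nonempty (O1.{u} ≃ Y) := by rw [← Cardinal.eq, mk_O1, hYc]
  obtain ⟨π0⟩ := hπ
  let π : O1.{u} → L.{u} := fun x => (π0 x).1
  have hπi : Function.Injective π := fun a b h => π0.injective (Subtype.ext h)
  have hπr : range π = Y := by
    ext y
    exact ⟨fun ⟨x, hx⟩ => hx ▸ (π0 x).2, fun hy => ⟨π0.symm ⟨y, hy⟩, by simp [π]⟩⟩
  have ha : ∃ a, cc a ∉ Y := by
    by_contra h
    push Not at h
    have : #O2.{u} ≤ #Y := mk_le_of_injective (f := fun a => (⟨cc a, h a⟩ : Y))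
      fun a b h => cc_inj (congrArg Subtype.val h)
    rw [mk_O2, hYc] at this
    exact absurd this (not_le.2 aleph1_lt_aleph2)
  obtain ⟨a, ha⟩ := ha
  obtain ⟨x0, hx0⟩ : c ∈ range π := by rw [hπr]; exact hcY
  obtain ⟨g1, hg1⟩ := filtration hD π hπr
  obtain ⟨g2, hg2⟩ := trace_cl hπi (cc_inj.comp hι) (by rw [hπr]; exact heY)
  have hφ : ∀ x, ∃ j, ∀ f i, π x = c1 f → f a = ι i → i = j := by
    intro x
    by_cases h : ∃ f i, π x = c1 f ∧ f a = ι i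
    · obtain ⟨f, i, h1, h2⟩ := h
      refine ⟨i, fun f' i' h3 h4 => hι ?_⟩
      have : f' = f := congrArg d1 (h3.symm.trans h1)
      rw [← h4, ← h2, this]
    · push Not at h
      exact ⟨x, fun f i h1 h2 => absurd h2 (h f i h1)⟩
  choose φ hφ using hφ
  obtain ⟨g3, hg3⟩ := and_cl g1 g2
  obtain ⟨g4, hg4⟩ := and_cl φ (fun _ => x0)
  obtain ⟨g, hg⟩ := and_cl g3 g4
  obtain ⟨ξ, hξT, hξ⟩ := hT g
  have h1 := hg1 ξ (hg3 ξ (hg ξ hξ).1).1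
  have h2 := hg2 ξ (hg3 ξ (hg ξ hξ).1).2
  have h3 := (hg4 ξ (hg ξ hξ).2).1
  have h4 := cl_const _ _ (hg4 ξ (hg ξ hξ).2).2
  simp only [Function.comp_apply] at h2
  obtain ⟨hNc, hNG, hN⟩ := hDZ h1
  have hnB : ¬ Bd ι (π '' Iio ξ) := by
    intro hB
    obtain ⟨f, ⟨x, hx, hxf⟩, i, hi, hi'⟩ := hB a (fun h => ha (by
      rw [← hπr]; exact image_subset_range _ _ h))
    apply hi'
    rw [h2, hφ x f i hxf hi]
    exact h3.2 x hx
  obtain ⟨U, hNU, hUG, hUt, hUc⟩ := extend_zorn hNc hNG (hN.resolve_left hnB)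
  refine ⟨ξ, hξT, {a | cc a ∈ U}, hUc, ?_, fun i => (hUt i).trans (h2 i)⟩
  intro l hl n
  have := good_ev hUG (hNU ⟨x0, h4, hx0⟩) (l.map c0) (by
    intro f hf
    obtain ⟨b, hb, rfl⟩ := List.mem_map.1 hf
    exact hl b hb) n
  rw [hc] at this
  have h5 : (l.map c0).map d0 = l := by
    rw [List.map_map]; exact List.map_id l
  simp only [h5] at this
  exact this

theorem omega1_type {V : Set O2.{u}} (hV : ¬ V.Countable)
    (h : ∀ β ∈ V, (V ∩ Iio β).Countable) : Nonempty (O1.{u} ≃o V) := by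
  rcases InitialSeg.total (· < · : O1.{u} → O1.{u} → Prop) (· < · : V → V → Prop) with f | f
  · rcases f.principalSumRelIso with p | e
    · exfalso
      apply O1_uncountable.{u}
      have hc := h p.top.1 p.top.2
      have hinj : Function.Injective (fun x => ((p x : V) : O2.{u})) := fun a b hab =>
        p.injective (Subtype.ext hab)
      refine (hc.preimage_of_injOn (f := fun x => ((p x : V) : O2.{u})) hinj.injOn).mono ?_
      intro x _
      exact ⟨(p x).2, p.lt_top x⟩
    · exact ⟨OrderIso.ofRelIsoLT e⟩
  · rcases f.principalSumRelIso with p | e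
    · exfalso
      apply hV
      have hc := Iio_countable p.top
      rw [← Set.countable_coe_iff, ← Set.countable_univ_iff]
      refine (hc.preimage_of_injOn (f := p) p.injective.injOn).mono ?_
      intro x _
      exact p.lt_top x
    · exact ⟨OrderIso.ofRelIsoLT e.symm⟩

theorem Iio_O2_inj (β : O2.{u}) : ∃ j : O2.{u} → O1.{u}, InjOn j (Iio β) := by
  have h1 : #(Iio β) < aleph 2 := mk_Iio_toType_ord_lt β
  have h2 : #(Iio β) ≤ #(O1.{u}) := by
    rw [mk_O1, ← Order.lt_succ_iff, ← aleph_succ]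
    simpa [one_add_one_eq_two] using h1
  obtain ⟨f⟩ := h2
  classical
  refine ⟨fun x => if hx : x < β then f ⟨x, hx⟩ else Classical.arbitrary _, ?_⟩
  intro x hx y hy hxy
  simp only [mem_Iio] at hx hy
  simp only [hx, hy, dif_pos] at hxy
  exact congrArg Subtype.val (f.injective hxy)

/-- the set `Z_h` is projective stationary -/
theorem proj (hSRP : SRP.{u}) {ι : O1.{u} → O2.{u}} (hι : Function.Injective ι)
    {S : O1.{u} → Set O1.{u}} (hS : ∀ i, Stat (S i)) (h : O1.{u} → O1.{u})
    {T : Set O1.{u}} (hT : Stat T) {C : Set (Set O2.{u})} (hC : ClubOn (univ : Set O2.{u}) C) :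
    ∃ σ ∈ C, ∃ δ ∈ T, (∀ i, ι i ∈ σ ↔ i < δ) ∧ ∃ ξ ∈ S (h δ), Nonempty (σ ≃o Iio ξ) := by
  classical
  obtain ⟨GC, -, hGC⟩ := club_fun univ_nonempty hC
  choose j hj using Iio_O2_inj.{u}
  let a0 : O2.{u} := Classical.arbitrary _
  let G : List O2.{u} → ℕ → O2.{u} := fun l n =>
    match n with
    | 0 => ι (j (l.headD a0) (l.tail.headD a0))
    | n+1 => GC l n
  obtain ⟨δ, hδ, V, hVu, hVG, hVι⟩ := chang hSRP hι G hT
  have hVc : ∀ β ∈ V, (V ∩ Iio β).Countable := by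
    intro β hβ
    have hinj : InjOn (j β) (V ∩ Iio β) := (hj β).mono inter_subset_right
    refine MapsTo.countable_of_injOn (f := j β) (t := Iio δ) ?_ hinj (Iio_countable δ)
    intro x hx
    refine (hVι _).1 ?_
    have := hVG [β, x] (by simp [hβ, hx.1]) 0
    simpa [G] using this
  obtain ⟨ψ⟩ := omega1_type hVu hVc
  let ρ : O2.{u} → O1.{u} := fun x => if hx : x ∈ V then ψ.symm ⟨x, hx⟩ else Classical.arbitrary _
  obtain ⟨g1, hg1⟩ := list_cl (fun l n => ρ (GC (l.map (fun x => (ψ x : O2.{u}))) n))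
  obtain ⟨b, hb⟩ := exists_bound ((Iio_countable δ).image (fun i => ρ (ι i)))
  obtain ⟨g, hg⟩ := and_cl g1 (fun _ => b)
  obtain ⟨ξ, hξ, hcl⟩ := hS (h δ) g
  obtain ⟨hc1, hc2⟩ := hg ξ hcl
  have hbξ := cl_const _ _ hc2
  have hρ : ∀ x ∈ V, (ψ (ρ x) : O2.{u}) = x := by
    intro x hx
    simp [ρ, hx]
  let σ : Set O2.{u} := (fun x => (ψ x : O2.{u})) '' Iio ξ
  have hσV : σ ⊆ V := by rintro _ ⟨x, -, rfl⟩; exact (ψ x).2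
  refine ⟨σ, hGC σ (subset_univ _) ((Iio_countable ξ).image _) ?_, δ, hδ, ?_, ξ, hξ, ?_⟩
  · intro l hl n
    obtain ⟨l', hl', rfl⟩ := list_lift _ _ l hl
    have h1 : GC (l'.map (fun x => (ψ x : O2.{u}))) n ∈ V := by
      have := hVG (l'.map (fun x => (ψ x : O2.{u}))) (fun x hx => hσV (hl x hx)) (n+1)
      simpa [G] using this
    exact ⟨_, hg1 ξ hc1 l' hl' n, hρ _ h1⟩
  · intro i
    refine ⟨fun hi => (hVι i).1 (hσV hi), fun hi => ?_⟩
    exact ⟨ρ (ι i), (hb _ ⟨i, hi, rfl⟩).trans hbξ, hρ _ ((hVι i).2 hi)⟩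
  · have hsm : StrictMono (fun x : Iio ξ => (ψ x : O2.{u})) := fun x y hxy => by
      have : (x : O1.{u}) < y := hxy
      exact ψ.strictMono this
    have hr : range (fun x : Iio ξ => (ψ x : O2.{u})) = σ := by
      ext y; simp [σ]
    have := hsm.orderIso
    rw [hr] at this
    exact ⟨this.symm⟩

/-- main lemma from SRP -/
theorem mainlem (hSRP : SRP.{u}) {S : O1.{u} → Set O1.{u}} (hS : ∀ i, Stat (S i))
    (h : O1.{u} → O1.{u}) :
    ∃ (π : O1.{u} → O2.{u}) (g : O1.{u} → O1.{u}), Function.Injective π ∧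
      ∀ η, Cl g η → ∃ ξ ∈ S (h η), Nonempty ((π '' Iio η : Set O2.{u}) ≃o Iio ξ) := by
  obtain ⟨ι⟩ : #(O1.{u}) ≤ #(O2.{u}) := by
    rw [mk_O1, mk_O2]; exact aleph1_lt_aleph2.le
  let Z : Set (Set O2.{u}) := {σ | σ.Countable ∧ ∃ δ ξ, (∀ i, ι i ∈ σ ↔ i < δ) ∧ ξ ∈ S (h δ) ∧
    Nonempty (σ ≃o Iio ξ)}
  obtain ⟨Y, -, hιY, hYc, D, hDZ, hD⟩ := srp_type hSRP (L := O2.{u}) mk_O2.ge ι.injective Z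
    (fun σ hσ => hσ.1) (fun T hT C hC => by
      obtain ⟨σ, hσ, δ, hδ, h1, ξ, hξ, h2⟩ := proj hSRP ι.injective hS h hT hC
      exact ⟨σ, ⟨(hC.1 σ hσ).2, δ, ξ, h1, hξ, h2⟩, hσ, δ, hδ, h1⟩) (Classical.arbitrary _)
  rw [← mk_O1.{u}] at hYc
  obtain ⟨e⟩ := Cardinal.eq.1 hYc.symm
  let π : O1.{u} → O2.{u} := fun x => (e x : O2.{u})
  have hπ : Function.Injective π := Subtype.val_injective.comp e.injective
  have hr : range π = Y := by
    change range (Subtype.val ∘ e) = Y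
    rw [range_comp, e.surjective.range_eq]; simp
  obtain ⟨g1, hg1⟩ := filtration hD π hr
  obtain ⟨g2, hg2⟩ := trace_cl hπ ι.injective (by rw [hr]; exact hιY)
  obtain ⟨g, hg⟩ := and_cl g1 g2
  refine ⟨π, g, hπ, fun η hη => ?_⟩
  obtain ⟨hc1, hc2⟩ := hg η hη
  obtain ⟨-, δ, ξ, h1, h2, h3⟩ := hDZ (hg1 η hc1)
  have : δ = η := by
    apply Iio_injective
    ext i
    exact (h1 i).symm.trans (hg2 η hc2 i)
  subst this
  exact ⟨ξ, h2, h3⟩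


theorem iio_iso_le {ξ ξ' : O1.{u}} (e : Iio ξ' ≃o Iio ξ) : ξ' ≤ ξ := by
  by_contra hlt
  rw [not_le] at hlt
  let f : Iio ξ' → Iio ξ' := fun x => ⟨(e x : O1.{u}), (e x).2.trans hlt⟩
  have hf : StrictMono f := fun x y hxy => by
    have := e.strictMono hxy
    exact this
  have h1 := hf.le_apply (x := (⟨ξ, hlt⟩ : Iio ξ'))
  have h2 : (e ⟨ξ, hlt⟩ : O1.{u}) < ξ := (e ⟨ξ, hlt⟩).2
  exact absurd h2 (not_lt.2 h1)

theorem iio_iso {ξ ξ' : O1.{u}} (e : Iio ξ' ≃o Iio ξ) : ξ' = ξ :=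
  le_antisymm (iio_iso_le e) (iio_iso_le e.symm)

theorem img_iso {π f : O1.{u} → O2.{u}} (hπ : Function.Injective π) (hf : Function.Injective f)
    {η : O1.{u}} (h : ∀ x < η, ∀ y < η, (π x < π y ↔ f x < f y)) :
    Nonempty ((π '' Iio η : Set O2.{u}) ≃o (f '' Iio η : Set O2.{u})) := by
  let e1 := Equiv.Set.imageOfInjOn π (Iio η) hπ.injOn
  let e2 := Equiv.Set.imageOfInjOn f (Iio η) hf.injOn
  have key : ∀ x y : Iio η, e1 x < e1 y ↔ e2 x < e2 y := fun x y => h x x.2 y y.2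
  refine ⟨OrderIso.ofRelIsoLT ⟨e1.symm.trans e2, ?_⟩⟩
  intro a b
  obtain ⟨x, rfl⟩ := e1.surjective a
  obtain ⟨y, rfl⟩ := e1.surjective b
  simpa using (key x y).symm

/-- (a) -/
theorem two_pow_aleph1_le (hSRP : SRP.{u}) : (2 : Cardinal.{u}) ^ (aleph 1) ≤ aleph 2 := by
  classical
  obtain ⟨S, hS, hdisj⟩ := ulam.{u}
  choose π g hπ hg using fun h => mainlem hSRP hS h
  obtain ⟨p, q, hpq⟩ : ∃ p q : O1.{u}, p ≠ q := by
    obtain ⟨b, hb⟩ := exists_bound (countable_singleton (Classical.arbitrary O1.{u}))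
    exact ⟨_, b, (hb _ rfl).ne⟩
  let hh : Set O1.{u} → O1.{u} → O1.{u} := fun A η => if ∃ i ∈ A, η ∈ S i then p else q
  have hty : ∀ h, Ordinal.type (· < · : range (π h) → range (π h) → Prop) < (aleph 2).ord := by
    intro h
    rw [lt_ord, Ordinal.card_type, mk_range_eq _ (hπ h), mk_O1]
    exact aleph1_lt_aleph2
  let F : Set O1.{u} → O2.{u} := fun A => Ordinal.ToType.mk
    ⟨Ordinal.type (· < · : range (π (hh A)) → range (π (hh A)) → Prop), hty (hh A)⟩
  have hF : Function.Injective F := by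
    intro A B hAB
    have h1 : Ordinal.type (· < · : range (π (hh A)) → range (π (hh A)) → Prop) =
        Ordinal.type (· < · : range (π (hh B)) → range (π (hh B)) → Prop) := by
      have := Ordinal.ToType.mk.injective hAB
      exact congrArg Subtype.val this
    obtain ⟨e⟩ := Ordinal.type_eq.1 h1
    let f : O1.{u} → O2.{u} := fun x => (e ⟨π (hh A) x, x, rfl⟩ : O2.{u})
    have hf : Function.Injective f := by
      intro x y hxy
      have := e.injective (Subtype.ext hxy)
      exact hπ _ (congrArg Subtype.val this)
    have hfr : range f ⊆ range (π (hh B)) := by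
      rintro _ ⟨x, rfl⟩; exact (e _).2
    have hfr' : range (π (hh B)) ⊆ range f := by
      rintro _ ⟨x, rfl⟩
      obtain ⟨⟨_, y, rfl⟩, hy⟩ := e.surjective ⟨π (hh B) x, x, rfl⟩
      exact ⟨y, congrArg Subtype.val hy⟩
    obtain ⟨g3, hg3⟩ := trace_cl (hπ (hh B)) hf hfr
    obtain ⟨g4, hg4⟩ := and_cl (g (hh A)) (g (hh B))
    obtain ⟨g5, hg5⟩ := and_cl g4 g3
    have hagree : ∀ η, Cl g5 η → hh A η = hh B η := by
      intro η hη
      obtain ⟨hη4, hη3⟩ := hg5 η hη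
      obtain ⟨hηA, hηB⟩ := hg4 η hη4
      obtain ⟨ξ, hξ, ⟨i1⟩⟩ := hg _ η hηA
      obtain ⟨ξ', hξ', ⟨i2⟩⟩ := hg _ η hηB
      have him : f '' Iio η = π (hh B) '' Iio η := by
        ext y
        constructor
        · rintro ⟨x, hx, rfl⟩; exact (hg3 η hη3 x).2 hx
        · rintro hy
          obtain ⟨x, rfl⟩ := hfr' (image_subset_range _ _ hy)
          exact ⟨x, (hg3 η hη3 x).1 hy, rfl⟩
      obtain ⟨i3⟩ := img_iso (η := η) (hπ (hh A)) hf (fun x _ y _ => by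
        have := e.map_rel_iff (a := ⟨π (hh A) x, x, rfl⟩) (b := ⟨π (hh A) y, y, rfl⟩)
        exact this.symm)
      rw [him] at i3
      have := iio_iso ((i1.symm.trans i3).trans i2)
      subst this
      exact hdisj _ _ _ hξ hξ'
    ext i
    obtain ⟨η, hη, hcl⟩ := hS i g5
    have := hagree η hcl
    have hmem : ∀ A : Set O1.{u}, (∃ k ∈ A, η ∈ S k) ↔ i ∈ A := fun A =>
      ⟨fun ⟨k, hk, hk'⟩ => hdisj _ _ _ hη hk' ▸ hk, fun hi => ⟨i, hi, hη⟩⟩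
    simp only [hh, hmem] at this
    by_cases hA : i ∈ A <;> by_cases hB : i ∈ B <;> simp [hA, hB] at this ⊢
    · exact hpq this
    · exact hpq this.symm
  have := mk_le_of_injective hF
  rwa [mk_set, mk_O1, mk_O2] at this

/-- (b) data -/
theorem coding (hSRP : SRP.{u}) :
    ∃ (R : (O1.{u} → O1.{u}) → O1.{u} → O1.{u} → Prop)
      (g : (O1.{u} → O1.{u}) → O1.{u} → O1.{u}), ∀ h h' η, Cl (g h) η → Cl (g h') η →
      (∀ x < η, ∀ y < η, (R h x y ↔ R h' x y)) → h η = h' η := by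
  obtain ⟨S, hS, hdisj⟩ := ulam.{u}
  choose π g hπ hg using fun h => mainlem hSRP hS h
  refine ⟨fun h x y => π h x < π h y, g, fun h h' η hA hB hR => ?_⟩
  obtain ⟨ξ, hξ, ⟨i1⟩⟩ := hg _ η hA
  obtain ⟨ξ', hξ', ⟨i2⟩⟩ := hg _ η hB
  obtain ⟨i3⟩ := img_iso (hπ h) (hπ h') hR
  have := iio_iso ((i1.symm.trans i3).trans i2)
  subst this
  exact hdisj _ _ _ hξ hξ'

section coding
variable (R : (O1.{u} → O1.{u}) → O1.{u} → O1.{u} → Prop)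

/-- agreement below `η` -/
def Agree (h h' : O1.{u} → O1.{u}) (η : O1.{u}) : Prop :=
  (∀ x < η, h x = h' x) ∧ ∀ x < η, ∀ y < η, (R h x y ↔ R h' x y)

/-- the codes of initial segments -/
def data (h : O1.{u} → O1.{u}) (ν : O1.{u}) : Set ((O1.{u} × O1.{u}) ⊕ (O1.{u} × O1.{u})) :=
  {z | (∃ x < ν, z = Sum.inl (x, h x)) ∨ ∃ x < ν, ∃ y < ν, R h x y ∧ z = Sum.inr (x, y)}

theorem data_countable (h : O1.{u} → O1.{u}) (ν : O1.{u}) : (data R h ν).Countable := by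
  have h1 := (Iio_countable ν).image (fun x => (Sum.inl (x, h x) :
    (O1.{u} × O1.{u}) ⊕ (O1.{u} × O1.{u})))
  have h2 := ((Iio_countable ν).prod (Iio_countable ν)).image (fun x => (Sum.inr x :
    (O1.{u} × O1.{u}) ⊕ (O1.{u} × O1.{u})))
  refine (h1.union h2).mono ?_
  rintro z (⟨x, hx, rfl⟩ | ⟨x, hx, y, hy, -, rfl⟩)
  · exact Or.inl ⟨x, hx, rfl⟩
  · exact Or.inr ⟨(x, y), ⟨hx, hy⟩, rfl⟩

theorem data_inl (h : O1.{u} → O1.{u}) (ν x y : O1.{u}) :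
    Sum.inl (x, y) ∈ data R h ν ↔ x < ν ∧ y = h x := by
  simp only [data, mem_setOf_eq, Sum.inl.injEq, Prod.mk.injEq]
  constructor
  · rintro (⟨a, ha, rfl, rfl⟩ | ⟨a, ha, b, hb, -, h⟩)
    · exact ⟨ha, rfl⟩
    · cases h
  · rintro ⟨h1, rfl⟩
    exact Or.inl ⟨x, h1, rfl, rfl⟩

theorem data_inr (h : O1.{u} → O1.{u}) (ν x y : O1.{u}) :
    Sum.inr (x, y) ∈ data R h ν ↔ x < ν ∧ y < ν ∧ R h x y := by
  simp only [data, mem_setOf_eq, Sum.inr.injEq, Prod.mk.injEq]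
  constructor
  · rintro (⟨a, ha, h⟩ | ⟨a, ha, b, hb, h, rfl, rfl⟩)
    · cases h
    · exact ⟨ha, hb, h⟩
  · rintro ⟨h1, h2, h3⟩
    exact Or.inr ⟨x, h1, y, h2, h3, rfl, rfl⟩

theorem data_eq {h h' : O1.{u} → O1.{u}} {ν ν' : O1.{u}} (e : data R h ν = data R h' ν') :
    ν = ν' ∧ Agree R h h' ν := by
  have hν : ν = ν' := by
    apply Iio_injective
    ext x
    constructor
    · intro hx
      have := (data_inl R h ν x (h x)).2 ⟨hx, rfl⟩
      rw [e, data_inl] at this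
      exact this.1
    · intro hx
      have := (data_inl R h' ν' x (h' x)).2 ⟨hx, rfl⟩
      rw [← e, data_inl] at this
      exact this.1
  subst hν
  refine ⟨rfl, fun x hx => ?_, fun x hx y hy => ?_⟩
  · have := (data_inl R h ν x (h x)).2 ⟨hx, rfl⟩
    rw [e, data_inl] at this
    exact this.2
  · have h1 := data_inr R h ν x y
    rw [e, data_inr] at h1
    simp only [hx, hy, true_and] at h1
    exact h1.symm

theorem exists_nu (G : O1.{u} → O1.{u}) (η : O1.{u}) :
    ∃ ν, (η < ν ∧ Cl G ν) ∧ ∀ μ, η < μ → Cl G μ → ν ≤ μ := by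
  obtain ⟨m, hm, hmin⟩ := WellFounded.has_min (wellFounded_lt (α := O1.{u}))
    {ν | η < ν ∧ Cl G ν} (cl_unbounded' G η)
  exact ⟨m, hm, fun μ h1 h2 => not_lt.1 (hmin μ ⟨h1, h2⟩)⟩

/-- least closure point above `η` -/
noncomputable def nu (G : O1.{u} → O1.{u}) (η : O1.{u}) : O1.{u} := (exists_nu G η).choose

theorem lt_nu (G : O1.{u} → O1.{u}) (η : O1.{u}) : η < nu G η := (exists_nu G η).choose_spec.1.1
theorem nu_cl (G : O1.{u} → O1.{u}) (η : O1.{u}) : Cl G (nu G η) := (exists_nu G η).choose_spec.1.2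
theorem nu_le (G : O1.{u} → O1.{u}) (η μ : O1.{u}) (h : η < μ) (h' : Cl G μ) : nu G η ≤ μ :=
  (exists_nu G η).choose_spec.2 μ h h'

variable (g : (O1.{u} → O1.{u}) → O1.{u} → O1.{u})
  (cod : Set ((O1.{u} × O1.{u}) ⊕ (O1.{u} × O1.{u})) → O1.{u})

/-- next function -/
noncomputable def nexth (h G : O1.{u} → O1.{u}) : O1.{u} → O1.{u} :=
  fun η => cod (data R h (nu G η))

/-- the recursive construction -/
noncomputable def sq (f : O1.{u} → O1.{u}) : ℕ → (O1.{u} → O1.{u}) × (O1.{u} → O1.{u})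
  | 0 => (f, g f)
  | n+1 => (nexth R cod (sq f n).1 (sq f n).2,
      (and_cl (sq f n).2 (g (nexth R cod (sq f n).1 (sq f n).2))).choose)

theorem sq_cl_succ (f : O1.{u} → O1.{u}) (n : ℕ) (ξ : O1.{u}) (h : Cl (sq R g cod f (n+1)).2 ξ) :
    Cl (sq R g cod f n).2 ξ ∧ Cl (g (sq R g cod f (n+1)).1) ξ :=
  (and_cl (sq R g cod f n).2 (g (nexth R cod (sq R g cod f n).1 (sq R g cod f n).2))).choose_spec
    ξ h

theorem sq_cl_g (f : O1.{u} → O1.{u}) (n : ℕ) (ξ : O1.{u}) (h : Cl (sq R g cod f n).2 ξ) :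
    Cl (g (sq R g cod f n).1) ξ := by
  cases n with
  | zero => exact h
  | succ n => exact (sq_cl_succ R g cod f n ξ h).2

theorem sq_cl_le (f : O1.{u} → O1.{u}) {k n : ℕ} (hkn : k ≤ n) (ξ : O1.{u})
    (h : Cl (sq R g cod f n).2 ξ) : Cl (sq R g cod f k).2 ξ := by
  induction n, hkn using Nat.le_induction with
  | base => exact h
  | succ n hn ih => exact ih (sq_cl_succ R g cod f n ξ h).1

theorem sq_nu_le (f : O1.{u} → O1.{u}) {k n : ℕ} (hkn : k ≤ n) (η : O1.{u}) :
    nu (sq R g cod f k).2 η ≤ nu (sq R g cod f n).2 η :=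
  nu_le _ _ _ (lt_nu _ _) (sq_cl_le R g cod f hkn _ (nu_cl _ _))

variable {R g cod}

theorem sq_step (hcod : ∀ s t, s.Countable → t.Countable → cod s = cod t → s = t)
    {f f' : O1.{u} → O1.{u}} {n : ℕ} {η : O1.{u}}
    (h : (sq R g cod f (n+1)).1 η = (sq R g cod f' (n+1)).1 η) :
    nu (sq R g cod f n).2 η = nu (sq R g cod f' n).2 η ∧
      Agree R (sq R g cod f n).1 (sq R g cod f' n).1 (nu (sq R g cod f n).2 η) := by
  have h1 : cod _ = cod _ := h
  exact data_eq R (hcod _ _ (data_countable R _ _) (data_countable R _ _) h1)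

theorem sq_agree (hcod : ∀ s t, s.Countable → t.Countable → cod s = cod t → s = t)
    {f f' : O1.{u} → O1.{u}} {k n : ℕ} (hkn : k ≤ n) {μ : O1.{u}}
    (h : Agree R (sq R g cod f n).1 (sq R g cod f' n).1 μ) :
    Agree R (sq R g cod f k).1 (sq R g cod f' k).1 μ := by
  induction n, hkn using Nat.le_induction with
  | base => exact h
  | succ n hn ih =>
    apply ih
    constructor
    · intro x hx
      have := (sq_step hcod (h.1 x hx)).2
      exact this.1 x (lt_nu _ _)
    · intro x hx y hy
      have := (sq_step hcod (h.1 _ (max_lt hx hy))).2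
      exact this.2 x ((le_max_left _ _).trans_lt (lt_nu _ _)) y
        ((le_max_right _ _).trans_lt (lt_nu _ _))

theorem sq_inj (hR : ∀ h h' η, Cl (g h) η → Cl (g h') η →
      (∀ x < η, ∀ y < η, (R h x y ↔ R h' x y)) → h η = h' η)
    (hcod : ∀ s t, s.Countable → t.Countable → cod s = cod t → s = t)
    {f f' : O1.{u} → O1.{u}} {η₀ : O1.{u}}
    (h₀ : ∀ n, Cl (sq R g cod f n).2 η₀ ∧ Cl (sq R g cod f' n).2 η₀ ∧
      Agree R (sq R g cod f n).1 (sq R g cod f' n).1 η₀) : f = f' := by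
  let Γ : Set O1.{u} := {η | ∀ n, Cl (sq R g cod f n).2 η ∧ Cl (sq R g cod f' n).2 η ∧
      Agree R (sq R g cod f n).1 (sq R g cod f' n).1 η}
  have hnext : ∀ η ∈ Γ, ∃ ν ∈ Γ, η < ν := by
    intro η hη
    have hv : ∀ n, (sq R g cod f n).1 η = (sq R g cod f' n).1 η := fun n =>
      hR _ _ η (sq_cl_g R g cod f n η (hη n).1) (sq_cl_g R g cod f' n η (hη n).2.1) (hη n).2.2.2
    have hst := fun n => sq_step hcod (hv (n+1))
    let a : ℕ → O1.{u} := fun n => nu (sq R g cod f n).2 η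
    have ha' : ∀ n, a n = nu (sq R g cod f' n).2 η := fun n => (hst n).1
    have hmono : ∀ k n, k ≤ n → a k ≤ a n := fun k n hkn => sq_nu_le R g cod f hkn η
    obtain ⟨b, hb⟩ := exists_bound (countable_range a)
    obtain ⟨ν, hν⟩ := exists_lub (s := range a) ⟨b, fun x hx => (hb x hx).le⟩
    have hην : η < ν := (lt_nu _ η).trans_le (hν.1 ⟨0, rfl⟩)
    have hx : ∀ x < ν, ∀ k, ∃ n, k ≤ n ∧ x < a n := by
      intro x hx k
      by_contra hc
      push Not at hc
      have : ν ≤ x := hν.2 (by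
        rintro _ ⟨n, rfl⟩
        exact (hmono n (max k n) (le_max_right _ _)).trans (hc _ (le_max_left _ _)))
      exact absurd hx (not_lt.2 this)
    refine ⟨ν, fun k => ⟨⟨⟨η, hην⟩, fun x hxν => ?_⟩, ⟨⟨η, hην⟩, fun x hxν => ?_⟩,
      fun x hxν => ?_, fun x hxν y hyν => ?_⟩, hην⟩
    · obtain ⟨n, hkn, hxn⟩ := hx x hxν k
      exact ((sq_cl_le R g cod f hkn (a n) (nu_cl _ _)).2 x hxn).trans_le (hν.1 ⟨n, rfl⟩)
    · obtain ⟨n, hkn, hxn⟩ := hx x hxν k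
      exact ((sq_cl_le R g cod f' hkn (a n) (by rw [ha']; exact nu_cl _ _)).2 x hxn).trans_le
        (hν.1 ⟨n, rfl⟩)
    · obtain ⟨n, hkn, hxn⟩ := hx x hxν k
      exact (sq_agree hcod hkn (hst n).2).1 x hxn
    · obtain ⟨n, hkn, hxn⟩ := hx _ (max_lt hxν hyν) k
      exact (sq_agree hcod hkn (hst n).2).2 x ((le_max_left _ _).trans_lt hxn) y
        ((le_max_right _ _).trans_lt hxn)
  have hunb : ¬ BddAbove Γ := by
    intro hbdd
    obtain ⟨m, hm⟩ := exists_lub hbdd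
    have hη₀ : η₀ ∈ Γ := h₀
    have hlim : ∀ x < m, ∃ y ∈ Γ, x < y := by
      intro x hx
      by_contra hc
      push Not at hc
      exact absurd hx (not_lt.2 (hm.2 hc))
    have h0m : ∃ x, x < m := by
      obtain ⟨ν, hν, hlt⟩ := hnext _ hη₀
      exact ⟨η₀, hlt.trans_le (hm.1 hν)⟩
    have hmΓ : m ∈ Γ := by
      intro n
      refine ⟨⟨h0m, fun x hx => ?_⟩, ⟨h0m, fun x hx => ?_⟩, fun x hx => ?_, fun x hx y hy => ?_⟩
      · obtain ⟨y, hy, hxy⟩ := hlim x hx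
        exact ((hy n).1.2 x hxy).trans_le (hm.1 hy)
      · obtain ⟨y, hy, hxy⟩ := hlim x hx
        exact ((hy n).2.1.2 x hxy).trans_le (hm.1 hy)
      · obtain ⟨y, hy, hxy⟩ := hlim x hx
        exact (hy n).2.2.1 x hxy
      · obtain ⟨z, hz, hxz⟩ := hlim _ (max_lt hx hy)
        exact (hz n).2.2.2 x ((le_max_left _ _).trans_lt hxz) y ((le_max_right _ _).trans_lt hxz)
    obtain ⟨ν, hν, hlt⟩ := hnext _ hmΓ
    exact absurd hlt (not_lt.2 (hm.1 hν))
  funext x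
  have : ∃ y ∈ Γ, x < y := by
    by_contra hc
    push Not at hc
    exact hunb ⟨x, hc⟩
  obtain ⟨y, hy, hxy⟩ := this
  exact (hy 0).2.2.1 x hxy

end coding

/-- (b) -/
theorem aleph2_le_continuum (hSRP : SRP.{u}) : aleph 2 ≤ (2 : Cardinal.{u}) ^ ℵ₀ := by
  classical
  by_contra hcon
  rw [not_le] at hcon
  have hCH : (2 : Cardinal.{u}) ^ ℵ₀ ≤ aleph 1 := by
    rw [← Order.lt_succ_iff, ← aleph_succ]
    simpa [one_add_one_eq_two] using hcon
  have h1 : aleph.{u} 1 ≤ 2 ^ ℵ₀ := aleph_one_le_continuum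
  have hpow : aleph.{u} 1 ^ ℵ₀ ≤ aleph 1 := by
    calc aleph.{u} 1 ^ ℵ₀ ≤ (2 ^ ℵ₀) ^ ℵ₀ := power_le_power_right h1
      _ = 2 ^ ℵ₀ := by rw [← power_mul, aleph0_mul_aleph0]
      _ ≤ aleph 1 := hCH
  obtain ⟨R, g, hR⟩ := coding hSRP
  obtain ⟨cod, hcod⟩ : ∃ cod : Set ((O1.{u} × O1.{u}) ⊕ (O1.{u} × O1.{u})) → O1.{u},
      ∀ s t, s.Countable → t.Countable → cod s = cod t → s = t := by
    have hX : #((O1.{u} × O1.{u}) ⊕ (O1.{u} × O1.{u})) = aleph 1 := by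
      simp [mk_O1, mul_eq_self (aleph0_le_aleph 1), add_eq_self (aleph0_le_aleph 1)]
    have hle : #{t : Set ((O1.{u} × O1.{u}) ⊕ (O1.{u} × O1.{u})) // #t ≤ ℵ₀} ≤ #(O1.{u}) := by
      refine (mk_bounded_set_le _ _).trans ?_
      rw [hX, max_eq_left (aleph0_le_aleph 1), mk_O1]
      exact hpow
    obtain ⟨c⟩ := hle
    refine ⟨fun s => if hs : #s ≤ ℵ₀ then c ⟨s, hs⟩ else Classical.arbitrary _, ?_⟩
    intro s t hs ht hst
    have hs' := Cardinal.mk_le_aleph0_iff.2 hs.to_subtype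
    have ht' := Cardinal.mk_le_aleph0_iff.2 ht.to_subtype
    simp only [hs', ht', dif_pos] at hst
    exact congrArg Subtype.val (c.injective hst)
  have hη : ∀ f, ∃ η, ∀ n, Cl (sq R g cod f n).2 η := by
    intro f
    obtain ⟨k, hk⟩ := countable_cl (fun n => (sq R g cod f n).2)
    obtain ⟨ξ, hξ⟩ := cl_unbounded k
    exact ⟨ξ, hk ξ hξ⟩
  choose η hη using hη
  have hinj : Function.Injective (fun (f : O1.{u} → O1.{u}) (n : ULift.{u} ℕ) =>
      cod (data R (sq R g cod f n.down).1 (η f))) := by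
    intro f f' hff
    have key := fun n : ℕ => data_eq R (hcod _ _ (data_countable R _ _) (data_countable R _ _)
      (congrFun hff ⟨n⟩))
    have he : η f = η f' := (key 0).1
    exact sq_inj hR hcod (η₀ := η f) fun n => ⟨hη f n, he ▸ hη f' n, (key n).2⟩
  have h2 := mk_le_of_injective hinj
  rw [← power_def, ← power_def, mk_O1] at h2
  have h3 : #(ULift.{u} ℕ) = ℵ₀ := by simp
  rw [h3] at h2
  have h4 : (2 : Cardinal.{u}) ^ aleph 1 ≤ aleph 1 ^ aleph 1 :=
    power_le_power_right ((nat_lt_aleph0 2).le.trans (aleph0_le_aleph 1))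
  exact absurd (cantor (aleph.{u} 1)) (not_lt.2 (h4.trans (h2.trans hpow)))

end SRPaux

/-- SRP implies `2^{ℵ₀} = 2^{ℵ₁} = ℵ₂`. -/
theorem srp_implies_continuum_aleph_two (hSRP : SRP.{u}) :
    (2 : Cardinal.{u}) ^ (Cardinal.aleph 0) = Cardinal.aleph 2 ∧
    (2 : Cardinal.{u}) ^ (Cardinal.aleph 1) = Cardinal.aleph 2 := by
  have h1 := SRPaux.two_pow_aleph1_le hSRP
  have h2 := SRPaux.aleph2_le_continuum hSRP
  rw [← Cardinal.aleph_zero] at h2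
  have h3 : (2 : Cardinal.{u}) ^ (Cardinal.aleph 0) ≤ 2 ^ (Cardinal.aleph 1) :=
    Cardinal.power_le_power_left (by norm_num) (Cardinal.aleph_le_aleph.2 (by simp))
  exact ⟨le_antisymm (h3.trans h1) h2, le_antisymm h1 (h2.trans h3)⟩
end

section
/- Assume the Strong Reflection Principle (SRP). Then Axiom R holds: if X is a set, Σ ⊆ [X]^{<ω₁} is stationary, and Γ ⊆ [X]^{<ω₂} is tight and unbounded (cofinal in [X]^{<ω₂}), then there is Y ∈ Γ such that 𝒫(Y) ∩ Σ is stationary in [Y]^{<ω₁}. -/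
universe u

/-- `Γ ⊆ [X]^{<ω₂}` is tight: whenever `{f α : α < δ}` is an increasing sequence from `Γ`
with `ω < cf(δ) < ω₂`, its union is in `Γ`. -/
def Tight {X : Type u} (Γ : Set (Set X)) : Prop :=
  ∀ (δ : Ordinal.{u}) (f : Ordinal.{u} → Set X),
    (∀ α < δ, f α ∈ Γ) →
    (∀ α β : Ordinal.{u}, α ≤ β → β < δ → f α ⊆ f β) →
    Cardinal.aleph 0 < δ.cof → δ.cof < Cardinal.aleph 2 →
    (⋃ α ∈ Set.Iio δ, f α) ∈ Γ

/-- Axiom R: if `Σ ⊆ [X]^{<ω₁}` is stationary and `Γ ⊆ [X]^{<ω₂}` is tight and unbounded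
(cofinal in `[X]^{<ω₂}`), then there is `Y ∈ Γ` such that `𝒫(Y) ∩ Σ` is stationary
in `[Y]^{<ω₁}`. -/
def AxiomR : Prop :=
  ∀ (X : Type u) (Sig Γ : Set (Set X)),
    (∀ s ∈ Sig, s.Countable) →
    StationaryOn (Set.univ : Set X) Sig →
    (∀ c ∈ Γ, Cardinal.mk c ≤ Cardinal.aleph 1) →
    Tight Γ →
    (∀ s : Set X, Cardinal.mk s ≤ Cardinal.aleph 1 → ∃ c ∈ Γ, s ⊆ c) →
    ∃ Y ∈ Γ, StationaryOn Y {s ∈ Sig | s ⊆ Y}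

universe v

open Cardinal Set

section closure
variable {α : Type v}

/-- Closed under a countable family of finitary functions. -/
def Cls (F : ℕ → List α → α) (M : Set α) : Prop :=
  ∀ n l, (∀ x ∈ l, x ∈ M) → F n l ∈ M

def clStep (F : ℕ → List α → α) (S : Set α) : Set α :=
  S ∪ Set.range (fun p : ℕ × List S => F p.1 (p.2.map Subtype.val))

def cl (F : ℕ → List α → α) (S : Set α) : Set α := ⋃ n, (clStep F)^[n] S

theorem mem_clStep {F : ℕ → List α → α} {S : Set α} {n l} (h : ∀ x ∈ l, x ∈ S) :
    F n l ∈ clStep F S := by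
  right
  refine ⟨(n, l.attach.map (fun x => ⟨x.1, h _ x.2⟩)), ?_⟩
  simp [List.map_map, Function.comp_def]

theorem clStep_sub {F : ℕ → List α → α} {S M : Set α} (h : S ⊆ M) (hM : Cls F M) :
    clStep F S ⊆ M := by
  rintro x (hx | ⟨p, rfl⟩)
  · exact h hx
  · apply hM
    intro x hx
    simp only [List.mem_map] at hx
    obtain ⟨y, -, rfl⟩ := hx
    exact h y.2

theorem subset_cl (F : ℕ → List α → α) (S : Set α) : S ⊆ cl F S :=
  fun x hx => mem_iUnion.2 ⟨0, hx⟩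

theorem cl_min {F : ℕ → List α → α} {S M : Set α} (h : S ⊆ M) (hM : Cls F M) : cl F S ⊆ M := by
  refine iUnion_subset fun n => ?_
  induction n with
  | zero => exact h
  | succ n ih => rw [Function.iterate_succ_apply']; exact clStep_sub ih hM

theorem clIter_mono (F : ℕ → List α → α) (S : Set α) : Monotone (fun n => (clStep F)^[n] S) := by
  refine monotone_nat_of_le_succ fun n => ?_
  simp only [Function.iterate_succ_apply']
  exact subset_union_left

/-- Lists in an increasing union. -/
theorem list_in_directed {ι : Type*} [LinearOrder ι] [Nonempty ι] {s : ι → Set α} (hs : Monotone s)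
    (l : List α) (h : ∀ x ∈ l, ∃ n, x ∈ s n) : ∃ n, ∀ x ∈ l, x ∈ s n := by
  induction l with
  | nil => exact ⟨Classical.arbitrary _, by simp⟩
  | cons a l ih =>
    obtain ⟨n, hn⟩ := ih (fun x hx => h x (by simp [hx]))
    obtain ⟨m, hm⟩ := h a (by simp)
    refine ⟨max m n, ?_⟩
    intro x hx
    rcases List.mem_cons.1 hx with rfl | hx
    · exact hs (le_max_left _ _) hm
    · exact hs (le_max_right _ _) (hn x hx)

theorem cl_cls (F : ℕ → List α → α) (S : Set α) : Cls F (cl F S) := by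
  intro n l hl
  obtain ⟨m, hm⟩ := list_in_directed (clIter_mono F S) l (fun x hx => mem_iUnion.1 (hl x hx))
  refine mem_iUnion.2 ⟨m+1, ?_⟩
  rw [Function.iterate_succ_apply']
  exact mem_clStep hm

theorem cl_mono {F : ℕ → List α → α} {S T : Set α} (h : S ⊆ T) : cl F S ⊆ cl F T :=
  cl_min (h.trans (subset_cl F T)) (cl_cls F T)

theorem cls_iUnion {ι : Type*} [LinearOrder ι] [Nonempty ι] {F : ℕ → List α → α} {s : ι → Set α}
    (hs : Monotone s) (h : ∀ i, Cls F (s i)) : Cls F (⋃ i, s i) := by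
  intro n l hl
  obtain ⟨m, hm⟩ := list_in_directed hs l (fun x hx => mem_iUnion.1 (hl x hx))
  exact mem_iUnion.2 ⟨m, h m n l hm⟩

theorem mk_cl_le (F : ℕ → List α → α) (S : Set α) : #(cl F S) ≤ max ℵ₀ #S := by
  have key : ∀ n, #((clStep F)^[n] S : Set α) ≤ max ℵ₀ #S := by
    intro n
    induction n with
    | zero => exact le_max_right _ _
    | succ n ih =>
      rw [Function.iterate_succ_apply']
      refine (mk_union_le _ _).trans (add_le_of_le (le_max_left _ _) ih ?_)
      refine mk_range_le.trans ?_
      rw [mk_prod]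
      refine mul_le_of_le (le_max_left _ _) (by simp) ?_
      rw [Cardinal.lift_id']
      · refine (mk_list_le_max _).trans (max_le (le_max_left _ _) ih)
  unfold cl
  have := mk_iUnion_le_lift (fun n => ((clStep F)^[n] S : Set α))
  simp only [Cardinal.lift_uzero, mk_nat, lift_aleph0] at this
  refine this.trans (mul_le_of_le (le_max_left _ _) (le_max_left _ _) ?_)
  exact ciSup_le' key

theorem cl_countable {F : ℕ → List α → α} {S : Set α} (hS : S.Countable) : (cl F S).Countable := by
  rw [← le_aleph0_iff_set_countable] at *
  exact (mk_cl_le F S).trans (max_le le_rfl hS)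

theorem cl_chain {ι : Type*} [LinearOrder ι] [Nonempty ι] {F : ℕ → List α → α} {s : ι → Set α}
    (hs : Monotone s) : cl F (⋃ i, s i) = ⋃ i, cl F (s i) := by
  apply Subset.antisymm
  · refine cl_min (iUnion_mono fun i => subset_cl F _) ?_
    exact cls_iUnion (fun i j h => cl_mono (hs h)) (fun i => cl_cls _ _)
  · exact iUnion_subset fun i => cl_mono (subset_iUnion _ i)

/-- Combining countably many families. -/
def combN (F : ℕ → ℕ → List α → α) : ℕ → List α → α := fun n => F n.unpair.1 n.unpair.2

theorem cls_combN {F : ℕ → ℕ → List α → α} {M : Set α} : Cls (combN F) M ↔ ∀ i, Cls (F i) M := by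
  constructor
  · intro h i n l hl
    simpa [combN] using h (Nat.pair i n) l hl
  · intro h n l hl
    exact h _ _ l hl

def comb2 (F G : ℕ → List α → α) : ℕ → List α → α := combN (fun i => if i = 0 then F else G)

theorem cls_comb2 {F G : ℕ → List α → α} {M : Set α} : Cls (comb2 F G) M ↔ Cls F M ∧ Cls G M := by
  rw [comb2, cls_combN]
  constructor
  · intro h; exact ⟨by simpa using h 0, by simpa using h 1⟩
  · rintro ⟨h1, h2⟩ i
    by_cases hi : i = 0 <;> simp [hi, h1, h2]

end closure

section stat

/-- Regular uncountable initial ordinals. -/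
def RegO (ν : Ordinal.{u}) : Prop := ∃ c : Cardinal.{u}, c.IsRegular ∧ ℵ₀ < c ∧ ν = c.ord

theorem RegO.limit {ν : Ordinal.{u}} (h : RegO ν) : Order.IsSuccLimit ν := by
  obtain ⟨c, h1, h2, rfl⟩ := h
  exact Cardinal.isSuccLimit_ord h2.le

theorem RegO.bound {ν : Ordinal.{u}} (h : RegO ν) {S : Set Ordinal.{u}} (hS : S ⊆ Iio ν)
    (hc : #S < #(Iio ν)) : ∃ b < ν, ∀ x ∈ S, x < b := by
  obtain ⟨c, h1, h2, rfl⟩ := h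
  rw [mk_Iio_ordinal, card_ord] at hc
  have : Small.{u} S := by
    rw [Cardinal.small_iff_lift_mk_lt_univ]
    have h3 := hc.trans (Cardinal.lift_lt_univ c)
    simpa using h3
  refine ⟨sSup ((fun x => x + 1) '' S), ?_, ?_⟩
  · apply Ordinal.sSup_add_one_lt_of_lt_cof _ hS
    rw [← Ordinal.lift_cof, h1.cof_ord]
    exact hc
  · intro x hx
    have : x + 1 ≤ sSup ((fun x => x + 1) '' S) := 
      le_csSup (Ordinal.bddAbove_of_small) ⟨x, hx, rfl⟩
    exact lt_of_lt_of_le (by simp) this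

theorem RegO.aleph0_lt {ν : Ordinal.{u}} (h : RegO ν) : ℵ₀ < #(Iio ν) := by
  obtain ⟨c, h1, h2, rfl⟩ := h
  rw [mk_Iio_ordinal, card_ord]
  simpa using h2

theorem RegO.mk_lt {ν γ : Ordinal.{u}} (h : RegO ν) (hγ : γ < ν) : #(Iio γ) < #(Iio ν) := by
  obtain ⟨c, h1, h2, rfl⟩ := h
  rw [mk_Iio_ordinal, mk_Iio_ordinal, card_ord, Cardinal.lift_lt]
  exact lt_ord.1 hγ

theorem RegO.bound_countable {ν : Ordinal.{u}} (h : RegO ν) {S : Set Ordinal.{u}} (hS : S ⊆ Iio ν)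
    (hc : S.Countable) : ∃ b < ν, ∀ x ∈ S, x < b :=
  h.bound hS ((le_aleph0_iff_set_countable.2 hc).trans_lt h.aleph0_lt)

theorem RegO.pos {ν : Ordinal.{u}} (h : RegO ν) : 0 < ν := by
  obtain ⟨b, hb, -⟩ := h.bound_countable (S := ∅) (by simp) (by simp)
  exact lt_of_le_of_lt (zero_le) hb

theorem RegO.succ_lt {ν x : Ordinal.{u}} (h : RegO ν) (hx : x < ν) : x + 1 < ν :=
  h.limit.succ_lt hx

theorem RegO.nat_lt {ν : Ordinal.{u}} (h : RegO ν) (n : ℕ) : (n : Ordinal.{u}) < ν := by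
  induction n with
  | zero => exact_mod_cast h.pos
  | succ n ih => push_cast; exact h.succ_lt ih

/-- sup of an increasing omega sequence -/
theorem RegO.sup_seq {ν : Ordinal.{u}} (h : RegO ν) {g : ℕ → Ordinal.{u}} (hg : ∀ n, g n < ν)
    (hm : ∀ n, g n < g (n+1)) : ∃ γ < ν, (∀ n, g n < γ) ∧ ∀ x < γ, ∃ n, x < g n := by
  refine ⟨⨆ n, g n, ?_, ?_, ?_⟩
  · obtain ⟨b, hb, hb2⟩ := h.bound_countable (S := range g) (by rintro _ ⟨n, rfl⟩; exact hg n)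
      (countable_range g)
    exact lt_of_le_of_lt (ciSup_le' fun n => (hb2 _ ⟨n, rfl⟩).le) hb
  · intro n
    exact (hm n).trans_le (Ordinal.le_iSup g (n+1))
  · intro x hx
    exact Ordinal.lt_iSup_iff.1 hx

theorem cl_Iio_limit {F : ℕ → List Ordinal.{u} → Ordinal.{u}} {B K : Set Ordinal.{u}}
    {γ : Ordinal.{u}} (hne : K.Nonempty) (hK : ∀ x < γ, ∃ c ∈ K, x < c) {x : Ordinal.{u}}
    (hx : x ∈ cl F (B ∪ Iio γ)) : ∃ c ∈ K, x ∈ cl F (B ∪ Iio c) := by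
  have : Nonempty K := hne.to_subtype
  have hm : Monotone (fun c : K => B ∪ Iio (c : Ordinal.{u})) := by
    intro c d h
    exact union_subset_union_right _ (Iio_subset_Iio h)
  have h2 : x ∈ cl F (⋃ c : K, B ∪ Iio (c : Ordinal.{u})) := by
    refine cl_mono ?_ hx
    rintro y (hy | hy)
    · exact mem_iUnion.2 ⟨Classical.arbitrary _, Or.inl hy⟩
    · obtain ⟨c, hc, hyc⟩ := hK y hy
      exact mem_iUnion.2 ⟨⟨c, hc⟩, Or.inr hyc⟩
  rw [cl_chain hm] at h2
  obtain ⟨c, hc⟩ := mem_iUnion.1 h2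
  exact ⟨c, c.2, hc⟩

theorem club_closed {ν : Ordinal.{u}} (h : RegO ν) (F : ℕ → List Ordinal.{u} → Ordinal.{u})
    {B : Set Ordinal.{u}} (hB : B.Countable) :
    OrdClub ν {γ | γ < ν ∧ ∀ x ∈ cl F (B ∪ Iio γ), x < ν → x < γ} := by
  refine ⟨fun γ hγ => hγ.1, ?_, ?_⟩
  · intro o ho
    have step : ∀ γ : Ordinal.{u}, ∃ γ', γ < ν → (γ' < ν ∧ γ < γ' ∧
        ∀ x ∈ cl F (B ∪ Iio γ), x < ν → x < γ') := by
      intro γ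
      by_cases hγ : γ < ν
      · obtain ⟨b, hb, hb2⟩ := h.bound (S := cl F (B ∪ Iio γ) ∩ Iio ν) inter_subset_right (by
          refine (mk_le_mk_of_subset inter_subset_left).trans_lt ((mk_cl_le _ _).trans_lt ?_)
          refine max_lt h.aleph0_lt ((mk_union_le _ _).trans_lt ?_)
          exact add_lt_of_lt h.aleph0_lt.le
            ((le_aleph0_iff_set_countable.2 hB).trans_lt h.aleph0_lt) (h.mk_lt hγ))
        refine ⟨max b (γ+1), fun _ => ⟨max_lt hb (h.succ_lt hγ), ?_, ?_⟩⟩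
        · exact lt_of_lt_of_le (by simp) (le_max_right _ _)
        · intro x hx hxν
          exact (hb2 x ⟨hx, hxν⟩).trans_le (le_max_left _ _)
      · exact ⟨0, fun h => absurd h hγ⟩
    choose s hs using step
    have hlt : ∀ n, s^[n] o < ν := by
      intro n
      induction n with
      | zero => exact ho
      | succ n ih => rw [Function.iterate_succ_apply']; exact (hs _ ih).1
    obtain ⟨γ, hγ, h1, h2⟩ := h.sup_seq (g := fun n => s^[n] o) hlt (by
      intro n; simp only [Function.iterate_succ_apply']; exact (hs _ (hlt n)).2.1)
    refine ⟨γ, ⟨hγ, ?_⟩, (h1 0).le⟩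
    intro x hx hxν
    obtain ⟨c, ⟨n, rfl⟩, hc⟩ := cl_Iio_limit (K := range fun n => s^[n] o) (range_nonempty _)
      (by intro x hx; obtain ⟨n, hn⟩ := h2 x hx; exact ⟨_, ⟨n, rfl⟩, hn⟩) hx
    have := (hs _ (hlt n)).2.2 x hc hxν
    have h3 := h1 (n+1)
    simp only [Function.iterate_succ_apply'] at h3
    exact this.trans h3
  · intro o ho ho0 hlim
    refine ⟨ho, fun x hx hxν => ?_⟩
    obtain ⟨c, ⟨⟨_, hc⟩, hco⟩, hxc⟩ := cl_Iio_limit (K := {c | (c < ν ∧ ∀ x ∈ cl F (B ∪ Iio c), x < ν → x < c) ∧ c < o})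
      (by obtain ⟨c, hc, -, hco⟩ := hlim 0 (pos_iff_ne_zero.2 ho0); exact ⟨c, hc, hco⟩)
      (by intro x hx; obtain ⟨c, hc, h1, h2⟩ := hlim x hx; exact ⟨c, ⟨hc, h2⟩, h1⟩) hx
    exact (hc x hxc hxν).trans hco

theorem stat_closed {ν : Ordinal.{u}} (h : RegO ν) {S : Set Ordinal.{u}} (hS : OrdStationary ν S)
    (F : ℕ → List Ordinal.{u} → Ordinal.{u})
    {B : Set Ordinal.{u}} (hB : B.Countable) :
    ∃ γ ∈ S, γ < ν ∧ ∀ x ∈ cl F (B ∪ Iio γ), x < ν → x < γ := by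
  obtain ⟨γ, h1, h2⟩ := hS.2 _ (club_closed h F hB)
  exact ⟨γ, h1, h2⟩

theorem club_next {ν : Ordinal.{u}} (h : RegO ν) {C : Set Ordinal.{u}} (hC : OrdClub ν C) :
    ∃ f : Ordinal.{u} → Ordinal.{u}, ∀ x < ν, f x ∈ C ∧ x < f x := by
  have : ∀ x, ∃ y, x < ν → y ∈ C ∧ x < y := by
    intro x
    by_cases hx : x < ν
    · obtain ⟨c, hc, hxc⟩ := hC.2.1 (x+1) (h.succ_lt hx)
      exact ⟨c, fun _ => ⟨hc, lt_of_lt_of_le (by simp) hxc⟩⟩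
    · exact ⟨0, fun h => absurd h hx⟩
  choose f hf using this
  exact ⟨f, hf⟩

theorem stat_diag {ν : Ordinal.{u}} (h : RegO ν) {S : Set Ordinal.{u}} (hS : OrdStationary ν S)
    {C : Ordinal.{u} → Set Ordinal.{u}} (hC : ∀ i < ν, OrdClub ν (C i)) {b : Ordinal.{u}}
    (hb : b < ν) : ∃ γ ∈ S, γ < ν ∧ b < γ ∧ ∀ i < γ, γ ∈ C i := by
  have : ∀ i, ∃ f : Ordinal.{u} → Ordinal.{u}, i < ν → ∀ x < ν, f x ∈ C i ∧ x < f x := by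
    intro i
    by_cases hi : i < ν
    · obtain ⟨f, hf⟩ := club_next h (hC i hi)
      exact ⟨f, fun _ => hf⟩
    · exact ⟨id, fun h => absurd h hi⟩
  choose f hf using this
  obtain ⟨γ, h1, h2, h3⟩ := stat_closed h hS (fun _ l => f (l.getD 0 0) (l.getD 1 0))
    (countable_singleton b)
  have hbγ : b < γ := h3 b (subset_cl _ _ (Or.inl rfl)) hb
  refine ⟨γ, h1, h2, hbγ, ?_⟩
  intro i hi
  have hiν := hi.trans h2
  refine (hC i hiν).2.2 γ h2 (ne_of_gt (lt_of_le_of_lt (zero_le) hbγ)) ?_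
  intro x hx
  have hxν := hx.trans h2
  refine ⟨f i x, (hf i hiν x hxν).1, (hf i hiν x hxν).2, ?_⟩
  apply h3 _ _ ((hC i hiν).1 (hf i hiν x hxν).1)
  have := cl_cls (fun _ l => f (l.getD 0 0) (l.getD 1 0)) ({b} ∪ Iio γ) 0 [i, x] (by
    intro y hy
    simp only [List.mem_cons, List.not_mem_nil, or_false] at hy
    rcases hy with rfl | rfl
    · exact subset_cl _ _ (Or.inr hi)
    · exact subset_cl _ _ (Or.inr hx))
  simpa using this

theorem OrdStationary.mono {ν : Ordinal.{u}} {S T : Set Ordinal.{u}} (hS : OrdStationary ν S)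
    (h : S ⊆ T) (hT : T ⊆ Iio ν) : OrdStationary ν T :=
  ⟨hT, fun C hC => (hS.2 C hC).mono (inter_subset_inter_left _ h)⟩

theorem not_stat {ν : Ordinal.{u}} {S : Set Ordinal.{u}} (hS : ¬ OrdStationary ν S)
    (h : S ⊆ Iio ν) : ∃ C, OrdClub ν C ∧ ∀ x ∈ S, x ∉ C := by
  by_contra hc
  push Not at hc
  exact hS ⟨h, fun C hC => by obtain ⟨x, h1, h2⟩ := hc C hC; exact ⟨x, h1, h2⟩⟩

/-- Fodor. -/
theorem fodor {ν : Ordinal.{u}} (h : RegO ν) {S : Set Ordinal.{u}} (hS : OrdStationary ν S)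
    {b : Ordinal.{u}} (hb : b < ν)
    (g : Ordinal.{u} → Ordinal.{u}) (hg : ∀ γ ∈ S, b < γ → g γ < γ) :
    ∃ η < ν, OrdStationary ν {γ | γ ∈ S ∧ g γ = η} := by
  by_contra hc
  push Not at hc
  have : ∀ i, ∃ C, i < ν → OrdClub ν C ∧ ∀ x ∈ S, g x = i → x ∉ C := by
    intro i
    by_cases hi : i < ν
    · obtain ⟨C, h1, h2⟩ := not_stat (hc i hi) (fun x hx => hS.1 hx.1)
      exact ⟨C, fun _ => ⟨h1, fun x hx hgx => h2 x ⟨hx, hgx⟩⟩⟩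
    · exact ⟨∅, fun h => absurd h hi⟩
  choose C hC using this
  obtain ⟨γ, h1, h2, h3, h4⟩ := stat_diag h hS (fun i hi => (hC i hi).1) hb
  exact (hC (g γ) ((hg γ h1 h3).trans h2)).2 γ h1 rfl (h4 _ (hg γ h1 h3))

theorem RegO.omega_lt {ν : Ordinal.{u}} (h : RegO ν) : Ordinal.omega0 < ν := by
  obtain ⟨c, h1, h2, rfl⟩ := h
  rw [← Cardinal.ord_aleph0]
  exact Cardinal.ord_lt_ord.2 h2

theorem stat_countable_union {ν : Ordinal.{u}} (h : RegO ν) {S : Set Ordinal.{u}}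
    (hS : OrdStationary ν S) {b : Ordinal.{u}} (hb : b < ν) (P : ℕ → Set Ordinal.{u})
    (hP : ∀ γ ∈ S, b < γ → ∃ n, γ ∈ P n) : ∃ n, OrdStationary ν {γ | γ ∈ S ∧ γ ∈ P n} := by
  have : ∀ γ, ∃ n : ℕ, γ ∈ S → b < γ → γ ∈ P n := by
    intro γ
    by_cases h1 : γ ∈ S ∧ b < γ
    · obtain ⟨n, hn⟩ := hP γ h1.1 h1.2
      exact ⟨n, fun _ _ => hn⟩
    · exact ⟨0, fun h2 h3 => absurd ⟨h2, h3⟩ h1⟩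
  choose g hg using this
  have hS' : OrdStationary ν {γ | γ ∈ S ∧ b < γ} := by
    refine ⟨fun x hx => hS.1 hx.1, fun C hC => ?_⟩
    obtain ⟨γ, h1, h2, h3, h4⟩ := stat_diag h hS (C := fun _ => C) (fun _ _ => hC) hb
    exact ⟨γ, ⟨h1, h3⟩, h4 _ h3⟩
  obtain ⟨η, h1, h2⟩ := fodor h hS' h.omega_lt (fun γ => (g γ : Ordinal.{u})) (by
    intro γ _ h2
    exact (Ordinal.natCast_lt_omega0 _).trans h2)
  obtain ⟨γ, ⟨⟨h3, h4⟩, h5⟩, -⟩ := h2.2 (Iio ν) ⟨Subset.rfl, fun o ho => ⟨o, ho, le_rfl⟩, fun o ho _ _ => ho⟩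
  refine ⟨g γ, h2.mono ?_ (fun x hx => hS.1 hx.1)⟩
  rintro x ⟨⟨h6, h7⟩, h8⟩
  refine ⟨h6, ?_⟩
  have : g x = g γ := by
    have := h8.trans h5.symm
    exact_mod_cast this
  rw [← this]
  exact hg x h6 h7

theorem stat_nonempty {ν : Ordinal.{u}} {S : Set Ordinal.{u}} (hS : OrdStationary ν S) :
    ∃ γ ∈ S, γ < ν := by
  obtain ⟨γ, h1, h2⟩ := hS.2 (Iio ν) ⟨Subset.rfl, fun o ho => ⟨o, ho, le_rfl⟩, fun o ho _ _ => ho⟩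
  exact ⟨γ, h1, h2⟩

/-- `a` is a countable cofinal subset of `γ`. -/
def CofC (a : Set Ordinal.{u}) (γ : Ordinal.{u}) : Prop :=
  a.Countable ∧ a ⊆ Iio γ ∧ ∀ x < γ, ∃ y ∈ a, x ≤ y

def Sω (ν : Ordinal.{u}) : Set Ordinal.{u} := {γ | γ < ν ∧ ∃ a, CofC a γ}

theorem stat_Sω {ν : Ordinal.{u}} (h : RegO ν) : OrdStationary ν (Sω ν) := by
  refine ⟨fun x hx => hx.1, fun C hC => ?_⟩
  obtain ⟨f, hf⟩ := club_next h hC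
  have hlt : ∀ n, f^[n] 0 < ν := by
    intro n
    induction n with
    | zero => exact h.pos
    | succ n ih => rw [Function.iterate_succ_apply']; exact hC.1 (hf _ ih).1
  obtain ⟨γ, hγ, h1, h2⟩ := h.sup_seq (g := fun n => f^[n] 0) hlt (by
      intro n; simp only [Function.iterate_succ_apply']; exact (hf _ (hlt n)).2)
  refine ⟨γ, ⟨hγ, range fun n => f^[n] 0, countable_range _, ?_, ?_⟩, ?_⟩
  · rintro _ ⟨n, rfl⟩; exact h1 n
  · intro x hx; obtain ⟨n, hn⟩ := h2 x hx; exact ⟨_, ⟨n, rfl⟩, hn.le⟩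
  · refine hC.2.2 γ hγ (ne_of_gt (lt_of_le_of_lt (zero_le) (h1 0))) ?_
    intro b hb
    obtain ⟨n, hn⟩ := h2 b hb
    refine ⟨f^[n+1] 0, ?_, ?_, h1 (n+1)⟩
    · rw [Function.iterate_succ_apply']; exact (hf _ (hlt n)).1
    · rw [Function.iterate_succ_apply']; exact hn.trans (hf _ (hlt n)).2

theorem splitting {ν : Ordinal.{u}} (h : RegO ν) : ∃ hh : Ordinal.{u} → Ordinal.{u},
    ∀ j < ν, OrdStationary ν {γ | γ ∈ Sω ν ∧ hh γ = j} := by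
  have lad : ∀ γ, ∃ g : ℕ → Ordinal.{u}, γ ∈ Sω ν → 0 < γ → (∀ n, g n < γ) ∧ ∀ x < γ, ∃ n, x ≤ g n := by
    intro γ
    by_cases hγ : γ ∈ Sω ν ∧ 0 < γ
    · obtain ⟨⟨h1, a, ha1, ha2, ha3⟩, h0⟩ := hγ
      have hne : a.Nonempty := by obtain ⟨y, hy, -⟩ := ha3 0 h0; exact ⟨y, hy⟩
      obtain ⟨g, rfl⟩ := ha1.exists_eq_range hne
      refine ⟨g, fun _ _ => ⟨fun n => ha2 ⟨n, rfl⟩, fun x hx => ?_⟩⟩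
      obtain ⟨_, ⟨n, rfl⟩, hn⟩ := ha3 x hx
      exact ⟨n, hn⟩
    · exact ⟨fun _ => 0, fun h1 h2 => absurd ⟨h1, h2⟩ hγ⟩
  choose g hg using lad
  have hn : ∃ n, ∀ ξ < ν, OrdStationary ν {γ | γ ∈ Sω ν ∧ ξ ≤ g γ n} := by
    by_contra hc
    push Not at hc
    choose ξ hξ1 hξ2 using hc
    obtain ⟨b, hb, hb2⟩ := h.bound_countable (S := range ξ) (by rintro _ ⟨n, rfl⟩; exact hξ1 n)
      (countable_range ξ)
    obtain ⟨n, hn⟩ := stat_countable_union h (stat_Sω h) hb (fun n => {γ | b ≤ g γ n}) (by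
      intro γ hγ hbγ
      exact (hg γ hγ (lt_of_le_of_lt (zero_le) hbγ)).2 b hbγ)
    refine hξ2 n (hn.mono ?_ fun x hx => hx.1.1)
    rintro x ⟨h1, h2⟩
    exact ⟨h1, (hb2 _ ⟨n, rfl⟩).le.trans h2⟩
  obtain ⟨n, hn⟩ := hn
  set W : Set Ordinal.{u} := {η | η < ν ∧ OrdStationary ν {γ | γ ∈ Sω ν ∧ g γ n = η}} with hW
  have hWc : #W = #(Iio ν) := by
    refine le_antisymm (mk_le_mk_of_subset fun x hx => hx.1) ?_
    by_contra hlt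
    obtain ⟨b, hb, hb2⟩ := h.bound (S := W) (fun x hx => hx.1) (not_le.1 hlt)
    obtain ⟨η, h1, h2⟩ := fodor h (hn b hb) h.pos (fun γ => g γ n) (fun γ hγ h0 => (hg γ hγ.1 h0).1 n)
    have : η ∈ W := ⟨h1, h2.mono (fun x hx => ⟨hx.1.1, hx.2⟩) fun x hx => hx.1.1⟩
    obtain ⟨γ, ⟨⟨_, h3⟩, h4⟩, _⟩ := stat_nonempty h2
    exact absurd (hb2 η this) (not_lt.2 (h4 ▸ h3))
  obtain ⟨e⟩ := Cardinal.eq.1 hWc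
  classical
  refine ⟨fun γ => if hγ : g γ n ∈ W then e ⟨g γ n, hγ⟩ else 0, fun j hj => ?_⟩
  have h3 := (e.symm ⟨j, hj⟩).2
  refine h3.2.mono ?_ fun x hx => hx.1.1
  rintro x ⟨h1, h2⟩
  refine ⟨h1, ?_⟩
  have h4 : g x n ∈ W := by rw [h2]; exact h3
  have h5 : (⟨g x n, h4⟩ : W) = e.symm ⟨j, hj⟩ := Subtype.ext h2
  beta_reduce
  rw [dif_pos h4, h5]
  simp

end stat

theorem exists_en {α : Type v} [Nonempty α] : ∃ en : Set α → ℕ → α, ∀ S : Set α, S.Countable → S.Nonempty →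
    S = range (en S) := by
  have : ∀ S : Set α, ∃ e : ℕ → α, S.Countable → S.Nonempty → S = range e := by
    intro S
    by_cases h : S.Countable ∧ S.Nonempty
    · obtain ⟨e, he⟩ := h.1.exists_eq_range h.2
      exact ⟨e, fun _ _ => he⟩
    · exact ⟨fun _ => Classical.arbitrary α, fun h1 h2 => absurd ⟨h1, h2⟩ h⟩
  choose en hen using this
  exact ⟨en, hen⟩

theorem kueker {α : Type v} {A : Set α} {C : Set (Set α)} (hC : ClubOn A C) {a0 : α} (h0 : a0 ∈ A) :
    ∃ F : ℕ → List α → α, (∀ n l, F n l ∈ A) ∧ ∀ M : Set α, M.Countable → Cls F M → M ∩ A ∈ C := by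
  have : Nonempty α := ⟨a0⟩
  obtain ⟨en, hen⟩ := exists_en (α := α)
  have ext : ∀ (s : C) (a : α), ∃ s' : C, s.1 ⊆ s'.1 ∧ (a ∈ A → a ∈ s'.1) := by
    intro s a
    obtain ⟨c, hc, h⟩ := hC.2.1 (s.1 ∪ ({a} ∩ A))
      (union_subset (hC.1 _ s.2).1 inter_subset_right)
      ((hC.1 _ s.2).2.union ((countable_singleton a).mono inter_subset_left))
    exact ⟨⟨c, hc⟩, fun x hx => h (Or.inl hx), fun ha => h (Or.inr ⟨rfl, ha⟩)⟩
  choose e he1 he2 using ext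
  obtain ⟨c0, hc0, hc0'⟩ := hC.2.1 {a0} (by simpa using h0) (countable_singleton _)
  let c : List α → C := fun l => l.foldr (fun a s => e s a) ⟨c0, hc0⟩
  have hcc : ∀ a l, c (a :: l) = e (c l) a := fun a l => rfl
  have hne : ∀ l, a0 ∈ (c l).1 := by
    intro l
    induction l with
    | nil => exact hc0' rfl
    | cons a l ih => rw [hcc]; exact he1 _ _ ih
  have hr : ∀ l, (c l).1 = range (en (c l).1) := fun l => hen _ (hC.1 _ (c l).2).2 ⟨_, hne l⟩
  have hF : ∀ n l, en (c l).1 n ∈ (c l).1 := fun n l => by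
    have h : en (c l).1 n ∈ range (en (c l).1) := ⟨n, rfl⟩
    rwa [← hr l] at h
  refine ⟨fun n l => en (c l).1 n, fun n l => (hC.1 _ (c l).2).1 (hF n l), fun M hM hcl => ?_⟩
  have hMne : (M ∩ A).Nonempty := ⟨_, hcl 0 [] (by simp), (hC.1 _ (c []).2).1 (hF 0 [])⟩
  obtain ⟨m, hm⟩ := (hM.mono (inter_subset_left (t := A))).exists_eq_range hMne
  let lst : ℕ → List α := fun n => n.rec [] (fun k l => m k :: l)
  have hlst : ∀ n, ∀ x ∈ lst n, x ∈ M := by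
    intro n
    induction n with
    | zero => simp [lst]
    | succ n ih =>
      intro x hx
      rcases List.mem_cons.1 hx with rfl | hx
      · have : m n ∈ M ∩ A := hm ▸ ⟨n, rfl⟩
        exact this.1
      · exact ih x hx
  have key := hC.2.2 (fun n => (c (lst n)).1) (fun n => (c _).2)
    (monotone_nat_of_le_succ fun n => he1 _ _)
  convert key
  apply Subset.antisymm
  · intro x hx
    have hx2 := hx
    rw [hm] at hx
    obtain ⟨n, rfl⟩ := hx
    exact mem_iUnion.2 ⟨n+1, he2 _ _ hx2.2⟩
  · refine iUnion_subset fun n x hx => ⟨?_, (hC.1 _ (c _).2).1 hx⟩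
    have hx : x ∈ (c (lst n)).1 := hx
    rw [hr] at hx
    obtain ⟨k, rfl⟩ := hx
    exact hcl k _ (hlst n)

theorem regO_omega1 : RegO omega1.{u} := by
  refine ⟨aleph 1, isRegular_aleph_one, aleph0_lt_aleph_one, rfl⟩

theorem countable_Iio_omega1 {δ : Ordinal.{u}} (h : δ < omega1) : (Iio δ).Countable := by
  rw [← le_aleph0_iff_set_countable, mk_Iio_ordinal]
  have := lt_ord.1 h
  rw [← succ_aleph0, Order.lt_succ_iff] at this
  have h2 := Cardinal.lift_le.{u+1}.2 this
  rwa [lift_aleph0] at h2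

theorem lemmaP {A : Set Ordinal.{u}} (hA : Iio omega1 ⊆ A) {D : Set (Set Ordinal.{u})}
    (hD : ClubOn A D) {T : Set Ordinal.{u}} (hT : OrdStationary omega1 T) {a : Set Ordinal.{u}}
    (ha : a ⊆ A) (hac : a.Countable) :
    ∃ M ∈ D, a ⊆ M ∧ ∃ δ ∈ T, M ∩ Iio omega1 = Iio δ := by
  obtain ⟨F, hF1, hF2⟩ := kueker hD (a0 := 0) (hA (mem_Iio.2 regO_omega1.pos))
  obtain ⟨δ, h1, h2, h3⟩ := stat_closed regO_omega1 hT F hac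
  have hsub : cl F (a ∪ Iio δ) ⊆ A :=
    cl_min (union_subset ha ((Iio_subset_Iio h2.le).trans hA)) (fun n l _ => hF1 n l)
  have := hF2 (cl F (a ∪ Iio δ)) (cl_countable (hac.union (countable_Iio_omega1 h2))) (cl_cls _ _)
  rw [inter_eq_left.2 hsub] at this
  refine ⟨_, this, fun x hx => subset_cl _ _ (Or.inl hx), δ, h1, ?_⟩
  ext x
  constructor
  · rintro ⟨hx, hx2⟩; exact h3 x hx hx2
  · intro hx; exact ⟨subset_cl _ _ (Or.inr hx), lt_trans hx h2⟩

/-- Dynamic bookkeeping. -/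
theorem bookkeeping {σ τ : Type v} (Ext : σ → σ → Prop) (hrefl : ∀ s, Ext s s)
    (htrans : ∀ a b c, Ext a b → Ext b c → Ext a c) (Tk : σ → Set τ) (hc : ∀ s, (Tk s).Countable)
    (hmono : ∀ s s', Ext s s' → Tk s ⊆ Tk s') (Done : σ → τ → Prop)
    (ach : ∀ s, ∀ x ∈ Tk s, ∃ s', Ext s s' ∧ Done s' x) (s0 : σ) :
    ∃ p : ℕ → σ, p 0 = s0 ∧ (∀ m n, m ≤ n → Ext (p m) (p n)) ∧
      ∀ n, ∀ x ∈ Tk (p n), ∃ m, Done (p m) x := by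
  classical
  by_cases hτ : Nonempty τ
  swap
  · refine ⟨fun _ => s0, rfl, fun _ _ _ => hrefl _, fun n x _ => absurd ⟨x⟩ hτ⟩
  obtain ⟨en, hen⟩ := exists_en (α := τ)
  have : ∀ s x, ∃ s', Ext s s' ∧ (x ∈ Tk s → Done s' x) := by
    intro s x
    by_cases hx : x ∈ Tk s
    · obtain ⟨s', h1, h2⟩ := ach s x hx
      exact ⟨s', h1, fun _ => h2⟩
    · exact ⟨s, hrefl s, fun h => absurd h hx⟩
  choose step hs1 hs2 using this
  let hist : ℕ → ℕ → σ := fun n => n.rec (fun _ => s0) (fun n h k =>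
    if k ≤ n then h k else step (h n) (en (Tk (h n.unpair.1)) n.unpair.2))
  have hsucc : ∀ n k, hist (n+1) k = if k ≤ n then hist n k else
    step (hist n n) (en (Tk (hist n n.unpair.1)) n.unpair.2) := fun n k => rfl
  have hst : ∀ m k, k ≤ m → hist m k = hist k k := by
    intro m
    induction m with
    | zero => intro k hk; obtain rfl : k = 0 := by omega
              rfl
    | succ m ih =>
      intro k hk
      rcases Nat.lt_or_ge m k with h | h
      · obtain rfl : k = m + 1 := by omega
        rfl
      · rw [hsucc, if_pos h, ih k h]
  have hp : ∀ n, hist (n+1) (n+1) = step (hist n n)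
      (en (Tk (hist n.unpair.1 n.unpair.1)) n.unpair.2) := by
    intro n
    rw [hsucc, if_neg (by omega), hst n n.unpair.1 (Nat.unpair_left_le n)]
  have hE : ∀ m n, m ≤ n → Ext (hist m m) (hist n n) := by
    intro m n hmn
    induction n, hmn using Nat.le_induction with
    | base => exact hrefl _
    | succ n hmn ih => exact htrans _ _ _ ih (by rw [hp]; exact hs1 _ _)
  refine ⟨fun n => hist n n, rfl, hE, ?_⟩
  intro n x hx
  have h1 := hen _ (hc (hist n n)) ⟨x, hx⟩
  have h2 : x ∈ range (en (Tk (hist n n))) := by rw [← h1]; exact hx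
  obtain ⟨j, hj⟩ := h2
  refine ⟨Nat.pair n j + 1, ?_⟩
  beta_reduce
  rw [hp]
  simp only [Nat.unpair_pair]
  rw [hj]
  exact hs2 _ _ (hmono _ _ (hE n _ (Nat.left_le_pair n j)) hx)

theorem countable_list_mem {α : Type v} (l : List α) : {x | x ∈ l}.Countable :=
  (List.finite_toSet l).countable

section game
variable (F : ℕ → List Ordinal.{u} → Ordinal.{u}) (Rg : Set Ordinal.{u})

def Hl (t : List Ordinal.{u}) : Set Ordinal.{u} := cl F {x | x ∈ t}

def Legal (C : Ordinal.{u} → Set Ordinal.{u}) (t : List Ordinal.{u}) (m : Ordinal.{u} × Ordinal.{u}) : Prop :=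
  m.1 ∈ Hl F t ∧ m.1 ∈ Rg ∧ m.2 ∈ C m.1

/-- one step of a play in which player I follows `τ` -/
def Follows (C : Ordinal.{u} → Set Ordinal.{u}) (τ : List Ordinal.{u} → Ordinal.{u} × Ordinal.{u})
    (t t' : List Ordinal.{u}) : Prop :=
  (Legal F Rg C t (τ t) ∧ ∃ η, (τ t).2 < η ∧ η < (τ t).1 ∧ t' = η :: t) ∨
    (¬ Legal F Rg C t (τ t) ∧ t' = t)

/-- Player I wins from position `t`. -/
def IW (C : Ordinal.{u} → Set Ordinal.{u}) (ok : Set Ordinal.{u} → Prop) (t : List Ordinal.{u}) : Prop :=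
  ∃ τ : List Ordinal.{u} → Ordinal.{u} × Ordinal.{u}, ∀ p : ℕ → List Ordinal.{u}, p 0 = t →
    (∀ n, Follows F Rg C τ (p n) (p (n+1))) → ∃ n, ¬ ok (Hl F (p n))

variable {F Rg}

theorem alive_ok {C : Ordinal.{u} → Set Ordinal.{u}} {ok : Set Ordinal.{u} → Prop}
    {t : List Ordinal.{u}} (h : ¬ IW F Rg C ok t) : ok (Hl F t) := by
  by_contra hb
  exact h ⟨fun _ => (0, 0), fun p hp _ => ⟨0, by rwa [hp]⟩⟩

theorem alive_reply {C : Ordinal.{u} → Set Ordinal.{u}} {ok : Set Ordinal.{u} → Prop}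
    {t : List Ordinal.{u}} (h : ¬ IW F Rg C ok t) {m : Ordinal.{u} × Ordinal.{u}}
    (hm : Legal F Rg C t m) :
    ∃ η, m.2 < η ∧ η < m.1 ∧ ¬ IW F Rg C ok (η :: t) := by
  classical
  by_contra hc
  push Not at hc
  have : ∀ η, ∃ τ : List Ordinal.{u} → Ordinal.{u} × Ordinal.{u}, m.2 < η → η < m.1 →
      ∀ p : ℕ → List Ordinal.{u}, p 0 = η :: t →
      (∀ n, Follows F Rg C τ (p n) (p (n+1))) → ∃ n, ¬ ok (Hl F (p n)) := by
    intro η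
    by_cases hη : m.2 < η ∧ η < m.1
    · obtain ⟨τ, hτ⟩ := hc η hη.1 hη.2
      exact ⟨τ, fun _ _ => hτ⟩
    · exact ⟨fun _ => (0, 0), fun h1 h2 => absurd ⟨h1, h2⟩ hη⟩
  choose τ hτ using this
  apply h
  let σ : List Ordinal.{u} → Ordinal.{u} × Ordinal.{u} := fun t' =>
    if t' = t then m else τ (t'.reverse.getD t.length 0) t'
  refine ⟨σ, fun p hp0 hp => ?_⟩
  have hσ : σ t = m := by simp [σ]
  have h1 := hp 0
  rw [hp0] at h1
  simp only [Follows, hσ] at h1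
  rcases h1 with ⟨-, η, h2, h3, h4⟩ | ⟨h2, -⟩
  swap
  · exact absurd hm h2
  have hform : ∀ n, ∃ s, p (n+1) = s ++ η :: t := by
    intro n
    induction n with
    | zero => exact ⟨[], by simpa using h4⟩
    | succ n ih =>
      obtain ⟨s, hs⟩ := ih
      rcases hp (n+1) with ⟨-, ζ, -, -, h⟩ | ⟨-, h⟩
      · exact ⟨ζ :: s, by rw [h, hs]; rfl⟩
      · exact ⟨s, by rw [h, hs]⟩
  have hσ2 : ∀ n, σ (p (n+1)) = τ η (p (n+1)) := by
    intro n
    obtain ⟨s, hs⟩ := hform n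
    have hne : p (n+1) ≠ t := by
      intro h
      have := congrArg List.length h
      rw [hs] at this
      simp at this
      omega
    have : (p (n+1)).reverse.getD t.length 0 = η := by
      rw [hs]
      simp [List.getD]
    simp only [σ, if_neg hne, this]
  obtain ⟨n, hn⟩ := hτ η h2 h3 (fun n => p (n+1)) h4 (fun n => by
    have := hp (n+1)
    simp only [Follows, hσ2] at this
    exact this)
  exact ⟨n+1, hn⟩

theorem Hl_mono {t t' : List Ordinal.{u}} (h : ∀ x ∈ t, x ∈ t') : Hl F t ⊆ Hl F t' := cl_mono h

theorem Hl_sub {t : List Ordinal.{u}} {N : Set Ordinal.{u}} (h : ∀ x ∈ t, x ∈ N) (hN : Cls F N) :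
    Hl F t ⊆ N := cl_min h hN

theorem game_fix (hRg : ∀ ν ∈ Rg, RegO ν) {C : Ordinal.{u} → Set Ordinal.{u}}
    {ok : Set Ordinal.{u} → Prop}
    {t : List Ordinal.{u}} (h : ¬ IW F Rg C ok t) {ι : Type (u+1)}
    (C' : ι → Ordinal.{u} → Set Ordinal.{u}) (ok' : ι → Set Ordinal.{u} → Prop)
    (H : ∀ G : ℕ → List Ordinal.{u} → Ordinal.{u}, ∃ j N, Cls G N ∧ (∀ x ∈ t, x ∈ N) ∧
      (∀ S ⊆ N, ok S → ok' j S) ∧ ∀ ν ∈ N, ν ∈ Rg → ∀ ξ ∈ C' j ν,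
        (ξ ∈ N ∧ ξ ∈ C ν) ∨ (C ν = Iio ν ∧ ξ < ν ∧ #ι < #(Iio ν))) :
    ∃ j, ¬ IW F Rg (C' j) (ok' j) t := by
  classical
  by_contra hc
  push Not at hc
  choose τ hτ using hc
  -- replies
  have hr : ∀ (t' : List Ordinal.{u}) (ν ξ : Ordinal.{u}), ∃ η, ¬ IW F Rg C ok t' →
      Legal F Rg C t' (ν, ξ) → ξ < η ∧ η < ν ∧ ¬ IW F Rg C ok (η :: t') := by
    intro t' ν ξ
    by_cases hh : ¬ IW F Rg C ok t' ∧ Legal F Rg C t' (ν, ξ)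
    · obtain ⟨η, hη⟩ := alive_reply hh.1 hh.2
      exact ⟨η, fun _ _ => hη⟩
    · exact ⟨0, fun h1 h2 => absurd ⟨h1, h2⟩ hh⟩
  choose r hr using hr
  -- bounds
  have hB : ∀ (t' : List Ordinal.{u}) (ν : Ordinal.{u}), ∃ b, RegO ν → #ι < #(Iio ν) → b < ν ∧
      ∀ j, (τ j t').1 = ν → (τ j t').2 < ν → (τ j t').2 < b := by
    intro t' ν
    by_cases hh : RegO ν ∧ #ι < #(Iio ν)
    · obtain ⟨b, hb, hb2⟩ := hh.1.bound (S := (range fun j => (τ j t').2) ∩ Iio ν) inter_subset_right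
        ((mk_le_mk_of_subset inter_subset_left).trans_lt (mk_range_le.trans_lt hh.2))
      exact ⟨b, fun _ _ => ⟨hb, fun j _ h2 => hb2 _ ⟨⟨j, rfl⟩, h2⟩⟩⟩
    · exact ⟨0, fun h1 h2 => absurd ⟨h1, h2⟩ hh⟩
  choose B hB using hB
  obtain ⟨j, N, hN, htN, hokN, hmoves⟩ := H (combN (fun i => if i = 0 then F else if i = 1 then
    (fun _ l => r (l.drop 2) (l.getD 0 0) (l.getD 1 0)) else (fun _ l => B (l.drop 1) (l.getD 0 0))))
  rw [cls_combN] at hN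
  have hNF : Cls F N := by simpa using hN 0
  have hNr : ∀ t' ν ξ, (∀ x ∈ t', x ∈ N) → ν ∈ N → ξ ∈ N → r t' ν ξ ∈ N := by
    intro t' ν ξ h1 h2 h3
    have := hN 1 0 (ν :: ξ :: t') (by
      intro x hx
      simp only [List.mem_cons] at hx
      rcases hx with rfl | rfl | hx
      · exact h2
      · exact h3
      · exact h1 x hx)
    simpa using this
  have hNB : ∀ t' ν, (∀ x ∈ t', x ∈ N) → ν ∈ N → B t' ν ∈ N := by
    intro t' ν h1 h2
    have := hN 2 0 (ν :: t') (by
      intro x hx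
      simp only [List.mem_cons] at hx
      rcases hx with rfl | hx
      · exact h2
      · exact h1 x hx)
    simpa using this
  let next : List Ordinal.{u} → List Ordinal.{u} := fun t' =>
    if Legal F Rg (C' j) t' (τ j t') then
      r t' (τ j t').1 (if (τ j t').2 ∈ N ∧ (τ j t').2 ∈ C (τ j t').1 then (τ j t').2
        else B t' (τ j t').1) :: t'
    else t'
  have hnext : ∀ t', (∀ x ∈ t', x ∈ N) → ¬ IW F Rg C ok t' →
      ((∀ x ∈ next t', x ∈ N) ∧ ¬ IW F Rg C ok (next t')) ∧ Follows F Rg (C' j) (τ j) t' (next t') := by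
    intro t' h1 h2
    by_cases hL : Legal F Rg (C' j) t' (τ j t')
    swap
    · simp only [next, if_neg hL]
      exact ⟨⟨h1, h2⟩, Or.inr ⟨hL, rfl⟩⟩
    have hνN : (τ j t').1 ∈ N := Hl_sub h1 hNF hL.1
    have hνR : (τ j t').1 ∈ Rg := hL.2.1
    have hm := hmoves _ hνN hνR _ hL.2.2
    have key : ∃ ξ' ∈ N, (if (τ j t').2 ∈ N ∧ (τ j t').2 ∈ C (τ j t').1 then (τ j t').2
        else B t' (τ j t').1) = ξ' ∧ ξ' ∈ C (τ j t').1 ∧ (τ j t').2 ≤ ξ' := by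
      by_cases hcase : (τ j t').2 ∈ N ∧ (τ j t').2 ∈ C (τ j t').1
      · exact ⟨_, hcase.1, if_pos hcase, hcase.2, le_rfl⟩
      · have hm2 := hm.resolve_left hcase
        have hb := hB t' _ (hRg _ hνR) hm2.2.2
        refine ⟨_, hNB t' _ h1 hνN, if_neg hcase, ?_, ?_⟩
        · rw [hm2.1]; exact hb.1
        · exact (hb.2 j rfl hm2.2.1).le
    obtain ⟨ξ', hξN, hξe, hξC, hξle⟩ := key
    simp only [next, if_pos hL, hξe]
    obtain ⟨h3, h4, h5⟩ := hr t' (τ j t').1 ξ' h2 ⟨hL.1, hL.2.1, hξC⟩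
    refine ⟨⟨?_, h5⟩, Or.inl ⟨hL, _, hξle.trans_lt h3, h4, rfl⟩⟩
    intro x hx
    rcases List.mem_cons.1 hx with rfl | hx
    · exact hNr _ _ _ h1 hνN hξN
    · exact h1 x hx
  have hinv : ∀ n, (∀ x ∈ next^[n] t, x ∈ N) ∧ ¬ IW F Rg C ok (next^[n] t) := by
    intro n
    induction n with
    | zero => exact ⟨htN, h⟩
    | succ n ih => rw [Function.iterate_succ_apply']; exact (hnext _ ih.1 ih.2).1
  obtain ⟨n, hn⟩ := hτ j (fun n => next^[n] t) rfl (fun n => by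
    simp only [Function.iterate_succ_apply']
    exact (hnext _ (hinv n).1 (hinv n).2).2)
  exact hn (hokN _ (Hl_sub (hinv n).1 hNF) (alive_ok (hinv n).2))

/-- Fixing the supremum at one regular cardinal. -/
theorem game_fix_one (hRg : ∀ ν ∈ Rg, RegO ν) {C : Ordinal.{u} → Set Ordinal.{u}}
    {ok : Set Ordinal.{u} → Prop}
    {t : List Ordinal.{u}} (h : ¬ IW F Rg C ok t)
    (hC : ∀ ν ∈ Rg, C ν ≠ Iio ν → (C ν).Countable)
    (hCc : {ν | ν ∈ Rg ∧ C ν ≠ Iio ν}.Countable)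
    {ν : Ordinal.{u}} (hν : ν ∈ Rg) (hCν : C ν = Iio ν) {E : Set Ordinal.{u}}
    (hE : OrdStationary ν E) (hE2 : ∀ γ ∈ E, ∃ a, CofC a γ) :
    ∃ γ ∈ E, ∃ a, CofC a γ ∧ ¬ IW F Rg (Function.update C ν a)
      (fun S => ok S ∧ ∀ x ∈ S, x < ν → x < γ) t := by
  classical
  have : ∀ γ : E, ∃ a, CofC a γ.1 := fun γ => hE2 _ γ.2
  choose a ha using this
  obtain ⟨γ, hγ⟩ := game_fix hRg h (ι := E) (fun γ => Function.update C ν (a γ))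
    (fun γ S => ok S ∧ ∀ x ∈ S, x < ν → x < γ.1) (by
      intro G
      set B : Set Ordinal.{u} := {x | x ∈ t} ∪ ⋃ ν' ∈ {ν | ν ∈ Rg ∧ C ν ≠ Iio ν}, C ν' with hB
      have hBc : B.Countable := by
        refine (countable_list_mem t).union (hCc.biUnion ?_)
        rintro x ⟨h1, h2⟩
        exact hC x h1 h2
      obtain ⟨γ, h1, h2, h3⟩ := stat_closed (hRg ν hν) hE G hBc
      refine ⟨⟨γ, h1⟩, cl G (B ∪ Iio γ), cl_cls _ _, ?_, ?_, ?_⟩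
      · intro x hx; exact subset_cl _ _ (Or.inl (Or.inl hx))
      · intro S hS hok
        exact ⟨hok, fun x hx hxν => h3 x (hS hx) hxν⟩
      · intro ν' hν'N hν'R ξ hξ
        by_cases hνν : ν' = ν
        · subst hνν
          simp only [Function.update_self] at hξ
          have hξ2 := (ha _).2.1 hξ
          left
          refine ⟨subset_cl _ _ (Or.inr hξ2), ?_⟩
          rw [hCν]
          exact lt_trans hξ2 h2
        · simp only [Function.update_of_ne hνν] at hξ
          by_cases hfix : C ν' = Iio ν'
          · rw [hfix] at hξ
            rcases lt_trichotomy ν' ν with hlt | heq | hgt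
            · left
              refine ⟨subset_cl _ _ (Or.inr ?_), by rw [hfix]; exact hξ⟩
              exact lt_trans hξ (h3 ν' hν'N hlt)
            · exact absurd heq hνν
            · right
              refine ⟨hfix, hξ, ?_⟩
              exact (mk_le_mk_of_subset hE.1).trans_lt ((hRg ν' hν'R).mk_lt hgt)
          · left
            refine ⟨subset_cl _ _ (Or.inl (Or.inr ?_)), hξ⟩
            exact mem_biUnion (show ν' ∈ {ν | ν ∈ Rg ∧ C ν ≠ Iio ν} from ⟨hν'R, hfix⟩) hξ)
  exact ⟨γ.1, γ.2, a γ, ha γ, hγ⟩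

/-- Fixing a code for the trace on `k`. -/
theorem game_fix_code (hRg : ∀ ν ∈ Rg, RegO ν) {C : Ordinal.{u} → Set Ordinal.{u}}
    {ok : Set Ordinal.{u} → Prop}
    {t : List Ordinal.{u}} (h : ¬ IW F Rg C ok t) {k : Ordinal.{u}}
    (hC : ∀ ν ∈ Rg, (C ν = Iio ν ∧ #(Iio k) < #(Iio ν)) ∨ (C ν).Countable)
    (hCc : {ν | ν ∈ Rg ∧ (C ν).Countable}.Countable)
    {Dc : Ordinal.{u} → Set Ordinal.{u}}
    (hDc : ∀ b ⊆ Iio k, b.Countable → ∃ ρ < k, b ⊆ Dc ρ) :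
    ∃ ρ < k, ¬ IW F Rg C (fun S => ok S ∧ ∀ x ∈ S, x < k → x ∈ Dc ρ) t := by
  obtain ⟨ρ, hρ⟩ := game_fix hRg h (ι := Iio k) (fun _ => C)
    (fun ρ S => ok S ∧ ∀ x ∈ S, x < k → x ∈ Dc ρ.1) (by
      intro G
      set B : Set Ordinal.{u} := {x | x ∈ t} ∪ ⋃ ν' ∈ {ν | ν ∈ Rg ∧ (C ν).Countable}, C ν' with hB
      have hBc : B.Countable := by
        refine (countable_list_mem t).union (hCc.biUnion ?_)
        rintro x ⟨h1, h2⟩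
        exact h2
      obtain ⟨ρ, h1, h2⟩ := hDc (cl G B ∩ Iio k) inter_subset_right
        ((cl_countable hBc).mono inter_subset_left)
      refine ⟨⟨ρ, h1⟩, cl G B, cl_cls _ _, ?_, ?_, ?_⟩
      · intro x hx; exact subset_cl _ _ (Or.inl hx)
      · intro S hS hok
        exact ⟨hok, fun x hx hxν => h2 ⟨hS hx, hxν⟩⟩
      · intro ν' hν'N hν'R ξ hξ
        rcases hC ν' hν'R with hcase | hcase
        · right
          exact ⟨hcase.1, by rw [hcase.1] at hξ; exact hξ, hcase.2⟩
        · left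
          refine ⟨subset_cl _ _ (Or.inr ?_), hξ⟩
          exact mem_biUnion (show ν' ∈ {ν | ν ∈ Rg ∧ (C ν).Countable} from ⟨hν'R, hcase⟩) hξ)
  exact ⟨ρ.1, ρ.2, hρ⟩

theorem game_init (hRg : ∀ ν ∈ Rg, RegO ν) (t : List Ordinal.{u}) :
    ¬ IW F Rg (fun ν => Iio ν) (fun _ => True) t := by
  classical
  rintro ⟨τ, hτ⟩
  let next : List Ordinal.{u} → List Ordinal.{u} := fun t' =>
    if Legal F Rg (fun ν => Iio ν) t' (τ t') then ((τ t').2 + 1) :: t' else t'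
  obtain ⟨n, hn⟩ := hτ (fun n => next^[n] t) rfl (by
    intro n
    simp only [Function.iterate_succ_apply']
    generalize next^[n] t = t'
    by_cases hL : Legal F Rg (fun ν => Iio ν) t' (τ t')
    · left
      refine ⟨hL, (τ t').2 + 1, by simp, (hRg _ hL.2.1).succ_lt hL.2.2, ?_⟩
      simp only [next, if_pos hL]
    · right
      exact ⟨hL, by simp only [next, if_neg hL]⟩)
  exact hn trivial

end game

/-- `γ` is the supremum of `M ∩ ν`, and it is smaller than `ν`. -/
def Sp (M : Set Ordinal.{u}) (ν γ : Ordinal.{u}) : Prop :=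
  γ < ν ∧ (∀ x ∈ M, x < ν → x < γ) ∧ ∀ x < γ, ∃ y ∈ M, y < ν ∧ x < y

structure GSt : Type (u+1) where
  C : Ordinal.{u} → Set Ordinal.{u}
  ok : Set Ordinal.{u} → Prop
  t : List Ordinal.{u}

def GGood (F : ℕ → List Ordinal.{u} → Ordinal.{u}) (Rg : Set Ordinal.{u})
    (E : Ordinal.{u} → Set Ordinal.{u}) (s : GSt.{u}) : Prop :=
  ¬ IW F Rg s.C s.ok s.t ∧
  (∀ ν ∈ Rg, (s.C ν = Iio ν ∧ OrdStationary ν (E ν) ∧ ∀ γ ∈ E ν, ∃ a, CofC a γ) ∨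
    (∃ γ ∈ E ν, γ < ν ∧ CofC (s.C ν) γ ∧ ∀ S, s.ok S → ∀ x ∈ S, x < ν → x < γ)) ∧
  {ν | ν ∈ Rg ∧ s.C ν ≠ Iio ν}.Countable

theorem assembly {F : ℕ → List Ordinal.{u} → Ordinal.{u}} {Rg : Set Ordinal.{u}}
    (hRg : ∀ ν ∈ Rg, RegO ν) {E : Ordinal.{u} → Set Ordinal.{u}} {s0 : GSt.{u}}
    (hs0 : GGood F Rg E s0) :
    ∃ M : Set Ordinal.{u}, M.Countable ∧ Cls F M ∧ (∀ x ∈ s0.t, x ∈ M) ∧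
      (∀ x ∈ M, ∃ S, x ∈ S ∧ s0.ok S) ∧ ∀ ν ∈ M, ν ∈ Rg → ∃ γ ∈ E ν, Sp M ν γ := by
  classical
  obtain ⟨en, hen⟩ := exists_en (α := Ordinal.{u})
  let Ext : {s // GGood F Rg E s} → {s // GGood F Rg E s} → Prop := fun a b =>
    (∀ x ∈ a.1.t, x ∈ b.1.t) ∧ (∀ S, b.1.ok S → a.1.ok S) ∧ 
      ∀ ν, a.1.C ν ≠ Iio ν → b.1.C ν = a.1.C ν
  let Tk : {s // GGood F Rg E s} → Set (Ordinal.{u} × ℕ) := fun s =>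
    {x | x.1 ∈ Hl F s.1.t ∧ x.1 ∈ Rg}
  let Done : {s // GGood F Rg E s} → Ordinal.{u} × ℕ → Prop := fun s x =>
    s.1.C x.1 ≠ Iio x.1 ∧ ((s.1.C x.1).Nonempty → ∃ η ∈ s.1.t, en (s.1.C x.1) x.2 < η ∧ η < x.1)
  -- first step: fix ν
  have step1 : ∀ s : {s // GGood F Rg E s}, ∀ ν ∈ Rg, ∃ s', Ext s s' ∧ s'.1.C ν ≠ Iio ν := by
    rintro ⟨⟨C, ok, t⟩, hg1, hg2, hg3⟩ ν hν
    simp only at hg1 hg2 hg3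
    by_cases hfix : C ν = Iio ν
    swap
    · exact ⟨⟨⟨C, ok, t⟩, hg1, hg2, hg3⟩, ⟨fun _ h => h, fun _ h => h, fun _ _ => rfl⟩, hfix⟩
    have hst : OrdStationary ν (E ν) ∧ ∀ γ ∈ E ν, ∃ a, CofC a γ := by
      rcases hg2 ν hν with h | ⟨γ, -, h1, h2, -⟩
      · exact h.2
      · rw [hfix] at h2
        exact absurd (mem_Iio.1 (h2.2.1 h1)) (lt_irrefl _)
    obtain ⟨γ, hγE, a, ha, hal⟩ := game_fix_one hRg hg1 (by
      intro ν' h1 h2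
      rcases hg2 ν' h1 with h | ⟨γ, -, -, h3, -⟩
      · exact absurd h.1 h2
      · exact h3.1) hg3 hν hfix hst.1 hst.2
    have hγν : γ < ν := hst.1.1 hγE
    have hane : a ≠ Iio ν := by
      rintro rfl
      exact absurd (mem_Iio.1 (ha.2.1 hγν)) (lt_irrefl _)
    refine ⟨⟨⟨Function.update C ν a, fun S => ok S ∧ ∀ x ∈ S, x < ν → x < γ, t⟩, hal, ?_, ?_⟩, ⟨?_, ?_, ?_⟩, ?_⟩
    · intro ν' hν'
      simp only
      by_cases hνν : ν' = ν
      · subst hνν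
        right
        simp only [Function.update_self]
        exact ⟨γ, hγE, hγν, ha, fun S hS => hS.2⟩
      · simp only [Function.update_of_ne hνν]
        rcases hg2 ν' hν' with h | ⟨γ', h1, h2, h3, h4⟩
        · exact Or.inl h
        · exact Or.inr ⟨γ', h1, h2, h3, fun S hS => h4 S hS.1⟩
    · refine (hg3.union (countable_singleton ν)).mono ?_
      rintro ν' ⟨h1, h2⟩
      by_cases hνν : ν' = ν
      · exact Or.inr hνν
      · simp only [Function.update_of_ne hνν] at h2
        exact Or.inl ⟨h1, h2⟩
    · exact fun _ h => h
    · exact fun S h => h.1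
    · intro ν' h
      have hνν : ν' ≠ ν := by rintro rfl; exact h hfix
      simp only [Function.update_of_ne hνν]
    · simpa only [Function.update_self] using hane
  have step2 : ∀ s : {s // GGood F Rg E s}, ∀ x ∈ Tk s, ∃ s', Ext s s' ∧ Done s' x := by
    rintro s ⟨ν, n⟩ ⟨hx1, hx2⟩
    obtain ⟨⟨⟨C, ok, t⟩, hg1, hg2, hg3⟩, hE1, hfix⟩ := step1 s ν hx2
    simp only at hfix hg1 hg2 hg3
    by_cases hne : (C ν).Nonempty
    swap
    · exact ⟨_, hE1, hfix, fun h => absurd h hne⟩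
    have hcc : (C ν).Countable := by
      rcases hg2 ν hx2 with h | ⟨γ, -, -, h3, -⟩
      · exact absurd h.1 hfix
      · exact h3.1
    have hmem : en (C ν) n ∈ C ν := by
      have h : en (C ν) n ∈ range (en (C ν)) := ⟨n, rfl⟩
      rwa [← hen _ hcc hne] at h
    obtain ⟨η, h1, h2, h3⟩ := alive_reply hg1 (m := (ν, en (C ν) n)) ⟨Hl_mono hE1.1 hx1, hx2, hmem⟩
    refine ⟨⟨⟨C, ok, η :: t⟩, h3, hg2, hg3⟩, ⟨fun x hx => List.mem_cons_of_mem _ (hE1.1 x hx), hE1.2.1, hE1.2.2⟩, hfix, fun _ => ⟨η, ?_, h1, h2⟩⟩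
    simp
  obtain ⟨p, hp0, hpE, hpD⟩ := bookkeeping Ext (fun s => ⟨fun _ h => h, fun _ h => h, fun _ _ => rfl⟩)
    (fun a b c h1 h2 => ⟨fun x hx => h2.1 x (h1.1 x hx), fun S hS => h1.2.1 S (h2.2.1 S hS),
      fun ν hν => by
        have h3 := h1.2.2 ν hν
        rw [h2.2.2 ν (by rw [h3]; exact hν), h3]⟩)
    Tk (by
      intro s
      have h1 : (Hl F s.1.t).Countable := cl_countable (countable_list_mem _)
      refine (h1.prod (countable_univ (α := ℕ))).mono ?_
      rintro x ⟨h1, h2⟩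
      exact ⟨h1, mem_univ _⟩)
    (fun s s' h x hx => ⟨Hl_mono h.1 hx.1, hx.2⟩) Done step2 ⟨s0, hs0⟩
  have hmono : Monotone (fun n => Hl F (p n).1.t) := fun m n hmn => Hl_mono (hpE m n hmn).1
  refine ⟨⋃ n, Hl F (p n).1.t, countable_iUnion fun n => cl_countable (countable_list_mem _),
    cls_iUnion hmono (fun n => cl_cls _ _), ?_, ?_, ?_⟩
  · intro x hx
    refine mem_iUnion.2 ⟨0, subset_cl _ _ ?_⟩
    rw [hp0]; exact hx
  · intro x hx
    obtain ⟨n, hn⟩ := mem_iUnion.1 hx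
    refine ⟨_, hn, ?_⟩
    have := (hpE 0 n (Nat.zero_le _)).2.1 _ (alive_ok (p n).2.1)
    rwa [hp0] at this
  · intro ν hν hνR
    obtain ⟨n, hn⟩ := mem_iUnion.1 hν
    obtain ⟨m, hm, -⟩ := hpD n (ν, 0) ⟨hn, hνR⟩
    simp only at hm
    obtain ⟨γ, hγE, hγν, hγ1, hγ2⟩ := ((p m).2.2.1 ν hνR).resolve_left (fun h => hm h.1)
    refine ⟨γ, hγE, hγν, ?_, ?_⟩
    · intro x hx hxν
      obtain ⟨i, hi⟩ := mem_iUnion.1 hx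
      refine hγ2 (Hl F (p (max m i)).1.t) ?_ x (hmono (le_max_right m i) hi) hxν
      exact (hpE m _ (le_max_left _ _)).2.1 _ (alive_ok (p (max m i)).2.1)
    · intro y hy
      obtain ⟨ξ, hξ, hyξ⟩ := hγ1.2.2 y hy
      have hr := hen _ hγ1.1 ⟨ξ, hξ⟩
      have hξ2 := hξ
      rw [hr] at hξ2
      obtain ⟨j, rfl⟩ := hξ2
      obtain ⟨m', hm', hm2⟩ := hpD n (ν, j) ⟨hn, hνR⟩
      simp only at hm' hm2
      have heq : (p m').1.C ν = (p m).1.C ν := by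
        rcases le_total m m' with h | h
        · exact (hpE m m' h).2.2 ν hm
        · exact ((hpE m' m h).2.2 ν hm').symm
      rw [heq] at hm2
      obtain ⟨η, h1, h2, h3⟩ := hm2 ⟨_, hξ⟩
      exact ⟨η, mem_iUnion.2 ⟨m', subset_cl _ _ h1⟩, h3, hyξ.trans_lt h2⟩

open Classical in
noncomputable def hsp (ν : Ordinal.{u}) : Ordinal.{u} → Ordinal.{u} :=
  if h : RegO ν then Classical.choose (splitting h) else id

theorem hsp_spec {ν : Ordinal.{u}} (h : RegO ν) : ∀ j < ν, OrdStationary ν {γ | γ ∈ Sω ν ∧ hsp ν γ = j} := by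
  rw [hsp, dif_pos h]
  exact Classical.choose_spec (splitting h)

theorem RegO.omega1_le {ν : Ordinal.{u}} (h : RegO ν) : omega1 ≤ ν := by
  obtain ⟨c, h1, h2, rfl⟩ := h
  refine Cardinal.ord_le_ord.2 ?_
  rw [← succ_aleph0]
  exact Order.succ_le_of_lt h2

theorem cofC_Iio {δ : Ordinal.{u}} (h : δ < omega1) : CofC (Iio δ) δ :=
  ⟨countable_Iio_omega1 h, Subset.rfl, fun x hx => ⟨x, hx, le_rfl⟩⟩

theorem model_start (F : ℕ → List Ordinal.{u} → Ordinal.{u}) {Rg : Set Ordinal.{u}}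
    (hRg : ∀ ν ∈ Rg, RegO ν) (h1 : omega1 ∈ Rg) {T : Set Ordinal.{u}} (hT : OrdStationary omega1 T)
    (t : List Ordinal.{u}) : ∃ δ ∈ T, ∃ C : Ordinal.{u} → Set Ordinal.{u}, CofC (C omega1) δ ∧
      (∀ ν, ν ≠ omega1 → C ν = Iio ν) ∧ ¬ IW F Rg C (fun S => ∀ x ∈ S, x < omega1 → x < δ) t := by
  obtain ⟨δ, hδ, a, ha, h⟩ := game_fix_one hRg (game_init (F := F) hRg t) (fun ν _ h => absurd rfl h)
    (by simp) h1 rfl hT (fun γ hγ => ⟨_, cofC_Iio (hT.1 hγ)⟩)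
  exact ⟨δ, hδ, Function.update (fun ν => Iio ν) omega1 a, by rw [Function.update_self]; exact ha,
    fun ν hν => Function.update_of_ne hν _ _, by simpa using h⟩

theorem initial_seg {M : Set Ordinal.{u}} (hM : ∀ x ∈ M, x < omega1 → ∀ y < x, y ∈ M)
    {δ : Ordinal.{u}} (h : Sp M omega1 δ) : M ∩ Iio omega1 = Iio δ := by
  ext x
  constructor
  · rintro ⟨h1, h2⟩; exact h.2.1 x h1 h2
  · intro hx
    obtain ⟨y, h1, h2, h3⟩ := h.2.2 x hx
    exact ⟨hM y h1 h2 x h3, h3.trans h2⟩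

theorem model_T1 (F : ℕ → List Ordinal.{u} → Ordinal.{u})
    (hF : ∀ M, Cls F M → ∀ x ∈ M, x < omega1 → ∀ y < x, y ∈ M)
    {T : Set Ordinal.{u}} (hT : OrdStationary omega1 T) :
    ∃ M : Set Ordinal.{u}, M.Countable ∧ Cls F M ∧ ∃ δ ∈ T, M ∩ Iio omega1 = Iio δ ∧
      ∀ ν ∈ M, RegO ν → omega1 < ν → ∃ γ, Sp M ν γ ∧ hsp ν γ = δ := by
  classical
  have hRg : ∀ ν ∈ {ν : Ordinal.{u} | RegO ν}, RegO ν := fun ν h => h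
  obtain ⟨δ, hδ, C, ha, hCn, h⟩ := model_start F hRg regO_omega1 hT [omega1]
  have hδ1 : δ < omega1 := hT.1 hδ
  let E : Ordinal.{u} → Set Ordinal.{u} := fun ν => if ν = omega1 then {δ} else {γ | γ ∈ Sω ν ∧ hsp ν γ = δ}
  have hEω : E omega1 = {δ} := if_pos rfl
  have hEn : ∀ ν, ν ≠ omega1 → E ν = {γ | γ ∈ Sω ν ∧ hsp ν γ = δ} := fun ν h => if_neg h
  obtain ⟨M, hM1, hM2, hM3, hM4, hM5⟩ := assembly (E := E) (s0 := ⟨_, _, _⟩) hRg ⟨h, by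
    intro ν hν
    by_cases hνω : ν = omega1
    · subst hνω
      right
      exact ⟨δ, by rw [hEω]; rfl, hδ1, ha, fun S h => h⟩
    · left
      simp only [hCn ν hνω, hEn ν hνω]
      refine ⟨trivial, hsp_spec hν _ (hδ1.trans_le hν.omega1_le), fun γ hγ => hγ.1.2⟩, by
    refine (countable_singleton omega1).mono ?_
    rintro ν ⟨h1, h2⟩
    by_contra hνω
    exact h2 (hCn ν hνω)⟩
  have hω := hM3 omega1 (by simp)
  refine ⟨M, hM1, hM2, δ, hδ, ?_, ?_⟩
  · obtain ⟨γ, hγ, hS⟩ := hM5 omega1 hω regO_omega1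
    rw [hEω] at hγ
    obtain rfl : γ = δ := hγ
    exact initial_seg (hF M hM2) hS
  · intro ν hν hνR hlt
    obtain ⟨γ, hγ, hS⟩ := hM5 ν hν hνR
    rw [hEn ν hlt.ne'] at hγ
    exact ⟨γ, hS, hγ.2⟩

theorem model_T0 (F : ℕ → List Ordinal.{u} → Ordinal.{u})
    (hF : ∀ M, Cls F M → ∀ x ∈ M, x < omega1 → ∀ y < x, y ∈ M)
    {T : Set Ordinal.{u}} (hT : OrdStationary omega1 T) {l k : Ordinal.{u}} (hl : RegO l)
    (hl1 : omega1 < l) (hk : k < l) 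
    {Dc : Ordinal.{u} → Set Ordinal.{u}}
    (hDc : ∀ b ⊆ Iio k, b.Countable → ∃ ρ < k, b ⊆ Dc ρ) :
    ∃ M : Set Ordinal.{u}, M.Countable ∧ Cls F M ∧ ∃ δ ∈ T, M ∩ Iio omega1 = Iio δ ∧
      ∃ γ, Sp M l γ ∧ hsp l γ < k ∧ ∀ x ∈ M, x < k → x ∈ Dc (hsp l γ) := by
  classical
  have hRg : ∀ ν ∈ ({omega1, l} : Set Ordinal.{u}), RegO ν := by
    rintro ν (rfl | rfl)
    · exact regO_omega1
    · exact hl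
  obtain ⟨δ, hδ, C, ha, hCn, h⟩ := model_start F hRg (by simp) hT [omega1, l]
  have hδ1 : δ < omega1 := hT.1 hδ
  obtain ⟨ρ, hρ, h⟩ := game_fix_code hRg h (k := k) (Dc := Dc) (by
    rintro ν (rfl | rfl)
    · right; exact ha.1
    · left
      simp only [hCn _ hl1.ne']
      exact ⟨trivial, hl.mk_lt hk⟩)
    (by exact (Set.toFinite ({omega1, l} : Set Ordinal.{u})).countable.mono fun x hx => hx.1) hDc
  let E : Ordinal.{u} → Set Ordinal.{u} := fun ν => if ν = omega1 then {δ} else {γ | γ ∈ Sω ν ∧ hsp ν γ = ρ}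
  have hEω : E omega1 = {δ} := if_pos rfl
  have hEn : ∀ ν, ν ≠ omega1 → E ν = {γ | γ ∈ Sω ν ∧ hsp ν γ = ρ} := fun ν h => if_neg h
  obtain ⟨M, hM1, hM2, hM3, hM4, hM5⟩ := assembly (E := E) (s0 := ⟨_, _, _⟩) hRg ⟨h, by
    rintro ν (hν | hν)
    · subst hν
      right
      exact ⟨δ, by rw [hEω]; rfl, hδ1, ha, fun S h => h.1⟩
    · have hν : ν = l := hν
      subst hν
      left
      simp only [hCn _ hl1.ne', hEn _ hl1.ne']
      refine ⟨trivial, hsp_spec hl _ (hρ.trans hk), fun γ hγ => hγ.1.2⟩, by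
    refine (countable_singleton omega1).mono ?_
    rintro ν ⟨h1, h2⟩
    by_contra hνω
    exact h2 (hCn ν hνω)⟩
  have hω := hM3 omega1 (by simp)
  have hlM := hM3 l (by simp)
  refine ⟨M, hM1, hM2, δ, hδ, ?_, ?_⟩
  · obtain ⟨γ, hγ, hS⟩ := hM5 omega1 hω (by simp)
    rw [hEω] at hγ
    obtain rfl : γ = δ := hγ
    exact initial_seg (hF M hM2) hS
  · obtain ⟨γ, hγ, hS⟩ := hM5 l hlM (by simp)
    rw [hEn l hl1.ne'] at hγ
    refine ⟨γ, hS, by rw [hγ.2]; exact hρ, fun x hx hxk => ?_⟩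
    rw [hγ.2]
    obtain ⟨S, h1, h2⟩ := hM4 x hx
    exact h2.2 x h1 hxk

theorem ord_equiv (c : Cardinal.{u}) : ∃ e : c.out → Ordinal.{u}, Function.Injective e ∧ range e = Iio c.ord := by
  have h : Cardinal.lift.{u+1} #(c.out) = Cardinal.lift.{u} #(Iio c.ord) := by
    rw [mk_Iio_ordinal, card_ord, mk_out, Cardinal.lift_id'.{u,u+1}]
  obtain ⟨e⟩ := Cardinal.lift_mk_eq'.1 h
  refine ⟨fun x => (e x).1, fun x y hxy => e.injective (Subtype.ext hxy), ?_⟩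
  ext x
  constructor
  · rintro ⟨y, rfl⟩; exact (e y).2
  · intro hx; exact ⟨e.symm ⟨x, hx⟩, by simp⟩

theorem inj_code {W : Type u} {c : Cardinal.{u}} (h : #W ≤ c) :
    ∃ i : W → Ordinal.{u}, Function.Injective i ∧ ∀ w, i w < c.ord := by
  obtain ⟨e, he1, he2⟩ := ord_equiv c
  rw [← mk_out c] at h
  obtain ⟨f⟩ := h
  refine ⟨fun w => e (f w), fun x y hxy => f.injective (he1 hxy), fun w => ?_⟩
  have : e (f w) ∈ range e := ⟨_, rfl⟩
  rwa [he2] at this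

theorem surj_code {W : Type u} [Nonempty W] {c : Cardinal.{u}} (h : #W ≤ c) :
    ∃ s : Ordinal.{u} → W, ∀ w, ∃ ρ < c.ord, s ρ = w := by
  obtain ⟨i, hi1, hi2⟩ := inj_code h
  exact ⟨Function.invFun i, fun w => ⟨i w, hi2 w, Function.leftInverse_invFun hi1 w⟩⟩

/-- Coding data. -/
structure Dat (X : Type u) (Γ : Set (Set X)) where
  k : Ordinal.{u}
  l : Ordinal.{u}
  L : Ordinal.{u}
  lamc : Cardinal.{u}
  hL : L = lamc.ord
  hlam : aleph 2 ≤ lamc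
  hk1 : omega1 < k
  hkl : k < l
  hlL : l < L
  regl : RegO l
  iX : X → Ordinal.{u}
  iXinj : Function.Injective iX
  iXk : ∀ x, iX x < k
  Dc : Ordinal.{u} → Set Ordinal.{u}
  hDc : ∀ b ⊆ Iio k, b.Countable → ∃ ρ < k, b ⊆ Dc ρ
  Tc : Ordinal.{u} → Set Ordinal.{u}
  hTc : ∀ T ⊆ Iio omega1, ∃ τ < k, Tc τ = T
  Gc : Ordinal.{u} → Set X
  hGc : ∀ ρ, Gc ρ ∈ Γ
  fc : Ordinal.{u} → Ordinal.{u} → X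
  hfc : ∀ ρ, Gc ρ ⊆ fc ρ '' Iio omega1
  ps : Ordinal.{u} → Ordinal.{u}
  hps1 : ∀ ρ, ps ρ < k
  hps2 : ∀ ρ x, iX x ∈ Dc ρ → x ∈ Gc (ps ρ)
  hps3 : ∀ ρ, ∀ ρ' ∈ Dc ρ, Gc ρ' ⊆ Gc (ps ρ)

theorem exists_Dat (X : Type u) [Nonempty X] (Γ : Set (Set X)) (h1 : ∀ c ∈ Γ, #c ≤ aleph 1)
    (h2 : ∀ s : Set X, #s ≤ aleph 1 → ∃ c ∈ Γ, s ⊆ c) : Nonempty (Dat X Γ) := by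
  classical
  set μ : Cardinal.{u} := max #X (aleph 1) with hμ
  set κ : Cardinal.{u} := 2 ^ μ with hκ
  have hμκ : μ < κ := cantor μ
  have hωμ : aleph 1 ≤ μ := le_max_right _ _
  have hω0 : ℵ₀ ≤ μ := aleph0_lt_aleph_one.le.trans hωμ
  have hω1 : ℵ₀ ≤ κ := hω0.trans hμκ.le
  have hregl : RegO (Order.succ κ).ord :=
    ⟨_, isRegular_succ hω1, hω1.trans_lt (Order.lt_succ κ), rfl⟩
  obtain ⟨iX, hi1, hi2⟩ := inj_code (W := X) (c := κ) ((le_max_left _ _).trans hμκ.le)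
  -- countable sets
  obtain ⟨e, he1, he2⟩ := ord_equiv κ
  have hκne : Nonempty κ.out := by
    rw [← mk_ne_zero_iff, mk_out]
    exact (aleph0_pos.trans_le hω1).ne'
  obtain ⟨sD, hsD⟩ := surj_code (W := ℕ → κ.out) (c := κ) (by
    have : #(ℕ → κ.out) = κ ^ ℵ₀ := by
      rw [Cardinal.mk_arrow, mk_out]; simp
    rw [this, hκ, ← power_mul, mul_aleph0_eq hω0])
  let Dc : Ordinal.{u} → Set Ordinal.{u} := fun ρ => range fun n => e (sD ρ n)
  have hDcc : ∀ ρ, (Dc ρ).Countable := fun ρ => countable_range _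
  have hDc : ∀ b ⊆ Iio κ.ord, b.Countable → ∃ ρ < κ.ord, b ⊆ Dc ρ := by
    intro b hb hbc
    rcases b.eq_empty_or_nonempty with rfl | hne
    · obtain ⟨ρ, hρ, -⟩ := hsD (fun _ => Classical.arbitrary _)
      exact ⟨ρ, hρ, by simp⟩
    · obtain ⟨m, rfl⟩ := hbc.exists_eq_range hne
      have : ∀ n, ∃ w, e w = m n := by
        intro n
        have : m n ∈ range e := by rw [he2]; exact hb ⟨n, rfl⟩
        exact this
      choose w hw using this
      obtain ⟨ρ, hρ, hρw⟩ := hsD w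
      refine ⟨ρ, hρ, ?_⟩
      rintro _ ⟨n, rfl⟩
      refine ⟨n, ?_⟩
      simp only [hρw, hw]
  -- subsets of omega1
  obtain ⟨e1, he11, he12⟩ := ord_equiv (aleph 1 : Cardinal.{u})
  obtain ⟨sT, hsT⟩ := surj_code (W := Set (aleph 1 : Cardinal.{u}).out) (c := κ) (by
    rw [mk_set, mk_out]
    exact power_le_power_left two_ne_zero hωμ)
  have hTc : ∀ T ⊆ Iio omega1, ∃ τ < κ.ord, e1 '' (sT τ) = T := by
    intro T hT
    obtain ⟨τ, h3, h4⟩ := hsT (e1 ⁻¹' T)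
    refine ⟨τ, h3, ?_⟩
    rw [h4, image_preimage_eq_iff, he12]
    exact hT
  -- Γ
  have hΓne : Nonempty Γ := by
    obtain ⟨c, hc, -⟩ := h2 ∅ (by simp)
    exact ⟨⟨c, hc⟩⟩
  obtain ⟨sG, hsG⟩ := surj_code (W := Γ) (c := κ) (by
    refine (mk_set_le Γ).trans ?_
    rw [mk_set]
    exact power_le_power_left two_ne_zero (le_max_left _ _))
  have hfc : ∀ ρ : Ordinal.{u}, ∃ f : Ordinal.{u} → X, (sG ρ).1 ⊆ f '' Iio omega1 := by
    intro ρ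
    rcases (sG ρ).1.eq_empty_or_nonempty with h | h
    · exact ⟨fun _ => Classical.arbitrary _, by simp [h]⟩
    · have := h.to_subtype
      obtain ⟨s, hs⟩ := surj_code (W := (sG ρ).1) (c := aleph 1) (h1 _ (sG ρ).2)
      refine ⟨fun x => s x, ?_⟩
      intro x hx
      obtain ⟨ξ, h3, h4⟩ := hs ⟨x, hx⟩
      exact ⟨ξ, h3, by simp [h4]⟩
  choose fc hfc using hfc
  have hps : ∀ ρ : Ordinal.{u}, ∃ ρ' < κ.ord, (∀ x, iX x ∈ Dc ρ → x ∈ (sG ρ').1) ∧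
      ∀ ρ'' ∈ Dc ρ, (sG ρ'').1 ⊆ (sG ρ').1 := by
    intro ρ
    obtain ⟨c, hc, hc2⟩ := h2 (iX ⁻¹' (Dc ρ) ∪ ⋃ n : ULift.{u} ℕ, (sG (e (sD ρ n.down))).1) (by
      refine (mk_union_le _ _).trans (add_le_of_le aleph0_lt_aleph_one.le ?_ ?_)
      · refine le_trans ?_ aleph0_lt_aleph_one.le
        rw [le_aleph0_iff_set_countable]
        exact (hDcc ρ).preimage hi1
      · refine (mk_iUnion_le _).trans (mul_le_of_le aleph0_lt_aleph_one.le ?_ ?_)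
        · simp [aleph0_lt_aleph_one.le]
        · exact ciSup_le' fun n => h1 _ (sG _).2)
    obtain ⟨ρ', h3, h4⟩ := hsG ⟨c, hc⟩
    refine ⟨ρ', h3, ?_, ?_⟩
    · intro x hx; rw [h4]; exact hc2 (Or.inl hx)
    · rintro _ ⟨n, rfl⟩
      rw [h4]
      intro x hx
      exact hc2 (Or.inr (mem_iUnion.2 ⟨⟨n⟩, hx⟩))
  choose ps hps1 hps2 hps3 using hps
  exact ⟨{
    k := κ.ord
    l := (Order.succ κ).ord
    L := (Order.succ (Order.succ κ)).ord
    lamc := Order.succ (Order.succ κ)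
    hL := rfl
    hlam := by
      have : (aleph 2 : Cardinal.{u}) = Order.succ (aleph 1) := by
        rw [succ_aleph]; congr 1
        exact one_add_one_eq_two.symm
      rw [this]
      exact Order.succ_le_succ ((hωμ.trans hμκ.le).trans (Order.le_succ κ))
    hk1 := Cardinal.ord_lt_ord.2 (hωμ.trans_lt hμκ)
    hkl := Cardinal.ord_lt_ord.2 (Order.lt_succ _)
    hlL := Cardinal.ord_lt_ord.2 (Order.lt_succ _)
    regl := hregl
    iX := iX
    iXinj := hi1
    iXk := hi2
    Dc := Dc
    hDc := hDc
    Tc := fun τ => e1 '' (sT τ)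
    hTc := hTc
    Gc := fun ρ => (sG ρ).1
    hGc := fun ρ => (sG ρ).2
    fc := fc
    hfc := hfc
    ps := ps
    hps1 := hps1
    hps2 := hps2
    hps3 := hps3 }⟩

/-- Cofinal maps. -/
theorem exists_cof_maps : ∃ cz ci : Ordinal.{u} → Ordinal.{u} → Ordinal.{u}, ∀ ζ,
    (∀ ξ < ζ.cof.ord, cz ζ ξ < ζ) ∧
    (∀ ξ ξ', ξ ≤ ξ' → ξ' < ζ.cof.ord → cz ζ ξ ≤ cz ζ ξ') ∧
    (∀ x < ζ, ci ζ x < ζ.cof.ord ∧ x ≤ cz ζ (ci ζ x)) := by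
  classical
  have : ∀ ζ : Ordinal.{u}, ∃ c i : Ordinal.{u} → Ordinal.{u}, (∀ ξ < ζ.cof.ord, c ξ < ζ) ∧
    (∀ ξ ξ', ξ ≤ ξ' → ξ' < ζ.cof.ord → c ξ ≤ c ξ') ∧
    (∀ x < ζ, i x < ζ.cof.ord ∧ x ≤ c (i x)) := by
    intro ζ
    obtain ⟨f, hf⟩ := Ordinal.exists_isFundamentalSeq (o := ζ) rfl
    have hi : ∀ x, ∃ y, x < ζ → y < ζ.cof.ord ∧ x ≤ (if h : y < ζ.cof.ord then (f ⟨y, h⟩).1 else 0) := by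
      intro x
      by_cases hx : x < ζ
      · obtain ⟨_, ⟨y, rfl⟩, hy⟩ := hf.isCofinal_range ⟨x, hx⟩
        refine ⟨y.1, fun _ => ⟨y.2, ?_⟩⟩
        rw [dif_pos (show y.1 < ζ.cof.ord from y.2)]
        exact hy
      · exact ⟨0, fun h => absurd h hx⟩
    choose i hi using hi
    refine ⟨fun y => if h : y < ζ.cof.ord then (f ⟨y, h⟩).1 else 0, i, ?_, ?_, hi⟩
    · intro ξ hξ
      simp only [dif_pos hξ]
      exact (f _).2
    · intro ξ ξ' h h'
      simp only [dif_pos h', dif_pos (h.trans_lt h')]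
      exact hf.strictMono.monotone h
  choose cz ci h using this
  exact ⟨cz, ci, h⟩

noncomputable def enS : Set Ordinal.{u} → ℕ → Ordinal.{u} := Classical.choose exists_en
theorem enS_spec (S : Set Ordinal.{u}) (h : S.Countable) (h2 : S.Nonempty) : S = range (enS S) :=
  Classical.choose_spec exists_en S h h2

noncomputable def czF : Ordinal.{u} → Ordinal.{u} → Ordinal.{u} := Classical.choose exists_cof_maps
noncomputable def ciF : Ordinal.{u} → Ordinal.{u} → Ordinal.{u} :=
  Classical.choose (Classical.choose_spec exists_cof_maps)
theorem czF_spec : ∀ ζ : Ordinal.{u},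
    (∀ ξ < ζ.cof.ord, czF ζ ξ < ζ) ∧
    (∀ ξ ξ', ξ ≤ ξ' → ξ' < ζ.cof.ord → czF ζ ξ ≤ czF ζ ξ') ∧
    (∀ x < ζ, ciF ζ x < ζ.cof.ord ∧ x ≤ czF ζ (ciF ζ x)) :=
  Classical.choose_spec (Classical.choose_spec exists_cof_maps)

section Zdef
variable {X : Type u} {Γ : Set (Set X)} (d : Dat X Γ)

noncomputable def ops : ℕ → ℕ → List Ordinal.{u} → Ordinal.{u}
  | 0, n, l => enS (Iio (l.getD 0 0)) n
  | 1, _, _ => d.l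
  | 2, _, l => (l.getD 0 0).cof.ord
  | 3, _, l => czF (l.getD 0 0) (l.getD 1 0)
  | 4, _, l => ciF (l.getD 0 0) (l.getD 1 0)
  | 5, _, l => hsp d.l (l.getD 0 0)
  | 6, _, l => d.ps (l.getD 0 0)
  | _, _, l => d.iX (d.fc (l.getD 0 0) (l.getD 1 0))

open Classical in
noncomputable def F0 (n : ℕ) (l : List Ordinal.{u}) : Ordinal.{u} :=
  if combN (ops d) n l < d.L then combN (ops d) n l else 0

variable {d}

theorem Lpos : 0 < d.L := lt_of_le_of_lt zero_le d.hlL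

theorem F0_lt (n l) : F0 d n l < d.L := by
  unfold F0
  split_ifs with h
  · exact h
  · exact Lpos

theorem F0_ops {M : Set Ordinal.{u}} (hM : Cls (F0 d) M) (i n : ℕ) (l : List Ordinal.{u})
    (hl : ∀ x ∈ l, x ∈ M) (hlt : ops d i n l < d.L) : ops d i n l ∈ M := by
  have h := hM (Nat.pair i n) l hl
  have h2 : combN (ops d) (Nat.pair i n) l = ops d i n l := by simp [combN]
  unfold F0 at h
  rwa [h2, if_pos hlt] at h

theorem F0_one {M : Set Ordinal.{u}} {x : Ordinal.{u}} (hx : x ∈ M) : ∀ y ∈ [x], y ∈ M := by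
  simpa using hx
theorem F0_two {M : Set Ordinal.{u}} {x y : Ordinal.{u}} (hx : x ∈ M) (hy : y ∈ M) :
    ∀ z ∈ [x, y], z ∈ M := by
  simp [hx, hy]

theorem omega1_lt_L : omega1 < d.L := d.hk1.trans (d.hkl.trans d.hlL)

theorem F0_init {M : Set Ordinal.{u}} (hM : Cls (F0 d) M) : ∀ x ∈ M, x < omega1 → ∀ y < x, y ∈ M := by
  intro x hx hx1 y hy
  have h := enS_spec (Iio x) (countable_Iio_omega1 hx1) ⟨y, hy⟩
  have hy2 : y ∈ range (enS (Iio x)) := by rw [← h]; exact hy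
  obtain ⟨n, rfl⟩ := hy2
  exact F0_ops hM 0 n [x] (F0_one hx) ((hy.trans hx1).trans omega1_lt_L)

theorem F0_l {M : Set Ordinal.{u}} (hM : Cls (F0 d) M) : d.l ∈ M :=
  F0_ops hM 1 0 [] (by simp) d.hlL

theorem F0_inter {M : Set Ordinal.{u}} (hM : Cls (F0 d) M) : Cls (F0 d) (M ∩ Iio d.L) :=
  fun n l hl => ⟨hM n l fun x hx => (hl x hx).1, F0_lt n l⟩

variable (d)

/-- The ideal. -/
def Idl (Sig : Set (Set X)) (T : Set Ordinal.{u}) : Prop :=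
  ∃ F : ℕ → List Ordinal.{u} → Ordinal.{u}, ∀ M : Set Ordinal.{u}, M.Countable → Cls F M →
    ∀ δ ∈ T, M ∩ Iio omega1 = Iio δ → d.iX ⁻¹' M ∉ Sig

def ZZ (Sig : Set (Set X)) (A T0 T1 : Set Ordinal.{u}) : Set (Set Ordinal.{u}) :=
  {M | M ⊆ Iio d.L ∧ M.Countable ∧ Cls (F0 d) M ∧ ∃ δ < omega1, M ∩ Iio omega1 = Iio δ ∧
    (δ ∈ A → d.iX ⁻¹' M ∈ Sig ∨ ∃ τ ∈ M, Idl d Sig (d.Tc τ) ∧ δ ∈ d.Tc τ) ∧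
    (δ ∈ T0 → ∃ γ, Sp M d.l γ ∧ hsp d.l γ < d.k ∧ ∀ x ∈ M, x < d.k → x ∈ d.Dc (hsp d.l γ)) ∧
    (δ ∈ T1 → ∀ ν ∈ M, RegO ν → omega1 < ν → ∃ γ, Sp M ν γ ∧ hsp ν γ = δ)}

variable {d}

theorem exists_delta {M : Set Ordinal.{u}} (hc : M.Countable)
    (hM : ∀ x ∈ M, x < omega1 → ∀ y < x, y ∈ M) : ∃ δ < omega1, M ∩ Iio omega1 = Iio δ := by
  have hne : ∃ x < omega1.{u}, x ∉ M := by
    by_contra h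
    push Not at h
    have h2 : (Iio omega1.{u}).Countable := hc.mono h
    rw [← le_aleph0_iff_set_countable] at h2
    exact absurd h2 (not_le.2 regO_omega1.aleph0_lt)
  obtain ⟨x, hx, hxM⟩ := hne
  have hmem : sInf {x | x ∉ M} ∉ M := csInf_mem (s := {x | x ∉ M}) ⟨x, hxM⟩
  have hmin : ∀ y < sInf {x | x ∉ M}, y ∈ M := fun y hy => by
    by_contra hyM
    exact absurd (csInf_le' (s := {x | x ∉ M}) hyM) (not_le.2 hy)
  have hlt : sInf {x | x ∉ M} < omega1 := lt_of_le_of_lt (csInf_le' hxM) hx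
  refine ⟨_, hlt, ?_⟩
  ext y
  constructor
  · rintro ⟨h1, h2⟩
    by_contra hy
    rcases eq_or_lt_of_le (not_lt.1 (fun h2 => hy (mem_Iio.2 h2))) with h | h
    · exact hmem (h ▸ h1)
    · exact hmem (hM y h1 h2 _ h)
  · intro hy
    exact ⟨hmin y hy, lt_trans hy hlt⟩

theorem Sig_lift {Sig : Set (Set X)} (hS : StationaryOn univ Sig)
    (F : ℕ → List Ordinal.{u} → Ordinal.{u}) :
    ∃ M : Set Ordinal.{u}, M.Countable ∧ Cls F M ∧ d.iX ⁻¹' M ∈ Sig := by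
  obtain ⟨s, hs, hs2, hs3⟩ := hS {s | s.Countable ∧ d.iX ⁻¹' (cl F (d.iX '' s)) = s} (by
    refine ⟨fun c hc => ⟨subset_univ _, hc.1⟩, ?_, ?_⟩
    · intro s _ hs
      refine ⟨d.iX ⁻¹' (cl F (d.iX '' s)), ⟨(cl_countable (hs.image _)).preimage d.iXinj, ?_⟩, ?_⟩
      · apply Subset.antisymm
        · refine preimage_mono (cl_min ?_ (cl_cls _ _))
          exact image_preimage_subset _ _
        · intro x hx
          exact subset_cl _ _ ⟨x, hx, rfl⟩
      · intro x hx
        exact subset_cl _ _ ⟨x, hx, rfl⟩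
    · intro f hf hm
      refine ⟨countable_iUnion fun n => (hf n).1, ?_⟩
      rw [image_iUnion, cl_chain (fun m n h => image_mono (hm h)), preimage_iUnion]
      exact iUnion_congr fun n => (hf n).2)
  refine ⟨cl F (d.iX '' s), cl_countable (hs2.image _), cl_cls _ _, ?_⟩
  rw [hs3]; exact hs

theorem Sp_inter {M : Set Ordinal.{u}} {ν γ L : Ordinal.{u}} (h : ν ≤ L) (hS : Sp M ν γ) :
    Sp (M ∩ Iio L) ν γ := by
  refine ⟨hS.1, fun x hx => hS.2.1 x hx.1, fun x hx => ?_⟩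
  obtain ⟨y, h1, h2, h3⟩ := hS.2.2 x hx
  exact ⟨y, ⟨h1, h2.trans_le h⟩, h2, h3⟩

theorem iX_inter (M : Set Ordinal.{u}) : d.iX ⁻¹' (M ∩ Iio d.L) = d.iX ⁻¹' M := by
  ext x
  constructor
  · intro h; exact h.1
  · intro h; exact ⟨h, (d.iXk x).trans (d.hkl.trans d.hlL)⟩

theorem omega_inter (M : Set Ordinal.{u}) : (M ∩ Iio d.L) ∩ Iio omega1 = M ∩ Iio omega1 := by
  ext x
  constructor
  · intro h; exact ⟨h.1.1, h.2⟩
  · intro h; exact ⟨⟨h.1, lt_trans h.2 omega1_lt_L⟩, h.2⟩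

theorem exists_split {Sig : Set (Set X)} (hS : StationaryOn univ Sig) :
    ∃ A T0 T1 : Set Ordinal.{u}, OrdStationary omega1 A ∧ OrdStationary omega1 T0 ∧
      OrdStationary omega1 T1 ∧ (∀ x ∈ A, x ∉ T0) ∧ (∀ x ∈ A, x ∉ T1) ∧ (∀ x ∈ T0, x ∉ T1) ∧
      (∀ x < omega1, x ∈ A ∨ x ∈ T0 ∨ x ∈ T1) ∧ ¬ Idl d Sig A := by
  set P1 : Set Ordinal.{u} := {γ | γ < omega1 ∧ hsp omega1 γ = 1} with hP1
  set P2 : Set Ordinal.{u} := {γ | γ < omega1 ∧ hsp omega1 γ = 2} with hP2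
  set P3 : Set Ordinal.{u} := {γ | γ < omega1 ∧ hsp omega1 γ ≠ 1 ∧ hsp omega1 γ ≠ 2} with hP3
  have hsp1 := hsp_spec regO_omega1.{u}
  have s1 : OrdStationary omega1 P1 := (hsp1 1 (by simpa using regO_omega1.nat_lt 1)).mono
    (fun x hx => ⟨hx.1.1, hx.2⟩) (fun x hx => hx.1)
  have s2 : OrdStationary omega1 P2 := (hsp1 2 (by simpa using regO_omega1.nat_lt 2)).mono
    (fun x hx => ⟨hx.1.1, hx.2⟩) (fun x hx => hx.1)
  have s3 : OrdStationary omega1 P3 := (hsp1 0 (by simpa using regO_omega1.nat_lt 0)).mono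
    (fun x hx => ⟨hx.1.1, by rw [hx.2]; exact zero_ne_one, by rw [hx.2]; exact two_ne_zero.symm⟩)
    (fun x hx => hx.1)
  have d12 : ∀ x ∈ P1, x ∉ P2 := by
    rintro x hx hx2
    have h := hx.2.symm.trans hx2.2
    exact absurd h (by norm_num)
  have d13 : ∀ x ∈ P1, x ∉ P3 := fun x hx hx3 => hx3.2.1 hx.2
  have d23 : ∀ x ∈ P2, x ∉ P3 := fun x hx hx3 => hx3.2.2 hx.2
  have cov : ∀ x < omega1, x ∈ P1 ∨ x ∈ P2 ∨ x ∈ P3 := by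
    intro x hx
    by_cases h1 : hsp omega1 x = 1
    · exact Or.inl ⟨hx, h1⟩
    by_cases h2 : hsp omega1 x = 2
    · exact Or.inr (Or.inl ⟨hx, h2⟩)
    · exact Or.inr (Or.inr ⟨hx, h1, h2⟩)
  have key : ¬ Idl d Sig P1 ∨ ¬ Idl d Sig P2 ∨ ¬ Idl d Sig P3 := by
    by_contra hc
    push Not at hc
    obtain ⟨⟨F1, h1⟩, ⟨F2, h2⟩, ⟨F3, h3⟩⟩ := hc
    obtain ⟨M, hMc, hMF, hMS⟩ := Sig_lift (d := d) hS (comb2 (comb2 F1 F2) (comb2 F3 (F0 d)))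
    rw [cls_comb2, cls_comb2, cls_comb2] at hMF
    obtain ⟨δ, hδ, hδM⟩ := exists_delta hMc (F0_init hMF.2.2)
    rcases cov δ hδ with h | h | h
    · exact h1 M hMc hMF.1.1 δ h hδM hMS
    · exact h2 M hMc hMF.1.2 δ h hδM hMS
    · exact h3 M hMc hMF.2.1 δ h hδM hMS
  rcases key with h | h | h
  · exact ⟨P1, P2, P3, s1, s2, s3, d12, d13, d23, cov, h⟩
  · exact ⟨P2, P1, P3, s2, s1, s3, fun x h1 h2 => d12 x h2 h1, d23, d13,
      fun x hx => by rcases cov x hx with h | h | h <;> simp [h], h⟩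
  · exact ⟨P3, P1, P2, s3, s1, s2, fun x h1 h2 => d13 x h2 h1, fun x h1 h2 => d23 x h2 h1, d12,
      fun x hx => by rcases cov x hx with h | h | h <;> simp [h], h⟩

theorem proj_stat {Sig : Set (Set X)} {A T0 T1 : Set Ordinal.{u}} (hA0 : ∀ x ∈ A, x ∉ T0)
    (hA1 : ∀ x ∈ A, x ∉ T1) (h01 : ∀ x ∈ T0, x ∉ T1)
    (hcov : ∀ x < omega1, x ∈ A ∨ x ∈ T0 ∨ x ∈ T1) {T : Set Ordinal.{u}} (hT : OrdStationary omega1 T) :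
    StationaryOn (Iio d.L) {σ ∈ ZZ d Sig A T0 T1 | ∃ δ ∈ T, σ ∩ Iio omega1 = Iio δ} := by
  intro Cb hCb
  obtain ⟨FC, hFC1, hFC2⟩ := kueker hCb (a0 := 0) (mem_Iio.2 Lpos)
  set F := comb2 FC (F0 d) with hF
  have hinit : ∀ M, Cls F M → ∀ x ∈ M, x < omega1 → ∀ y < x, y ∈ M := fun M hM =>
    F0_init (cls_comb2.1 hM).2
  obtain ⟨n, hn⟩ := stat_countable_union regO_omega1 hT regO_omega1.pos
    (fun n => if n = 0 then A else if n = 1 then T0 else T1) (by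
      intro γ hγ _
      rcases hcov γ (hT.1 hγ) with h | h | h
      · exact ⟨0, by simpa using h⟩
      · exact ⟨1, by simpa using h⟩
      · exact ⟨2, by simpa using h⟩)
  have cases3 : OrdStationary omega1 {γ | γ ∈ T ∧ γ ∈ A} ∨ OrdStationary omega1 {γ | γ ∈ T ∧ γ ∈ T0} ∨
      OrdStationary omega1 {γ | γ ∈ T ∧ γ ∈ T1} := by
    by_cases h0 : n = 0
    · left; simpa only [h0, if_true] using hn
    by_cases h1 : n = 1
    · right; left; simpa only [h1, one_ne_zero, if_false, if_true] using hn
    · right; right; simpa only [h0, h1, if_false] using hn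
  rcases cases3 with h | h | h
  · suffices hsuff : ∃ M : Set Ordinal.{u}, M.Countable ∧ Cls F M ∧ ∃ δ, δ ∈ T ∧ δ ∈ A ∧
        M ∩ Iio omega1 = Iio δ ∧ (d.iX ⁻¹' M ∈ Sig ∨ ∃ τ ∈ M ∩ Iio d.L, Idl d Sig (d.Tc τ) ∧ δ ∈ d.Tc τ) by
      obtain ⟨M, hMc, hMF, δ, hδT, hδA, hMδ, hor⟩ := hsuff
      have hF2 := cls_comb2.1 hMF
      refine ⟨M ∩ Iio d.L, ⟨⟨inter_subset_right, hMc.mono inter_subset_left, F0_inter hF2.2, δ,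
        hT.1 hδT, ?_, ?_, ?_, ?_⟩, δ, hδT, ?_⟩, hFC2 M hMc hF2.1⟩
      · rw [omega_inter]; exact hMδ
      · intro _; rw [iX_inter]; exact hor
      · intro h; exact absurd h (hA0 δ hδA)
      · intro h; exact absurd h (hA1 δ hδA)
      · rw [omega_inter]; exact hMδ
    by_cases hI : Idl d Sig {γ | γ ∈ T ∧ γ ∈ A}
    · obtain ⟨τ, hτ, hτe⟩ := d.hTc {γ | γ ∈ T ∧ γ ∈ A} h.1
      obtain ⟨δ, h1, h2, h3⟩ := stat_closed regO_omega1 h F (countable_singleton τ)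
      refine ⟨cl F ({τ} ∪ Iio δ), cl_countable ((countable_singleton τ).union (countable_Iio_omega1 h2)),
        cl_cls _ _, δ, h1.1, h1.2, ?_, Or.inr ⟨τ, ⟨subset_cl _ _ (Or.inl rfl), hτ.trans (d.hkl.trans d.hlL)⟩, ?_⟩⟩
      · ext x
        constructor
        · rintro ⟨hx, hx2⟩; exact h3 x hx hx2
        · intro hx; exact ⟨subset_cl _ _ (Or.inr hx), lt_trans hx h2⟩
      · rw [hτe]; exact ⟨hI, h1⟩
    · unfold Idl at hI
      push Not at hI
      obtain ⟨M, h1, h2, δ, h3, h4, h5⟩ := hI F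
      exact ⟨M, h1, h2, δ, h3.1, h3.2, h4, Or.inl h5⟩
  · obtain ⟨M, hMc, hMF, δ, hδ, hMδ, γ, hγ1, hγ2⟩ := model_T0 F hinit h d.regl (d.hk1.trans d.hkl) d.hkl d.hDc
    have hF2 := cls_comb2.1 hMF
    refine ⟨M ∩ Iio d.L, ⟨⟨inter_subset_right, hMc.mono inter_subset_left, F0_inter hF2.2, δ,
        hT.1 hδ.1, ?_, ?_, ?_, ?_⟩, δ, hδ.1, ?_⟩, hFC2 M hMc hF2.1⟩
    · rw [omega_inter]; exact hMδ
    · intro h; exact absurd hδ.2 (hA0 δ h)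
    · intro _
      exact ⟨γ, Sp_inter d.hlL.le hγ1, hγ2.1, fun x hx => hγ2.2 x hx.1⟩
    · intro h; exact absurd h (h01 δ hδ.2)
    · rw [omega_inter]; exact hMδ
  · obtain ⟨M, hMc, hMF, δ, hδ, hMδ, hγ⟩ := model_T1 F hinit h
    have hF2 := cls_comb2.1 hMF
    refine ⟨M ∩ Iio d.L, ⟨⟨inter_subset_right, hMc.mono inter_subset_left, F0_inter hF2.2, δ,
        hT.1 hδ.1, ?_, ?_, ?_, ?_⟩, δ, hδ.1, ?_⟩, hFC2 M hMc hF2.1⟩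
    · rw [omega_inter]; exact hMδ
    · intro h; exact absurd hδ.2 (hA1 δ h)
    · intro h; exact absurd hδ.2 (h01 δ h)
    · intro _ ν hν hνR hν1
      obtain ⟨γ, h1, h2⟩ := hγ ν hν.1 hνR hν1
      exact ⟨γ, Sp_inter (le_of_lt hν.2) h1, h2⟩
    · rw [omega_inter]; exact hMδ

end Zdef

section Yan
variable {X : Type u} {Γ : Set (Set X)} {d : Dat X Γ} {Sig : Set (Set X)}
  {A T0 T1 : Set Ordinal.{u}} {Y : Set Ordinal.{u}} {D : Set (Set Ordinal.{u})}

theorem Y_cls (hD : ClubOn Y D) (hDZ : D ⊆ ZZ d Sig A T0 T1) : Cls (F0 d) Y := by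
  intro n l hl
  obtain ⟨M, hM, hlM⟩ := hD.2.1 {x | x ∈ l} hl (List.finite_toSet l).countable
  exact (hD.1 M hM).1 ((hDZ hM).2.2.1 n l fun x hx => hlM hx)

theorem Y3 (hY1 : Iio omega1 ⊆ Y) (hD : ClubOn Y D) (hDZ : D ⊆ ZZ d Sig A T0 T1)
    (hT1 : OrdStationary omega1 T1) {ν : Ordinal.{u}} (hν : ν ∈ Y) (hR : RegO ν) (hlt : omega1 < ν)
    {a : Set Ordinal.{u}} (ha : a ⊆ Y) (hac : a.Countable) (haν : ∀ x ∈ a, x < ν) :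
    ∃ y ∈ Y, y < ν ∧ ∀ x ∈ a, x < y := by
  by_contra hcon
  push Not at hcon
  have main : ∀ b ⊆ Y, b.Countable → ∃ M : Set Ordinal.{u}, M ⊆ Y ∧ a ⊆ M ∧ b ⊆ M ∧ ∃ δ < omega1, M ∩ Iio omega1 = Iio δ ∧
      ∃ γ, Sp M ν γ ∧ hsp ν γ = δ := by
    intro b hb hbc
    obtain ⟨M, hM, hsub, δ, hδ, hMδ⟩ := lemmaP hY1 hD hT1 (a := a ∪ {ν} ∪ b)
      (union_subset (union_subset ha (singleton_subset_iff.2 hν)) hb)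
      ((hac.union (countable_singleton ν)).union hbc)
    obtain ⟨-, -, -, δ', -, hδ', -, -, h4⟩ := hDZ hM
    obtain rfl : δ' = δ := Iio_injective (hδ'.symm.trans hMδ)
    exact ⟨M, (hD.1 M hM).1, fun x hx => hsub (Or.inl (Or.inl hx)), fun x hx => hsub (Or.inr hx),
      δ', hT1.1 hδ, hMδ, h4 hδ ν (hsub (Or.inl (Or.inr rfl))) hR hlt⟩
  have cmp : ∀ M M' : Set Ordinal.{u}, a ⊆ M → M' ⊆ Y → ∀ γ γ', Sp M ν γ → Sp M' ν γ' → γ' ≤ γ := by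
    intro M M' haM hMY γ γ' h1 h2
    by_contra hlt
    obtain ⟨y, hy1, hy2, hy3⟩ := h2.2.2 γ (not_le.1 hlt)
    obtain ⟨x, hx, hyx⟩ := hcon y (hMY hy1) hy2
    exact absurd (h1.2.1 x (haM hx) (haν x hx)) (not_lt.2 (hy3.le.trans hyx))
  obtain ⟨M, hMY, haM, -, δ, hδ, hMδ, γ, hγ, hγδ⟩ := main ∅ (empty_subset _) countable_empty
  obtain ⟨M', hMY', haM', hδM, δ', hδ', hMδ', γ', hγ', hγδ'⟩ := main {δ}
    (singleton_subset_iff.2 (hY1 hδ)) (countable_singleton δ)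
  have hγγ : γ = γ' := le_antisymm (cmp M' M haM' hMY _ _ hγ' hγ) (cmp M M' haM hMY' _ _ hγ hγ')
  have h1 : δ ∈ M' ∩ Iio omega1 := ⟨hδM rfl, hδ⟩
  rw [hMδ', ← hγδ', ← hγγ, hγδ] at h1
  exact lt_irrefl _ (mem_Iio.1 h1)

theorem Y4 (hY1 : Iio omega1 ⊆ Y) (hYL : Y ⊆ Iio d.L) (hD : ClubOn Y D) (hDZ : D ⊆ ZZ d Sig A T0 T1)
    (hT1 : OrdStationary omega1 T1) {M : Set Ordinal.{u}} (hM : M ∈ D) {s : Ordinal.{u}}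
    (hs : Sp M d.l s) : s ∈ Y := by
  have hYc := Y_cls hD hDZ
  have hMY := (hD.1 M hM).1
  have hMc := (hD.1 M hM).2
  obtain ⟨y, hyY, hyl, hy⟩ := Y3 hY1 hD hDZ hT1 (F0_l hYc) d.regl (d.hk1.trans d.hkl)
    (a := M ∩ Iio d.l) (fun x hx => hMY hx.1) (hMc.mono inter_subset_left) (fun x hx => hx.2)
  have hsy : s ≤ y := by
    by_contra h
    obtain ⟨x, hx1, hx2, hx3⟩ := hs.2.2 y (not_le.1 h)
    exact absurd (hy x ⟨hx1, hx2⟩) (not_lt.2 hx3.le)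
  obtain ⟨hζY, hζs⟩ : sInf {y | y ∈ Y ∧ s ≤ y} ∈ Y ∧ s ≤ sInf {y | y ∈ Y ∧ s ≤ y} :=
    csInf_mem (s := {y | y ∈ Y ∧ s ≤ y}) ⟨y, hyY, hsy⟩
  have hmin : ∀ z ∈ Y, s ≤ z → sInf {y | y ∈ Y ∧ s ≤ y} ≤ z := fun z h1 h2 => csInf_le' ⟨h1, h2⟩
  generalize sInf {y | y ∈ Y ∧ s ≤ y} = ζ at *
  rcases eq_or_lt_of_le hζs with h | hlt
  · rw [h]; exact hζY
  exfalso
  have hζL : ζ < d.L := hYL hζY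
  have hle : ζ.cof.ord ≤ ζ := Ordinal.ord_cof_le ζ
  have hνY : ζ.cof.ord ∈ Y := F0_ops hYc 2 0 [ζ] (F0_one hζY) (hle.trans_lt hζL)
  obtain ⟨c1, c2, c3⟩ := czF_spec ζ
  have hcz : ∀ ξ ∈ Y, ξ < ζ.cof.ord → s ≤ czF ζ ξ → False := by
    intro ξ h1 h2 h3
    have h4 : czF ζ ξ ∈ Y := F0_ops hYc 3 0 [ζ, ξ] (F0_two hζY h1) ((c1 ξ h2).trans hζL)
    exact absurd (hmin _ h4 h3) (not_le.2 (c1 ξ h2))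
  rcases le_or_gt ζ.cof.ord omega1 with hν | hν
  · exact hcz (ciF ζ s) (hY1 ((c3 s hlt).1.trans_le hν)) (c3 s hlt).1 (c3 s hlt).2
  · have hcof : ℵ₀ < ζ.cof := aleph0_lt_aleph_one.trans (Cardinal.ord_lt_ord.1 hν)
    have hreg : RegO ζ.cof.ord := ⟨ζ.cof, isRegular_cof (Ordinal.aleph0_le_cof.1 hcof.le), hcof, rfl⟩
    obtain ⟨y, hyY, hyν, hy⟩ := Y3 hY1 hD hDZ hT1 hνY hreg hν
      (a := ciF ζ '' (M ∩ Iio d.l)) (by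
        rintro _ ⟨x, hx, rfl⟩
        exact F0_ops hYc 4 0 [ζ, x] (F0_two hζY (hMY hx.1))
          ((c3 x ((hs.2.1 x hx.1 hx.2).trans hlt)).1.trans (hle.trans_lt hζL)))
      ((hMc.mono inter_subset_left).image _) (by
        rintro _ ⟨x, hx, rfl⟩
        exact (c3 x ((hs.2.1 x hx.1 hx.2).trans hlt)).1)
    refine hcz y hyY hyν ?_
    by_contra h
    obtain ⟨x, hx1, hx2, hx3⟩ := hs.2.2 _ (not_le.1 h)
    have h1 := (c3 x ((hs.2.1 x hx1 hx2).trans hlt)).2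
    have h2 := c2 _ _ (hy _ ⟨x, ⟨hx1, hx2⟩, rfl⟩).le hyν
    exact absurd hx3 (not_lt.2 (h1.trans h2))

theorem Y5 (hY1 : Iio omega1 ⊆ Y) (hYL : Y ⊆ Iio d.L) (hD : ClubOn Y D) (hDZ : D ⊆ ZZ d Sig A T0 T1)
    (hT0 : OrdStationary omega1 T0) (hT1 : OrdStationary omega1 T1) {a : Set Ordinal.{u}} (ha : a ⊆ Y)
    (hac : a.Countable) (hak : ∀ x ∈ a, x < d.k) : ∃ ρ ∈ Y, a ⊆ d.Dc ρ := by
  obtain ⟨M, hM, hsub, δ, hδ, hMδ⟩ := lemmaP hY1 hD hT0 ha hac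
  obtain ⟨-, -, -, δ', -, hδ', -, h3, -⟩ := hDZ hM
  obtain rfl : δ' = δ := Iio_injective (hδ'.symm.trans hMδ)
  obtain ⟨γ, h4, h5, h6⟩ := h3 hδ
  have hγ : γ ∈ Y := Y4 hY1 hYL hD hDZ hT1 hM h4
  exact ⟨hsp d.l γ, F0_ops (Y_cls hD hDZ) 5 0 [γ] (F0_one hγ) (h5.trans (d.hkl.trans d.hlL)),
    fun x hx => h6 x (hsub hx) (hak x hx)⟩

theorem YX_mem (hY1 : Iio omega1 ⊆ Y) (hYL : Y ⊆ Iio d.L) (hYc : #Y = aleph 1)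
    (hD : ClubOn Y D) (hDZ : D ⊆ ZZ d Sig A T0 T1)
    (hT0 : OrdStationary omega1 T0) (hT1 : OrdStationary omega1 T1) (hΓ : Tight Γ) :
    d.iX ⁻¹' Y ∈ Γ := by
  classical
  have hcl := Y_cls hD hDZ
  have hR : ∀ a : Set Ordinal.{u}, ∃ ρ, a ⊆ Y → a.Countable → (∀ x ∈ a, x < d.k) → ρ ∈ Y ∧ a ⊆ d.Dc ρ := by
    intro a
    by_cases h : a ⊆ Y ∧ a.Countable ∧ (∀ x ∈ a, x < d.k)
    · obtain ⟨ρ, h1, h2⟩ := Y5 hY1 hYL hD hDZ hT0 hT1 h.1 h.2.1 h.2.2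
      exact ⟨ρ, fun _ _ _ => ⟨h1, h2⟩⟩
    · exact ⟨0, fun h1 h2 h3 => absurd ⟨h1, h2, h3⟩ h⟩
  choose R hR using hR
  have h0Y : (0 : Ordinal.{u}) ∈ Y := hY1 regO_omega1.pos
  have hk0 : 0 < d.k := lt_of_le_of_lt zero_le d.hk1
  obtain ⟨z, hz1, hz2⟩ : ∃ z : Ordinal.{u} → Ordinal.{u}, (∀ i, z i ∈ Y ∧ z i < d.k) ∧
      ∀ y ∈ Y, y < d.k → ∃ i < omega1, z i = y := by
    have hc : #Y ≤ #(Iio omega1.{u}) := by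
      rw [hYc, omega1, mk_Iio_ordinal, card_ord]; simp
    obtain ⟨e⟩ := hc
    refine ⟨fun i => if h : ∃ y : Y, (e y).1 = i ∧ y.1 < d.k then h.choose.1 else 0, ?_, ?_⟩
    · intro i
      dsimp only
      split_ifs with h
      · exact ⟨h.choose.2, h.choose_spec.2⟩
      · exact ⟨h0Y, hk0⟩
    · intro y hy hyk
      refine ⟨(e ⟨y, hy⟩).1, (e ⟨y, hy⟩).2, ?_⟩
      have h : ∃ y' : Y, (e y').1 = (e ⟨y, hy⟩).1 ∧ y'.1 < d.k := ⟨⟨y, hy⟩, rfl, hyk⟩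
      dsimp only
      rw [dif_pos h]
      have := e.injective (Subtype.ext h.choose_spec.1)
      rw [this]
  let arg : (i : Ordinal.{u}) → ((j : Ordinal.{u}) → j < i → Ordinal.{u}) → Set Ordinal.{u} :=
    fun i f => {x | ∃ j, ∃ h : j < i, x = f j h} ∪ {z i}
  let q : Ordinal.{u} → Ordinal.{u} := WellFounded.fix (C := fun _ => Ordinal.{u})
    (r := fun a b : Ordinal.{u} => a < b) Ordinal.lt_wf (fun i f => d.ps (R (arg i f)))
  let S : Ordinal.{u} → Set Ordinal.{u} := fun i => {x | ∃ j < i, x = q j} ∪ {z i}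
  have hq : ∀ i, q i = d.ps (R (S i)) := by
    intro i
    have h := WellFounded.fix_eq (C := fun _ => Ordinal.{u})
      (r := fun a b : Ordinal.{u} => a < b) Ordinal.lt_wf (fun i f => d.ps (R (arg i f))) i
    refine h.trans ?_
    congr 2
    ext x
    simp [arg, S, q]
  have hSc : ∀ i < omega1, (S i).Countable := by
    intro i hi
    refine Countable.union ?_ (countable_singleton _)
    refine ((countable_Iio_omega1 hi).image q).mono ?_
    rintro x ⟨j, hj, rfl⟩
    exact ⟨j, hj, rfl⟩
  have hqk : ∀ i, q i < d.k := fun i => by rw [hq]; exact d.hps1 _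
  have hSk : ∀ i, ∀ x ∈ S i, x < d.k := by
    rintro i x (⟨j, hj, rfl⟩ | rfl)
    · exact hqk j
    · exact (hz1 i).2
  have hqY : ∀ i < omega1, q i ∈ Y := by
    intro i
    induction i using WellFoundedLT.induction with
    | ind i ih =>
      intro hi
      have hSY : S i ⊆ Y := by
        rintro x (⟨j, hj, rfl⟩ | rfl)
        · exact ih j hj (hj.trans hi)
        · exact (hz1 i).1
      rw [hq]
      exact F0_ops hcl 6 0 [_] (F0_one (hR _ hSY (hSc i hi) (hSk i)).1)
        ((d.hps1 _).trans (d.hkl.trans d.hlL))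
  have hSY : ∀ i < omega1, S i ⊆ Y := by
    rintro i hi x (⟨j, hj, rfl⟩ | rfl)
    · exact hqY j (hj.trans hi)
    · exact (hz1 i).1
  have hSD : ∀ i < omega1, S i ⊆ d.Dc (R (S i)) := fun i hi => (hR _ (hSY i hi) (hSc i hi) (hSk i)).2
  have hT := hΓ omega1 (fun i => d.Gc (q i)) (fun i _ => d.hGc _) (by
    intro i j hij hj
    rcases eq_or_lt_of_le hij with rfl | h
    · exact Subset.rfl
    · rw [hq j]
      exact d.hps3 _ _ (hSD j hj (Or.inl ⟨i, h, rfl⟩)))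
    (by rw [omega1, isRegular_aleph_one.cof_ord]; simp)
    (by rw [omega1, isRegular_aleph_one.cof_ord]; exact aleph_lt_aleph.2 (by norm_num))
  convert hT using 1
  ext x
  constructor
  · intro hx
    obtain ⟨i, hi, hzi⟩ := hz2 _ hx (d.iXk x)
    refine mem_iUnion₂.2 ⟨i, hi, ?_⟩
    rw [hq i]
    exact d.hps2 _ _ (hSD i hi (Or.inr hzi.symm))
  · intro hx
    obtain ⟨i, hi, hx⟩ := mem_iUnion₂.1 hx
    obtain ⟨ξ, hξ, rfl⟩ := d.hfc _ hx
    exact F0_ops hcl 7 0 [q i, ξ] (F0_two (hqY i hi) (hY1 hξ)) ((d.iXk _).trans (d.hkl.trans d.hlL))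

theorem YX_stat (hY1 : Iio omega1 ⊆ Y)
    (hD : ClubOn Y D) (hDZ : D ⊆ ZZ d Sig A T0 T1) (hA : ¬ Idl d Sig A) :
    StationaryOn (d.iX ⁻¹' Y) {s ∈ Sig | s ⊆ d.iX ⁻¹' Y} := by
  classical
  intro C hC
  have hcl := Y_cls hD hDZ
  have h0Y : (0 : Ordinal.{u}) ∈ Y := hY1 regO_omega1.pos
  obtain ⟨FD, -, hFD⟩ := kueker hD h0Y
  have hx0 : d.fc 0 0 ∈ d.iX ⁻¹' Y :=
    F0_ops hcl 7 0 [0, 0] (F0_two h0Y h0Y) ((d.iXk _).trans (d.hkl.trans d.hlL))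
  obtain ⟨FC, -, hFC⟩ := kueker hC hx0
  have : Nonempty X := ⟨d.fc 0 0⟩
  have hch : ∀ τ : Ordinal.{u}, ∃ F : ℕ → List Ordinal.{u} → Ordinal.{u}, Idl d Sig (d.Tc τ) →
      ∀ M : Set Ordinal.{u}, M.Countable → Cls F M →
        ∀ δ ∈ d.Tc τ, M ∩ Iio omega1 = Iio δ → d.iX ⁻¹' M ∉ Sig := by
    intro τ
    by_cases h : Idl d Sig (d.Tc τ)
    · obtain ⟨F, hF⟩ := h
      exact ⟨F, fun _ => hF⟩
    · exact ⟨fun _ _ => 0, fun h2 => absurd h2 h⟩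
  choose Fτ hFτ using hch
  let G1 : ℕ → List Ordinal.{u} → Ordinal.{u} := fun n l => d.iX (FC n (l.map (Function.invFun d.iX)))
  let G2 : ℕ → List Ordinal.{u} → Ordinal.{u} := fun n l => Fτ l.headI n l.tail
  unfold Idl at hA
  push Not at hA
  obtain ⟨M, hMc, hM, δ, hδ, hMδ, hMS⟩ := hA (comb2 FD (comb2 G1 G2))
  rw [cls_comb2, cls_comb2] at hM
  obtain ⟨hM1, hM2, hM3⟩ := hM
  have hMD := hFD M hMc hM1
  have hXC : d.iX ⁻¹' M ∩ d.iX ⁻¹' Y ∈ C := by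
    refine hFC _ (hMc.preimage d.iXinj) ?_
    intro n l hl
    have := hM2 n (l.map d.iX) (by
      intro x hx
      obtain ⟨y, hy, rfl⟩ := List.mem_map.1 hx
      exact hl y hy)
    simpa [G1, List.map_map, Function.invFun_comp d.iXinj] using this
  obtain ⟨-, -, -, δ', -, hδ', h2, -, -⟩ := hDZ hMD
  have hδδ : δ' = δ := by
    refine Iio_injective (hδ'.symm.trans (Eq.trans ?_ hMδ))
    ext x
    constructor
    · intro h; exact ⟨h.1.1, h.2⟩
    · intro h; exact ⟨⟨h.1, hY1 h.2⟩, h.2⟩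
  subst hδδ
  rcases h2 hδ with h | ⟨τ, hτ, hI, hδτ⟩
  · exact ⟨d.iX ⁻¹' M ∩ d.iX ⁻¹' Y, ⟨h, inter_subset_right⟩, hXC⟩
  · refine absurd hMS (hFτ τ hI M hMc ?_ _ hδτ hMδ)
    intro n l hl
    exact hM3 n (τ :: l) (by
      intro x hx
      rcases List.mem_cons.1 hx with rfl | hx
      · exact hτ.1
      · exact hl x hx)

end Yan

/-- SRP implies Axiom R. -/
theorem srp_implies_axiomR (hSRP : SRP.{u}) : AxiomR.{u} := by
  intro X Sig Γ hSc hS h1 hT h2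
  by_cases hX : #(Set.univ : Set X) ≤ aleph 1
  · obtain ⟨c, hc, hsub⟩ := h2 Set.univ hX
    obtain rfl : c = Set.univ := univ_subset_iff.1 hsub
    exact ⟨Set.univ, hc, by simpa using hS⟩
  have hne : Nonempty X := by
    by_contra h
    rw [not_nonempty_iff] at h
    exact hX (by simp)
  obtain ⟨d⟩ := exists_Dat X Γ h1 h2
  obtain ⟨A, T0, T1, -, s0, s1, hA0, hA1, h01, hcov, hA⟩ := exists_split (d := d) hS
  obtain ⟨Y, hY1, hYL, hYc, D, hDZ, hD⟩ := hSRP d.lamc d.hlam (ZZ d Sig A T0 T1) (by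
    rw [← d.hL]
    exact fun σ hσ => ⟨hσ.1, hσ.2.1⟩) (by
    rw [← d.hL]
    exact fun T hT => proj_stat hA0 hA1 h01 hcov hT) (Iio omega1) (by
    rw [← d.hL]
    exact Iio_subset_Iio omega1_lt_L.le) (by
    rw [omega1, mk_Iio_ordinal, card_ord]; simp)
  rw [← d.hL] at hYL
  exact ⟨d.iX ⁻¹' Y, YX_mem hY1 hYL hYc hD hDZ s0 s1 hT, YX_stat hY1 hD hDZ hA⟩
end
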